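/- arXiv:1502.01288 — 3 statements merged into one kernel-verified Lean document; each statement's English description precedes it below -/
import Mathlib

section
/- (Dickson's classification) Let ℓ be an odd prime and let G be a subgroup of GL₂(F_ℓ). If ℓ divides |G|, then either G is contained in a conjugate of the Borel subgroup of upper triangular matrices, or G contains SL₂(F_ℓ). If ℓ does not divide |G|, let H be the image of G in PGL₂(F_ℓ); then either (1) H is cyclic and G is contained in a conjugate of C_sp or of C_ns, or (2) H is dihedral (generated by two distinct elements of order 2... i.e. a dihedral group) and G is contained in a conjugate of N_sp or of N_ns but not in the corresponding conjugate Cartan subgroup, or (3) H is isomorphic to A₄, S₄, or A₅. -/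
/-
If `ℓ ∤ |G|`, every nontrivial element of the image `H` of `G` in `PGL₂(F_ℓ)` is semisimple, hence
fixes exactly two points of the projective line over an algebraic closure, and point stabilizers in
`H` are cyclic. Klein's count of the poles by Burnside's lemma then applies: either there are two
orbits of poles, each a single point, and `H` is cyclic, or there are three, whose stabilizers have
the orders of one of the triples `(2, 2, n)`, `(2, 3, 3)`, `(2, 3, 4)`, `(2, 3, 5)`. In the cyclic
and dihedral cases a nontrivial rotation `g` has the property that each element of `G` commutes with
`g` or exchanges its eigenlines, and whether the discriminant of `g` is a square in `F_ℓ` decides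
between the split and the nonsplit Cartan subgroup.

If `ℓ ∣ |G|`, an element of order `ℓ` fixes a unique point of `ℙ¹(F_ℓ)`. Either `G` fixes this
point, or `G` contains elements of order `ℓ` with distinct fixed points, which in a suitable basis
are an upper and a lower transvection; these generate `SL₂(F_ℓ)`.
-/

open Matrix

abbrev GL2 (ℓ : ℕ) : Type := GL (Fin 2) (ZMod ℓ)

/-- The underlying matrix of an element of `GL₂(F_ℓ)`. -/
def mat {ℓ : ℕ} (g : GL2 ℓ) : Matrix (Fin 2) (Fin 2) (ZMod ℓ) := g

/-- `g` is a diagonal matrix. -/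
def IsDiag {ℓ : ℕ} (g : GL2 ℓ) : Prop := mat g 0 1 = 0 ∧ mat g 1 0 = 0

/-- `g` is an antidiagonal matrix. -/
def IsAnti {ℓ : ℕ} (g : GL2 ℓ) : Prop := mat g 0 0 = 0 ∧ mat g 1 1 = 0

/-- `g` is a scalar matrix. -/
def IsScalar {ℓ : ℕ} (g : GL2 ℓ) : Prop :=
  ∃ c : ZMod ℓ, mat g = c • (1 : Matrix (Fin 2) (Fin 2) (ZMod ℓ))

/-- Membership in the split Cartan subgroup `C_sp` (the diagonal matrices). -/
def InCsp {ℓ : ℕ} (g : GL2 ℓ) : Prop := IsDiag g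

/-- Membership in the normalizer `N_sp` of the split Cartan (diagonal or antidiagonal). -/
def InNsp {ℓ : ℕ} (g : GL2 ℓ) : Prop := IsDiag g ∨ IsAnti g

/-- Membership in the nonsplit Cartan `C_ns` w.r.t. the nonresidue `δ`:
matrices of the form `[[a, δb], [b, a]]`. -/
def InCns {ℓ : ℕ} (δ : ZMod ℓ) (g : GL2 ℓ) : Prop :=
  mat g 1 1 = mat g 0 0 ∧ mat g 0 1 = δ * mat g 1 0

/-- Membership in `N_ns \ C_ns` (as a matrix shape): `[[a, -δb], [b, -a]]`. -/
def InNnsAnti {ℓ : ℕ} (δ : ZMod ℓ) (g : GL2 ℓ) : Prop :=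
  mat g 1 1 = - mat g 0 0 ∧ mat g 0 1 = - (δ * mat g 1 0)

/-- Membership in the normalizer `N_ns` of the nonsplit Cartan. -/
def InNns {ℓ : ℕ} (δ : ZMod ℓ) (g : GL2 ℓ) : Prop := InCns δ g ∨ InNnsAnti δ g

/-- `PGL₂(F_ℓ)`: the quotient of `GL₂(F_ℓ)` by its center (the scalar matrices). -/
abbrev PGL2 (ℓ : ℕ) : Type := GL2 ℓ ⧸ Subgroup.center (GL2 ℓ)

/-- The natural projection `GL₂(F_ℓ) →* PGL₂(F_ℓ)`. -/
def toPGL (ℓ : ℕ) : GL2 ℓ →* PGL2 ℓ := QuotientGroup.mk' _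

/-- The image of a subgroup of `GL₂(F_ℓ)` in `PGL₂(F_ℓ)`. -/
def projImage {ℓ : ℕ} (G : Subgroup (GL2 ℓ)) : Subgroup (PGL2 ℓ) := G.map (toPGL ℓ)

/-- `H` is isomorphic to the alternating group `A₄`. -/
def IsA4 {ℓ : ℕ} (H : Subgroup (PGL2 ℓ)) : Prop := Nonempty (H ≃* alternatingGroup (Fin 4))

/-- `H` is isomorphic to the symmetric group `S₄`. -/
def IsS4 {ℓ : ℕ} (H : Subgroup (PGL2 ℓ)) : Prop := Nonempty (H ≃* Equiv.Perm (Fin 4))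

/-- `H` is isomorphic to the alternating group `A₅`. -/
def IsA5 {ℓ : ℕ} (H : Subgroup (PGL2 ℓ)) : Prop := Nonempty (H ≃* alternatingGroup (Fin 5))

/-- `g` is an upper triangular matrix (membership in the standard Borel subgroup). -/
def IsUpperTri {ℓ : ℕ} (g : GL2 ℓ) : Prop := mat g 1 0 = 0

/-- `H` is a dihedral group: generated by two distinct elements of order 2. -/
def IsDihedralSub {ℓ : ℕ} (H : Subgroup (PGL2 ℓ)) : Prop :=
  ∃ a b : PGL2 ℓ, a ≠ b ∧ orderOf a = 2 ∧ orderOf b = 2 ∧ Subgroup.closure {a, b} = H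

namespace Dickson

section RecognitionOfFiniteGroups

variable {H α : Type*} [Group H] [MulAction H α] [FaithfulSMul H α]

theorem exists_injective_hom_perm_fin {n : ℕ} (hα : Nat.card α = n) (hn : n ≠ 0) :
    ∃ f : H →* Equiv.Perm (Fin n), Function.Injective f := by
  have := Nat.finite_of_card_ne_zero (hα ▸ hn)
  let e := (Finite.equivFinOfCardEq hα).permCongrHom
  exact ⟨e.toMonoidHom.comp (MulAction.toPermHom H α),
    e.injective.comp MulAction.toPerm_injective⟩

theorem nonempty_mulEquiv_perm {n : ℕ} (hα : Nat.card α = n) (hn : n ≠ 0)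
    (hH : Nat.card H = n.factorial) : Nonempty (H ≃* Equiv.Perm (Fin n)) := by
  obtain ⟨f, hf⟩ := exists_injective_hom_perm_fin (H := H) hα hn
  have hbij : Function.Bijective f :=
    (Nat.bijective_iff_injective_and_card f).2 ⟨hf, by rw [hH, Nat.card_perm, Nat.card_fin]⟩
  exact ⟨MulEquiv.ofBijective f hbij⟩

theorem nonempty_mulEquiv_alternatingGroup {n : ℕ} (hα : Nat.card α = n) (hn : n ≠ 0)
    (hH : Nat.card H * 2 = n.factorial) : Nonempty (H ≃* alternatingGroup (Fin n)) := by
  obtain ⟨f, hf⟩ := exists_injective_hom_perm_fin (H := H) hα hn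
  have hindex : f.range.index = 2 := by
    have hcard := f.range.card_mul_index
    rw [← Nat.card_congr (MonoidHom.ofInjective hf).toEquiv, Nat.card_perm, Nat.card_fin,
      ← hH] at hcard
    have : Nat.card H ≠ 0 := fun h => n.factorial_ne_zero (by simp [← hH, h])
    exact Nat.eq_of_mul_eq_mul_left (Nat.pos_of_ne_zero this) hcard
  exact ⟨(MonoidHom.ofInjective hf).trans
    (MulEquiv.subgroupCongr (Equiv.Perm.eq_alternatingGroup_of_index_eq_two hindex))⟩

end RecognitionOfFiniteGroups

section Sylow

variable {H : Type*} [Group H] {p : ℕ}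

theorem sylow_ne_bot [Nontrivial (Sylow p H)] (P : Sylow p H) : (P : Subgroup H) ≠ ⊥ := by
  intro hP
  obtain ⟨Q, hQ⟩ := exists_ne P
  exact hQ (Sylow.ext (P.is_maximal' Q.isPGroup' (hP ▸ bot_le)))

theorem faithfulSMul_sylow_of_centralizer_eq [Nontrivial (Sylow p H)]
    (hC : ∀ P : Sylow p H, ∀ z ∈ P, z ≠ 1 → Subgroup.centralizer {z} = P) :
    FaithfulSMul H (Sylow p H) := by
  obtain ⟨P⟩ := (inferInstance : Nonempty (Sylow p H))
  let K := (MulAction.toPermHom H (Sylow p H)).ker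
  have mem_K (g : H) : g ∈ K ↔ ∀ Q : Sylow p H, g • Q = Q := Equiv.ext_iff
  have eq_one_of_mem (z : H) (hzK : z ∈ K) (hzP : z ∈ P) : z = 1 := by
    by_contra hz
    obtain ⟨Q, hQP⟩ := exists_ne P
    have hzQ : z ∈ Subgroup.zpowers z ⊓ Q := by
      rw [← (P.isPGroup'.to_le (Subgroup.zpowers_le.2 hzP)).inf_normalizer_sylow Q]
      exact ⟨Subgroup.mem_zpowers z, Sylow.smul_eq_iff_mem_normalizer.1 ((mem_K z).1 hzK Q)⟩
    exact hQP (Sylow.ext ((hC Q z hzQ.2 hz).symm.trans (hC P z hzP hz)))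
  rw [faithfulSMul_iff]
  intro g hg
  have hgK : g ∈ K := (mem_K g).2 hg
  obtain ⟨z, hzP, hz⟩ := P.toSubgroup.bot_or_exists_ne_one.resolve_left (sylow_ne_bot P)
  have hcomm : g * z * g⁻¹ * z⁻¹ = 1 := by
    apply eq_one_of_mem
    · rw [mul_assoc, mul_assoc, ← mul_assoc z]
      exact K.mul_mem hgK ((MonoidHom.normal_ker _).conj_mem _ (K.inv_mem hgK) z)
    · have hgP := Sylow.smul_eq_iff_mem_normalizer.1 (hg P)
      exact P.mul_mem ((Subgroup.mem_normalizer_iff.1 hgP z).1 hzP) (P.inv_mem hzP)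
  have hgz : g ∈ Subgroup.centralizer {z} :=
    Subgroup.mem_centralizer_singleton_iff.2 (mul_inv_eq_iff_eq_mul.1 (mul_inv_eq_one.1 hcomm))
  rw [hC P z hzP hz] at hgz
  exact eq_one_of_mem g hgK hgz

theorem card_sylow_eq_pow [Finite H] [Fact p.Prime] {n m : ℕ} (hH : Nat.card H = p ^ n * m)
    (hm : ¬ p ∣ m) (P : Sylow p H) : Nat.card P = p ^ n := by
  have hp : p.Prime := Fact.out
  rw [P.card_eq_multiplicity, hH, Nat.factorization_mul (pow_ne_zero _ hp.ne_zero)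
      (by rintro rfl; exact hm (dvd_zero p)),
    Finsupp.add_apply, Nat.factorization_eq_zero_of_not_dvd hm, hp.factorization_pow,
    Finsupp.single_eq_same, add_zero]

theorem card_sylow_dvd [Finite H] [Fact p.Prime] {n m : ℕ} (hH : Nat.card H = p ^ n * m)
    (hm : ¬ p ∣ m) : Nat.card (Sylow p H) ∣ m := by
  obtain ⟨P⟩ := (inferInstance : Nonempty (Sylow p H))
  convert P.card_dvd_index using 1
  have hcard := P.card_mul_index
  rw [card_sylow_eq_pow hH hm P, hH] at hcard
  exact Nat.eq_of_mul_eq_mul_left (pow_pos (Fact.out : p.Prime).pos n) hcard.symm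

theorem exists_mem_sylow_of_orderOf_eq {z : H} (hz : orderOf z = p) : ∃ P : Sylow p H, z ∈ P := by
  have hcard : Nat.card (Subgroup.zpowers z) = p ^ 1 := by rw [Nat.card_zpowers, hz, pow_one]
  obtain ⟨P, hP⟩ := (IsPGroup.of_card hcard).exists_le_sylow
  exact ⟨P, hP (Subgroup.mem_zpowers z)⟩

theorem card_orderOf_eq_prime [Finite H] [Fact p.Prime] {q : ℕ}
    (horder : ∀ P : Sylow p H, ∀ z ∈ P, z ≠ 1 → orderOf z = p)
    (hdisj : ∀ P Q : Sylow p H, ∀ z ∈ P, z ∈ Q → z ≠ 1 → P = Q)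
    (hq : ∀ P : Sylow p H, Nat.card (P : Subgroup H) = q) :
    Nat.card {z : H // orderOf z = p} = Nat.card (Sylow p H) * (q - 1) := by
  let f : (Σ P : Sylow p H, {z : P // z ≠ 1}) → {z : H // orderOf z = p} :=
    fun x => ⟨x.2.1, horder x.1 _ x.2.1.2 (by simpa using x.2.2)⟩
  have hf : Function.Bijective f := by
    constructor
    · rintro ⟨P, ⟨z, hzP⟩, hz⟩ ⟨Q, ⟨w, hwQ⟩, hw⟩ h
      obtain rfl : z = w := by simpa [f] using h
      obtain rfl := hdisj P Q z hzP hwQ (fun h => hz (Subtype.ext h))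
      rfl
    · rintro ⟨z, hz⟩
      have hz1 : z ≠ 1 := fun h =>
        (Fact.out : p.Prime).ne_one (by rw [← hz, orderOf_eq_one_iff, h])
      obtain ⟨P, hzP⟩ := exists_mem_sylow_of_orderOf_eq hz
      exact ⟨⟨P, ⟨z, hzP⟩, fun h => hz1 (congrArg Subtype.val h)⟩, rfl⟩
  have := Fintype.ofFinite (Sylow p H)
  have hcard (P : Sylow p H) : Nat.card {z : P // z ≠ 1} = q - 1 := by
    have := Set.ncard_compl ({1} : Set P)
    rwa [Set.ncard_singleton, hq P] at this
  rw [← Nat.card_congr (Equiv.ofBijective f hf), Nat.card_sigma]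
  simp only [hcard, Finset.sum_const, Finset.card_univ, smul_eq_mul, Nat.card_eq_fintype_card]

end Sylow

section Centralizer

variable {H : Type*} [Group H] {z : H}

theorem centralizer_eq_of_card_le [Finite H] {P : Subgroup H} [IsMulCommutative P] (hz : z ∈ P)
    (hcard : Nat.card (Subgroup.centralizer {z}) ≤ Nat.card P) : Subgroup.centralizer {z} = P :=
  (Subgroup.eq_of_le_of_card_ge (P.le_centralizer.trans
    (Subgroup.centralizer_le (Set.singleton_subset_iff.2 hz))) hcard).symm

variable (z) in
theorem card_conjugates_mul_card_centralizer :
    Nat.card {w : H // IsConj z w} * Nat.card (Subgroup.centralizer {z}) = Nat.card H := by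
  have horbit : MulAction.orbit (ConjAct H) z = {w | IsConj z w} :=
    Set.ext fun w => ConjAct.mem_orbit_conjAct.trans isConj_comm
  have hindex := MulAction.index_stabilizer (ConjAct H) z
  rw [horbit] at hindex
  rw [Subgroup.nat_card_centralizer_nat_card_stabilizer, ← Set.coe_ofPred,
    Nat.card_coe_set_eq, ← hindex]
  exact (MulAction.stabilizer (ConjAct H) z).index_mul_card

end Centralizer

section SmallGroups

variable {H : Type*} [Group H]

theorem nonempty_mulEquiv_perm_fin_four (hH : Nat.card H = 24) (h6 : ∀ h : H, orderOf h ≠ 6)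
    [Nontrivial (Sylow 3 H)] : Nonempty (H ≃* Equiv.Perm (Fin 4)) := by
  have : Finite H := Nat.finite_of_card_ne_zero (by simp [hH])
  have hcard_sylow : Nat.card (Sylow 3 H) = 4 := by
    have hdvd : Nat.card (Sylow 3 H) ∣ 8 := card_sylow_dvd (n := 1) hH (by norm_num)
    have hmod : Nat.card (Sylow 3 H) % 3 = 1 := card_sylow_modEq_one 3 H
    have hone : 1 < Nat.card (Sylow 3 H) := Finite.one_lt_card
    have hle := Nat.le_of_dvd (by norm_num) hdvd
    interval_cases Nat.card (Sylow 3 H) <;> omega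
  have : FaithfulSMul H (Sylow 3 H) := by
    refine faithfulSMul_sylow_of_centralizer_eq fun P z hzP hz => ?_
    have hP : Nat.card (P : Subgroup H) = 3 :=
      card_sylow_eq_pow (n := 1) (m := 8) hH (by norm_num) P
    have := isCyclic_of_prime_card hP
    have := IsCyclic.isMulCommutative (α := P)
    have hz3 : orderOf z = 3 :=
      ((Nat.dvd_prime Nat.prime_three).1 (hP ▸ Subgroup.orderOf_dvd_natCard _ hzP)).resolve_left
        (mt orderOf_eq_one_iff.1 hz)
    have hodd : ¬ 2 ∣ Nat.card (Subgroup.centralizer {z}) := fun h2 => by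
      obtain ⟨w, hw⟩ := exists_prime_orderOf_dvd_card' 2 h2
      rw [← Subgroup.orderOf_coe] at hw
      have hwz : Commute (w : H) z := Subgroup.mem_centralizer_singleton_iff.1 w.2
      refine h6 (w * z) ?_
      rw [hwz.orderOf_mul_eq_mul_orderOf_of_coprime (by rw [hw, hz3]; norm_num), hw, hz3]
    have hdvd : Nat.card (Subgroup.centralizer {z}) ∣ 2 ^ 3 * 3 :=
      (Subgroup.card_subgroup_dvd_card _).trans hH.dvd
    have hcoprime : (Nat.card (Subgroup.centralizer {z})).Coprime (2 ^ 3) :=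
      ((Nat.Prime.coprime_iff_not_dvd Nat.prime_two).2 hodd).symm.pow_right 3
    refine centralizer_eq_of_card_le hzP ?_
    exact (Nat.le_of_dvd (by norm_num) (hcoprime.dvd_of_dvd_mul_left hdvd)).trans_eq hP.symm
  exact nonempty_mulEquiv_perm hcard_sylow (by norm_num) hH

theorem nonempty_mulEquiv_alternatingGroup_fin_five (hH : Nat.card H = 60)
    (h4 : ∀ h : H, orderOf h ≠ 4) (hconj : ∀ z w : H, orderOf z = 2 → orderOf w = 2 → IsConj z w)
    (hC : ∀ z : H, orderOf z = 2 → Nat.card (Subgroup.centralizer {z}) ≤ 4) :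
    Nonempty (H ≃* alternatingGroup (Fin 5)) := by
  have : Finite H := Nat.finite_of_card_ne_zero (by simp [hH])
  have hP (P : Sylow 2 H) : Nat.card (P : Subgroup H) = 2 ^ 2 :=
    card_sylow_eq_pow (m := 15) hH (by norm_num) P
  have horder (P : Sylow 2 H) (z : H) (hzP : z ∈ P) (hz : z ≠ 1) : orderOf z = 2 := by
    have hdvd : orderOf z ∣ 2 ^ 2 := (Subgroup.orderOf_dvd_natCard _ hzP).trans (hP P).dvd
    obtain ⟨k, hk, hzk⟩ := (Nat.dvd_prime_pow Nat.prime_two).1 hdvd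
    interval_cases k
    · exact absurd (orderOf_eq_one_iff.1 hzk) hz
    · exact hzk
    · exact absurd hzk (h4 z)
  have hCP (P : Sylow 2 H) (z : H) (hzP : z ∈ P) (hz : z ≠ 1) :
      Subgroup.centralizer {z} = P := by
    have := IsPGroup.isMulCommutative_of_card_eq_prime_sq (hP P)
    exact centralizer_eq_of_card_le hzP ((hC z (horder P z hzP hz)).trans_eq (hP P).symm)
  have hcard_sylow : Nat.card (Sylow 2 H) = 5 := by
    have hinvolutions := card_orderOf_eq_prime horder
      (fun P Q z hzP hzQ hz => Sylow.ext ((hCP P z hzP hz).symm.trans (hCP Q z hzQ hz))) hP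
    obtain ⟨z, hz⟩ := exists_prime_orderOf_dvd_card' (G := H) 2 (by norm_num [hH])
    have hclass : ∀ w : H, IsConj z w ↔ orderOf w = 2 := fun w =>
      ⟨fun h => by rw [← hz]; obtain ⟨c, hc⟩ := h; exact (hc.orderOf_eq _).symm, hconj z w hz⟩
    obtain ⟨P, hzP⟩ := exists_mem_sylow_of_orderOf_eq hz
    have hz1 : z ≠ 1 := fun h => by simp [h] at hz
    have hcount := card_conjugates_mul_card_centralizer z
    simp only [hclass, hCP P z hzP hz1] at hcount
    rw [hinvolutions, hP P, hH] at hcount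
    omega
  have : Nontrivial (Sylow 2 H) := Finite.one_lt_card_iff_nontrivial.1 (by omega)
  have := faithfulSMul_sylow_of_centralizer_eq hCP
  exact nonempty_mulEquiv_alternatingGroup hcard_sylow (by norm_num) (by rw [hH]; rfl)

end SmallGroups

section Poles

open MulAction

variable {H X : Type*} [Group H] [MulAction H X]

variable (H X) in
/-- Every nontrivial element fixes exactly two points, as in a finite group of Möbius
transformations of the projective line. -/
def HasTwoFixedPoints : Prop := ∀ h : H, h ≠ 1 → (fixedBy X h).ncard = 2

variable (X) in
/-- `h` interchanges the fixed points of `c`; meant for `c` with exactly two fixed points. -/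
def SwapsFixedPoints (h c : H) : Prop := ∀ x ∈ fixedBy X c, h • x ∈ fixedBy X c ∧ h • x ≠ x

variable (H X) in
/-- The poles of an action: the points fixed by some nontrivial element. -/
def poles : SubMulAction H X where
  carrier := {x | stabilizer H x ≠ ⊥}
  smul_mem' h x hx := by
    rwa [Set.mem_ofPred_eq, stabilizer_smul_eq_stabilizer_map_conj, ne_eq,
      Subgroup.map_eq_bot_iff_of_injective _ (MulAut.conj h).injective]

theorem mem_poles_of_smul_eq {h : H} (hh : h ≠ 1) {x : X} (hx : h • x = x) : x ∈ poles H X :=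
  fun hbot => hh (Subgroup.mem_bot.1 (hbot ▸ mem_stabilizer_iff.2 hx))

theorem ncard_orbit_mul_card_stabilizer (x : X) :
    (orbit H x).ncard * Nat.card (stabilizer H x) = Nat.card H := by
  rw [← index_stabilizer, Subgroup.index_mul_card]

theorem one_lt_card_stabilizer [Finite H] {x : X} (hx : x ∈ poles H X) :
    1 < Nat.card (stabilizer H x) :=
  (Subgroup.one_lt_card_iff_ne_bot _).2 hx

theorem ncard_orbit_pos [Finite H] (x : X) : 0 < (orbit H x).ncard :=
  (Set.ncard_pos (Set.finite_range _)).2 (nonempty_orbit x)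

theorem two_mul_ncard_orbit_le [Finite H] {x : X} (hx : x ∈ poles H X) :
    2 * (orbit H x).ncard ≤ Nat.card H := by
  rw [← ncard_orbit_mul_card_stabilizer x, mul_comm]
  exact Nat.mul_le_mul_left _ (one_lt_card_stabilizer hx)

/-- A chosen point of an orbit of poles. -/
noncomputable def orbitRep (ω : orbitRel.Quotient H (poles H X)) : X := (ω.out : poles H X)

theorem orbitRep_mem_poles (ω : orbitRel.Quotient H (poles H X)) : orbitRep ω ∈ poles H X :=
  ω.out.2

theorem exists_mem_orbit_orbitRep {x : X} (hx : x ∈ poles H X) :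
    ∃ ω : orbitRel.Quotient H (poles H X), x ∈ orbit H (orbitRep ω) := by
  obtain ⟨h, hh⟩ := (orbitRel H _).symm (Quotient.mk_out (⟨x, hx⟩ : poles H X))
  exact ⟨_, h, congrArg Subtype.val hh⟩

variable (H) in
/-- Representatives of three orbits that exhaust the poles, sorted by the orders of their
stabilizers. The last field is what Burnside's lemma says about their lengths. -/
structure IsPoleSystem (x : Fin 3 → X) : Prop where
  mem_poles : ∀ i, x i ∈ poles H X
  exists_mem_orbit : ∀ y ∈ poles H X, ∃ i, y ∈ orbit H (x i)
  monotone_card_stabilizer : Monotone fun i => Nat.card (stabilizer H (x i))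
  sum_ncard_orbit : ∑ i, (orbit H (x i)).ncard = Nat.card H + 2

namespace HasTwoFixedPoints

variable (h2 : HasTwoFixedPoints H X)
include h2

theorem finite_poles [Finite H] : Finite (poles H X) := by
  refine Set.Finite.subset (Set.finite_iUnion fun h : {h : H // h ≠ 1} =>
    Set.finite_of_ncard_ne_zero (by rw [h2 h h.2]; exact two_ne_zero)) fun x hx => ?_
  obtain ⟨h, hhx, hh⟩ := (Subgroup.bot_or_exists_ne_one _).resolve_left hx
  exact Set.mem_iUnion.2 ⟨⟨h, hh⟩, hhx⟩

theorem card_fixedBy_poles {h : H} (hh : h ≠ 1) : Nat.card (fixedBy (poles H X) h) = 2 := by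
  have himage : Subtype.val '' fixedBy (poles H X) h = fixedBy X h := by
    ext x
    constructor
    · rintro ⟨y, hy, rfl⟩
      exact congrArg Subtype.val hy
    · exact fun hx => ⟨⟨x, mem_poles_of_smul_eq hh hx⟩, Subtype.ext hx, rfl⟩
  rw [← h2 h hh, ← himage, Set.ncard_image_of_injective _ Subtype.val_injective,
    Nat.card_coe_set_eq]

variable [Finite H]

theorem card_poles_add :
    Nat.card (poles H X) + (Nat.card H - 1) * 2 =
      Nat.card (orbitRel.Quotient H (poles H X)) * Nat.card H := by
  classical
  have := h2.finite_poles
  have := Fintype.ofFinite H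
  have := Fintype.ofFinite (poles H X)
  have hburnside := sum_card_fixedBy_eq_card_orbits_mul_card_group H (poles H X)
  simp only [← Nat.card_eq_fintype_card] at hburnside
  rw [← hburnside, ← Finset.add_sum_erase _ _ (Finset.mem_univ 1),
    Finset.sum_congr rfl fun h hh => h2.card_fixedBy_poles (Finset.ne_of_mem_erase hh),
    Finset.sum_const, Finset.card_erase_of_mem (Finset.mem_univ 1), Finset.card_univ,
    smul_eq_mul, fixedBy_one_eq_univ, Nat.card_univ, Nat.card_eq_fintype_card (α := H)]

theorem sum_ncard_orbit_add [Fintype (orbitRel.Quotient H (poles H X))] :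
    ∑ ω : orbitRel.Quotient H (poles H X), (orbit H (orbitRep ω)).ncard + (Nat.card H - 1) * 2 =
      Nat.card (orbitRel.Quotient H (poles H X)) * Nat.card H := by
  have := h2.finite_poles
  rw [← h2.card_poles_add, Nat.card_congr (selfEquivSigmaOrbits H (poles H X)), Nat.card_sigma]
  congr 1
  refine Finset.sum_congr rfl fun ω _ => ?_
  rw [orbitRep, ← SubMulAction.val_image_orbit, Nat.card_coe_set_eq,
    Set.ncard_image_of_injective _ Subtype.val_injective]

theorem card_orbits_poles [Nontrivial H] :
    Nat.card (orbitRel.Quotient H (poles H X)) = 2 ∨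
      Nat.card (orbitRel.Quotient H (poles H X)) = 3 := by
  have := h2.finite_poles
  have := Fintype.ofFinite (orbitRel.Quotient H (poles H X))
  have hsum := h2.sum_ncard_orbit_add
  have hlower := Finset.card_nsmul_le_sum Finset.univ
    (fun ω : orbitRel.Quotient H (poles H X) => (orbit H (orbitRep ω)).ncard) 1
    fun ω _ => ncard_orbit_pos _
  have hupper := Finset.sum_le_card_nsmul Finset.univ
    (fun ω : orbitRel.Quotient H (poles H X) => 2 * (orbit H (orbitRep ω)).ncard) (Nat.card H)
    fun ω _ => two_mul_ncard_orbit_le (orbitRep_mem_poles ω)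
  rw [Finset.card_univ, ← Nat.card_eq_fintype_card, smul_eq_mul] at hlower hupper
  rw [← Finset.mul_sum] at hupper
  have hH : 1 < Nat.card H := Finite.one_lt_card
  generalize Nat.card (orbitRel.Quotient H (poles H X)) = k at *
  have hk : k < 4 := by
    by_contra hk
    have := Nat.mul_le_mul_right (Nat.card H) (not_lt.1 hk)
    omega
  interval_cases k <;> omega

theorem exists_forall_smul_eq [Nontrivial H]
    (hcard : Nat.card (orbitRel.Quotient H (poles H X)) = 2) : ∃ x : X, ∀ h : H, h • x = x := by
  have := h2.finite_poles
  have := Fintype.ofFinite (orbitRel.Quotient H (poles H X))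
  have hsum := h2.sum_ncard_orbit_add
  rw [← (Finite.equivFinOfCardEq hcard).symm.sum_comp, Fin.sum_univ_two, hcard] at hsum
  set ω := (Finite.equivFinOfCardEq hcard).symm
  have hone := ncard_orbit_pos (H := H) (orbitRep (ω 0))
  have hone' := ncard_orbit_pos (H := H) (orbitRep (ω 1))
  have hH : 1 < Nat.card H := Finite.one_lt_card
  obtain ⟨x, hx⟩ := Set.ncard_eq_one.1 (show (orbit H (orbitRep (ω 0))).ncard = 1 by omega)
  refine ⟨x, fun h => ?_⟩
  rw [← Set.mem_singleton_iff, ← hx, ← smul_orbit h (orbitRep (ω 0))]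
  exact Set.smul_mem_smul_set (hx ▸ Set.mem_singleton x)

theorem exists_isPoleSystem (hcard : Nat.card (orbitRel.Quotient H (poles H X)) = 3) :
    ∃ x : Fin 3 → X, IsPoleSystem H x := by
  have := h2.finite_poles
  have := Fintype.ofFinite (orbitRel.Quotient H (poles H X))
  let e := (Finite.equivFinOfCardEq hcard).symm
  let order := fun i => Nat.card (stabilizer H (orbitRep (e i)))
  let σ := Tuple.sort order
  refine ⟨fun i => orbitRep (e (σ i)), fun i => orbitRep_mem_poles _, fun y hy => ?_,
    Tuple.monotone_sort order, ?_⟩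
  · obtain ⟨ω, hω⟩ := exists_mem_orbit_orbitRep hy
    exact ⟨σ.symm (e.symm ω), by simpa using hω⟩
  · have hsum := h2.sum_ncard_orbit_add
    rw [← (σ.trans e).sum_comp, hcard] at hsum
    have hH : 0 < Nat.card H := Nat.card_pos
    simp only [Equiv.trans_apply] at hsum
    omega

end HasTwoFixedPoints

theorem platonic_numbers {n p q r e f g : ℕ} (hp : p * e = n) (hq : q * f = n) (hr : r * g = n)
    (hsum : p + q + r = n + 2) (he : 2 ≤ e) (hef : e ≤ f) (hfg : f ≤ g) :
    r = 2 ∨ e = 2 ∧ f = 3 ∧ (g = 3 ∧ n = 12 ∨ g = 4 ∧ n = 24 ∨ g = 5 ∧ n = 60) := by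
  have hp_le {k : ℕ} (hk : k ≤ e) : p * k ≤ n := hp ▸ Nat.mul_le_mul_left p hk
  have hq_le {k : ℕ} (hk : k ≤ f) : q * k ≤ n := hq ▸ Nat.mul_le_mul_left q hk
  have hr_le {k : ℕ} (hk : k ≤ g) : r * k ≤ n := hr ▸ Nat.mul_le_mul_left r hk
  have he3 : e < 3 := by
    by_contra! he3
    have := hp_le he3; have := hq_le (he3.trans hef); have := hr_le (he3.trans (hef.trans hfg))
    omega
  obtain rfl : e = 2 := by omega
  have hf4 : f < 4 := by
    by_contra! hf4
    have := hq_le hf4; have := hr_le (hf4.trans hfg)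
    omega
  have hg6 : f = 3 → g < 6 := by
    rintro rfl
    by_contra! hg6
    have := hr_le hg6
    omega
  interval_cases f
  · omega
  · have hg6 := hg6 rfl
    interval_cases g <;> omega

theorem card_stabilizer_eq_of_mem_orbit [Finite H] {x y : X} (hy : y ∈ orbit H x) :
    Nat.card (stabilizer H y) = Nat.card (stabilizer H x) := by
  have hx := ncard_orbit_mul_card_stabilizer (H := H) x
  rw [← ncard_orbit_mul_card_stabilizer (H := H) y, orbit_eq_iff.2 hy] at hx
  exact (Nat.eq_of_mul_eq_mul_left (ncard_orbit_pos x) hx).symm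

theorem IsPoleSystem.ncard_orbit_eq_two_or [Finite H] {x : Fin 3 → X} (hx : IsPoleSystem H x) :
    (orbit H (x 2)).ncard = 2 ∨
      Nat.card (stabilizer H (x 0)) = 2 ∧ Nat.card (stabilizer H (x 1)) = 3 ∧
        (Nat.card (stabilizer H (x 2)) = 3 ∧ Nat.card H = 12 ∨
          Nat.card (stabilizer H (x 2)) = 4 ∧ Nat.card H = 24 ∨
          Nat.card (stabilizer H (x 2)) = 5 ∧ Nat.card H = 60) :=
  platonic_numbers (ncard_orbit_mul_card_stabilizer (x 0)) (ncard_orbit_mul_card_stabilizer (x 1))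
    (ncard_orbit_mul_card_stabilizer (x 2))
    ((Fin.sum_univ_three fun i => (orbit H (x i)).ncard).symm.trans hx.sum_ncard_orbit)
    (one_lt_card_stabilizer (hx.mem_poles 0)) (hx.monotone_card_stabilizer (by decide))
    (hx.monotone_card_stabilizer (by decide))

theorem IsPoleSystem.exists_smul_mem_fixedBy {x : Fin 3 → X} (hx : IsPoleSystem H x)
    (h2 : HasTwoFixedPoints H X) {h : H} (hh : h ≠ 1) :
    ∃ i, ∃ g : H, g • x i ∈ fixedBy X h := by
  obtain ⟨y, hy⟩ := Set.nonempty_of_ncard_ne_zero ((h2 h hh).trans_ne two_ne_zero)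
  obtain ⟨i, g, rfl⟩ := hx.exists_mem_orbit y (mem_poles_of_smul_eq hh hy)
  exact ⟨i, g, hy⟩

theorem orderOf_dvd_card_stabilizer [Finite H] {x : X} {g h : H} (hgx : g • x ∈ fixedBy X h) :
    orderOf h ∣ Nat.card (stabilizer H x) := by
  rw [← card_stabilizer_eq_of_mem_orbit (mem_orbit x g)]
  exact Subgroup.orderOf_dvd_natCard _ hgx

theorem IsPoleSystem.orderOf_dvd_or_dvd_or_dvd [Finite H] {x : Fin 3 → X} (hx : IsPoleSystem H x)
    (h2 : HasTwoFixedPoints H X) {h : H} (hh : h ≠ 1) :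
    orderOf h ∣ Nat.card (stabilizer H (x 0)) ∨ orderOf h ∣ Nat.card (stabilizer H (x 1)) ∨
      orderOf h ∣ Nat.card (stabilizer H (x 2)) := by
  obtain ⟨i, g, hg⟩ := hx.exists_smul_mem_fixedBy h2 hh
  have hdvd := orderOf_dvd_card_stabilizer hg
  fin_cases i
  exacts [.inl hdvd, .inr (.inl hdvd), .inr (.inr hdvd)]

namespace HasTwoFixedPoints

variable (h2 : HasTwoFixedPoints H X)
include h2

theorem finite_fixedBy {h : H} (hh : h ≠ 1) : (fixedBy X h).Finite :=
  Set.finite_of_ncard_ne_zero ((h2 h hh).trans_ne two_ne_zero)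

theorem eq_one_of_subset_fixedBy {s : Set X} (hs : 2 < s.ncard) {h : H}
    (hsub : s ⊆ fixedBy X h) : h = 1 := by
  by_contra hh
  have := Set.ncard_le_ncard hsub (h2.finite_fixedBy hh)
  rw [h2 h hh] at this
  omega

theorem faithfulSMul_orbit {x : X} (hx : 2 < (orbit H x).ncard) :
    FaithfulSMul H (orbit H x) :=
  faithfulSMul_iff.2 fun _ hh =>
    h2.eq_one_of_subset_fixedBy hx fun y hy => congrArg Subtype.val (hh ⟨y, hy⟩)

theorem orderOf_eq_two_of_swap {h : H} {x y : X} (hne : x ≠ y) (hxy : h • x = y)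
    (hyx : h • y = x) : orderOf h = 2 := by
  have hh : h ≠ 1 := by
    rintro rfl
    exact hne (by rwa [one_smul] at hxy)
  refine orderOf_eq_prime ?_ hh
  have hdisj : Disjoint (fixedBy X h) {x, y} := by
    rw [Set.disjoint_insert_right, Set.disjoint_singleton_right, mem_fixedBy, mem_fixedBy, hxy,
      hyx]
    exact ⟨hne.symm, hne⟩
  refine h2.eq_one_of_subset_fixedBy (s := fixedBy X h ∪ {x, y}) ?_ ?_
  · rw [Set.ncard_union_eq hdisj (h2.finite_fixedBy hh), h2 h hh, Set.ncard_pair hne]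
    norm_num
  · rintro z (hz | rfl | rfl) <;> rw [mem_fixedBy, pow_two, mul_smul]
    · rw [hz, hz]
    · rw [hxy, hyx]
    · rw [hyx, hxy]

theorem card_centralizer_le [Finite H] {z : H} (hz : z ≠ 1) {x : X} (hx : x ∈ fixedBy X z) :
    Nat.card (Subgroup.centralizer {z}) ≤ 2 * Nat.card (stabilizer H x) := by
  set C := Subgroup.centralizer {z}
  have horbit : orbit C x ⊆ fixedBy X z := by
    rintro _ ⟨c, rfl⟩
    have hcz : (c : H) * z = z * c := Subgroup.mem_centralizer_singleton_iff.1 c.2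
    change z • (c : H) • x = (c : H) • x
    rw [← mul_smul, ← hcz, mul_smul, hx]
  have hstab : Nat.card (stabilizer C x) ≤ Nat.card (stabilizer H x) :=
    Nat.card_le_card_of_injective (fun c => (⟨c.1, c.2⟩ : stabilizer H x)) fun c d hcd =>
      Subtype.ext (Subtype.ext (Subtype.mk.inj hcd))
  rw [← ncard_orbit_mul_card_stabilizer x]
  exact Nat.mul_le_mul
    ((Set.ncard_le_ncard horbit (h2.finite_fixedBy hz)).trans_eq (h2 z hz)) hstab

theorem nontrivial_sylow_three [Finite H] (hH : Nat.card H = 24) {x : X}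
    (hx : Nat.card (stabilizer H x) = 3) : Nontrivial (Sylow 3 H) := by
  have horbit := ncard_orbit_mul_card_stabilizer (H := H) x
  rw [hx, hH] at horbit
  by_contra hsylow
  rw [not_nontrivial_iff_subsingleton] at hsylow
  obtain ⟨P⟩ := (inferInstance : Nonempty (Sylow 3 H))
  have hP : Nat.card (P : Subgroup H) = 3 := card_sylow_eq_pow (n := 1) (m := 8) hH (by norm_num) P
  have stabilizer_eq (y : X) (hy : y ∈ orbit H x) : stabilizer H y = P := by
    have hy3 : Nat.card (stabilizer H y) = 3 := (card_stabilizer_eq_of_mem_orbit hy).trans hx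
    obtain ⟨Q, hQ⟩ := (IsPGroup.of_card (p := 3) (n := 1) hy3).exists_le_sylow
    rw [Subsingleton.elim Q P] at hQ
    exact Subgroup.eq_of_le_of_card_ge hQ (hP.trans hy3.symm).le
  obtain ⟨z, hzP, hz⟩ := P.toSubgroup.bot_or_exists_ne_one.resolve_left fun h => by simp [h] at hP
  refine hz (h2.eq_one_of_subset_fixedBy (s := orbit H x) (by omega) fun y hy => ?_)
  exact mem_stabilizer_iff.1 (stabilizer_eq y hy ▸ hzP)

theorem fixedBy_subset_or_swapsFixedPoints {c h : H} (hc : c ≠ 1)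
    (hmaps : ∀ x ∈ fixedBy X c, h • x ∈ fixedBy X c) :
    fixedBy X c ⊆ fixedBy X h ∨ SwapsFixedPoints X h c := by
  obtain ⟨x, y, hxy, hfix⟩ := Set.ncard_eq_two.1 (h2 c hc)
  have hne : h • x ≠ h • y := (MulAction.injective h).ne hxy
  simp only [SwapsFixedPoints, hfix, Set.mem_insert_iff, Set.mem_singleton_iff, forall_eq_or_imp,
    forall_eq, Set.insert_subset_iff, Set.singleton_subset_iff, mem_fixedBy] at hmaps ⊢
  grind

end HasTwoFixedPoints

section TwoPointOrbit

theorem exists_orbit_eq_pair {x : X} (horbit : (orbit H x).ncard = 2) :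
    ∃ s : H, s • x ≠ x ∧ orbit H x = {x, s • x} := by
  obtain ⟨_, ⟨s, rfl⟩, hs⟩ := Set.exists_ne_of_one_lt_ncard (horbit ▸ one_lt_two) x
  refine ⟨s, hs, (Set.eq_of_subset_of_ncard_le ?_ ?_ ?_).symm⟩
  · exact Set.insert_subset (mem_orbit_self x) (Set.singleton_subset_iff.2 (mem_orbit x s))
  · rw [horbit, Set.ncard_pair hs.symm]
  · exact Set.finite_of_ncard_ne_zero (horbit.trans_ne two_ne_zero)

namespace HasTwoFixedPoints

variable (h2 : HasTwoFixedPoints H X) {x : X} (horbit : (orbit H x).ncard = 2)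
include h2 horbit

theorem fixedBy_eq_orbit {c : H} (hc : c ≠ 1) (hcx : c • x = x) : fixedBy X c = orbit H x := by
  refine (Set.eq_of_subset_of_ncard_le ?_ ?_ (h2.finite_fixedBy hc)).symm
  · obtain ⟨s, hs, hpair⟩ := exists_orbit_eq_pair horbit
    have hcs : c • s • x ∈ orbit H x := mem_orbit_of_mem_orbit c (mem_orbit x s)
    rw [hpair, Set.insert_subset_iff, Set.singleton_subset_iff]
    refine ⟨hcx, (hpair ▸ hcs : c • s • x ∈ ({x, s • x} : Set X)).resolve_left fun h => ?_⟩
    exact hs (MulAction.injective c (h.trans hcx.symm))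
  · rw [h2 c hc, horbit]

theorem exists_closure_pair_eq_top {c : H} (hc : c ≠ 1)
    (hgen : stabilizer H x = Subgroup.zpowers c) :
    ∃ a b : H, a ≠ b ∧ orderOf a = 2 ∧ orderOf b = 2 ∧ Subgroup.closure {a, b} = ⊤ := by
  obtain ⟨s, hs, hpair⟩ := exists_orbit_eq_pair horbit
  have eq_or_eq (h : H) : h • x = x ∨ h • x = s • x :=
    (hpair ▸ mem_orbit x h : h • x ∈ ({x, s • x} : Set X))
  have orderOf_eq (h : H) (hx : h • x = s • x) : orderOf h = 2 := by
    refine h2.orderOf_eq_two_of_swap hs.symm hx ((eq_or_eq (h * s)).elim ?_ fun hhs => ?_)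
    · exact fun hhs => by rwa [mul_smul] at hhs
    · rw [mul_smul, ← hx] at hhs
      exact absurd (hx.symm.trans (MulAction.injective h hhs)) hs
  have hcx : c • x = x := mem_stabilizer_iff.1 (hgen ▸ Subgroup.mem_zpowers c)
  refine ⟨s, s * c, fun h => hc (left_eq_mul.1 h), orderOf_eq s rfl,
    orderOf_eq (s * c) (by rw [mul_smul, hcx]), ?_⟩
  set K := Subgroup.closure {s, s * c}
  have hsK : s ∈ K := Subgroup.subset_closure (Set.mem_insert _ _)
  have hscK : s * c ∈ K := Subgroup.subset_closure (Set.mem_insert_of_mem _ rfl)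
  have hcK : c ∈ K := (K.mul_mem_cancel_left hsK).1 hscK
  have mem_of_smul_eq (h : H) (hx : h • x = x) : h ∈ K :=
    (Subgroup.zpowers_le.2 hcK) (hgen ▸ mem_stabilizer_iff.2 hx)
  refine (Subgroup.eq_top_iff' K).2 fun h => (eq_or_eq h).elim (mem_of_smul_eq h) fun hx => ?_
  refine (K.mul_mem_cancel_left (K.inv_mem hsK)).1 (mem_of_smul_eq (s⁻¹ * h) ?_)
  rw [mul_smul, hx, inv_smul_smul]

theorem exists_closure_pair_eq_top_and_swaps [IsCyclic (stabilizer H x)] (hx : x ∈ poles H X) :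
    (∃ a b : H, a ≠ b ∧ orderOf a = 2 ∧ orderOf b = 2 ∧ Subgroup.closure {a, b} = ⊤) ∧
      ∃ c : H, c ≠ 1 ∧ (∀ h, fixedBy X c ⊆ fixedBy X h ∨ SwapsFixedPoints X h c) ∧
        ∃ h, SwapsFixedPoints X h c := by
  obtain ⟨c, hgen⟩ := (Subgroup.isCyclic_iff_exists_zpowers_eq_top _).1
    (inferInstance : IsCyclic (stabilizer H x))
  have hc : c ≠ 1 := by
    rintro rfl
    exact hx (by rw [← hgen, Subgroup.zpowers_one_eq_bot])
  have hcx : c • x = x := mem_stabilizer_iff.1 (hgen ▸ Subgroup.mem_zpowers c)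
  have hfix := h2.fixedBy_eq_orbit horbit hc hcx
  have hswap (h : H) := h2.fixedBy_subset_or_swapsFixedPoints (h := h) hc
    fun y hy => hfix ▸ mem_orbit_of_mem_orbit h (hfix ▸ hy)
  obtain ⟨s, hs, -⟩ := exists_orbit_eq_pair horbit
  exact ⟨h2.exists_closure_pair_eq_top horbit hc hgen.symm, c, hc, hswap, s,
    (hswap s).resolve_left fun hsub => hs (hsub hcx)⟩

end HasTwoFixedPoints

end TwoPointOrbit

namespace HasTwoFixedPoints

variable (h2 : HasTwoFixedPoints H X)
include h2

theorem isCyclic_of_forall_smul_eq [Nontrivial H] {x : X} (hx : ∀ h : H, h • x = x)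
    [IsCyclic (stabilizer H x)] :
    IsCyclic H ∧ ∃ c : H, c ≠ 1 ∧ ∀ h : H, fixedBy X c ⊆ fixedBy X h := by
  have htop : stabilizer H x = ⊤ := (Subgroup.eq_top_iff' _).2 hx
  have hcyc : IsCyclic H := isCyclic_iff_exists_zpowers_eq_top.2
    (htop ▸ (Subgroup.isCyclic_iff_exists_zpowers_eq_top _).1 ‹IsCyclic (stabilizer H x)›)
  obtain ⟨c, hc⟩ := exists_ne (1 : H)
  refine ⟨hcyc, c, hc, fun h => ?_⟩
  refine (h2.fixedBy_subset_or_swapsFixedPoints hc fun y hy => ?_).resolve_right fun hswap =>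
    (hswap x (hx c)).2 (hx h)
  rw [mem_fixedBy, ← mul_smul, hcyc.commGroup.mul_comm c h, mul_smul, mem_fixedBy.1 hy]

end HasTwoFixedPoints

namespace IsPoleSystem

variable [Finite H] {x : Fin 3 → X} (hx : IsPoleSystem H x) (h2 : HasTwoFixedPoints H X)
include hx h2

theorem nonempty_mulEquiv_alternatingGroup_fin_five (hH : Nat.card H = 60)
    (h0 : Nat.card (stabilizer H (x 0)) = 2) (h1 : Nat.card (stabilizer H (x 1)) = 3)
    (h5 : Nat.card (stabilizer H (x 2)) = 5) : Nonempty (H ≃* alternatingGroup (Fin 5)) := by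
  have involution (z : H) (hz : orderOf z = 2) : ∃ g : H, g • x 0 ∈ fixedBy X z := by
    obtain ⟨i, g, hg⟩ := hx.exists_smul_mem_fixedBy h2 (h := z) fun h => by simp [h] at hz
    have hdvd := hz ▸ orderOf_dvd_card_stabilizer hg
    fin_cases i
    · exact ⟨g, hg⟩
    · exact absurd (h1 ▸ hdvd) (by norm_num)
    · exact absurd (h5 ▸ hdvd) (by norm_num)
  refine Dickson.nonempty_mulEquiv_alternatingGroup_fin_five hH ?_ ?_ ?_
  · intro h hh
    have hdvd := hx.orderOf_dvd_or_dvd_or_dvd h2 (h := h) fun hone => by simp [hone] at hh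
    rw [hh, h0, h1, h5] at hdvd
    omega
  · obtain ⟨y, -, hy⟩ := (Nat.card_eq_two_iff' 1).1 h0
    have isConj_y (z : H) (hz : orderOf z = 2) : IsConj z y := by
      obtain ⟨g, hg⟩ := involution z hz
      have hstab : g⁻¹ * z * g ∈ stabilizer H (x 0) := by
        rw [mem_stabilizer_iff, mul_smul, mul_smul, mem_fixedBy.1 hg, inv_smul_smul]
      have hconj : IsConj z (g⁻¹ * z * g) := isConj_iff.2 ⟨g⁻¹, by rw [inv_inv]⟩
      have hne : g⁻¹ * z * g ≠ 1 := fun h => by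
        rw [h, isConj_one_left] at hconj
        simp [hconj] at hz
      rwa [← hy ⟨_, hstab⟩ fun h => hne (congrArg Subtype.val h)]
    exact fun z w hz hw => (isConj_y z hz).trans (isConj_y w hw).symm
  · intro z hz
    obtain ⟨g, hg⟩ := involution z hz
    have := h2.card_centralizer_le (fun h => by simp [h] at hz) hg
    rwa [card_stabilizer_eq_of_mem_orbit (mem_orbit _ g), h0] at this

end IsPoleSystem

namespace HasTwoFixedPoints

variable [Finite H] (h2 : HasTwoFixedPoints H X)
include h2

theorem nonempty_mulEquiv_of_card_orbits_eq_three {x : Fin 3 → X}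
    (hx : IsPoleSystem H x) (hdihedral : (orbit H (x 2)).ncard ≠ 2) :
    Nonempty (H ≃* alternatingGroup (Fin 4)) ∨ Nonempty (H ≃* Equiv.Perm (Fin 4)) ∨
      Nonempty (H ≃* alternatingGroup (Fin 5)) := by
  have hmul := ncard_orbit_mul_card_stabilizer (H := H) (x 2)
  obtain h | ⟨h₀, h₁, ⟨h₂, hH⟩ | ⟨h₂, hH⟩ | ⟨h₂, hH⟩⟩ := hx.ncard_orbit_eq_two_or
  · exact absurd h hdihedral
  · rw [h₂, hH] at hmul
    have horbit : Nat.card (orbit H (x 2)) = 4 := by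
      rw [Nat.card_coe_set_eq]
      omega
    have := h2.faithfulSMul_orbit (x := x 2) (by omega)
    exact .inl (nonempty_mulEquiv_alternatingGroup horbit (by norm_num) (by rw [hH]; rfl))
  · have := h2.nontrivial_sylow_three hH h₁
    refine .inr (.inl (nonempty_mulEquiv_perm_fin_four hH fun h hh => ?_))
    have hdvd := hx.orderOf_dvd_or_dvd_or_dvd h2 (h := h) fun hone => by simp [hone] at hh
    rw [hh, h₀, h₁, h₂] at hdvd
    omega
  · exact .inr (.inr (hx.nonempty_mulEquiv_alternatingGroup_fin_five h2 hH h₀ h₁ h₂))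

theorem classification [Nontrivial H] (hcyc : ∀ x : X, IsCyclic (stabilizer H x)) :
    (IsCyclic H ∧ ∃ c : H, c ≠ 1 ∧ ∀ h : H, fixedBy X c ⊆ fixedBy X h) ∨
    ((∃ a b : H, a ≠ b ∧ orderOf a = 2 ∧ orderOf b = 2 ∧ Subgroup.closure {a, b} = ⊤) ∧
      ∃ c : H, c ≠ 1 ∧ (∀ h, fixedBy X c ⊆ fixedBy X h ∨ SwapsFixedPoints X h c) ∧
        ∃ h, SwapsFixedPoints X h c) ∨
    Nonempty (H ≃* alternatingGroup (Fin 4)) ∨ Nonempty (H ≃* Equiv.Perm (Fin 4)) ∨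
      Nonempty (H ≃* alternatingGroup (Fin 5)) := by
  obtain hcard | hcard := h2.card_orbits_poles
  · obtain ⟨x, hx⟩ := h2.exists_forall_smul_eq hcard
    exact .inl (h2.isCyclic_of_forall_smul_eq hx)
  · obtain ⟨x, hx⟩ := h2.exists_isPoleSystem hcard
    by_cases horbit : (orbit H (x 2)).ncard = 2
    · exact .inr (.inl (h2.exists_closure_pair_eq_top_and_swaps horbit (hx.mem_poles 2)))
    · exact .inr (.inr (h2.nonempty_mulEquiv_of_card_orbits_eq_three hx horbit))

end HasTwoFixedPoints

end Poles

section Matrices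

open OnePoint

variable {K : Type*} [Field K]

-- The columns of `P` are a cyclic vector `v` and `A v`.
theorem exists_mul_eq_mul_companion {A : Matrix (Fin 2) (Fin 2) K}
    (hA : A ∉ Set.range (scalar (Fin 2))) :
    ∃ P : GL (Fin 2) K, A * P = P.val * !![0, -A.det; 1, A.trace] := by
  suffices ∃ P : Matrix (Fin 2) (Fin 2) K, P.det ≠ 0 ∧ A * P = P * !![0, -A.det; 1, A.trace] by
    obtain ⟨P, hP, h⟩ := this
    exact ⟨.mkOfDetNeZero P hP, h⟩
  obtain ⟨a, b, c, d, rfl⟩ : ∃ a b c d, A = !![a, b; c, d] := ⟨_, _, _, _, eta_fin_two A⟩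
  simp only [det_fin_two_of, trace_fin_two_of]
  by_cases hc : c = 0
  · by_cases hb : b = 0
    · have had : a ≠ d := fun h => hA ⟨a, by rw [h, hb, hc, scalar_apply, diagonal_fin_two]⟩
      refine ⟨!![1, a + b; 1, c + d], ?_, ?_⟩
      · rw [det_fin_two_of]
        grind
      · rw [mul_fin_two, mul_fin_two, hb, hc]
        congrm !![?_, ?_; ?_, ?_] <;> ring
    · refine ⟨!![0, b; 1, d], by simpa using hb, ?_⟩
      rw [mul_fin_two, mul_fin_two, hc]
      congrm !![?_, ?_; ?_, ?_] <;> ring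
  · refine ⟨!![1, a; 0, c], by simpa using hc, ?_⟩
    rw [mul_fin_two, mul_fin_two]
    congrm !![?_, ?_; ?_, ?_] <;> ring

theorem isConj_of_trace_eq_of_det_eq {g h : GL (Fin 2) K}
    (hg : g.val ∉ Set.range (scalar (Fin 2))) (hh : h.val ∉ Set.range (scalar (Fin 2)))
    (htr : g.val.trace = h.val.trace) (hdet : g.val.det = h.val.det) : IsConj g h := by
  obtain ⟨P, hP⟩ := exists_mul_eq_mul_companion hg
  obtain ⟨Q, hQ⟩ := exists_mul_eq_mul_companion hh
  have hC : h * Q = Q * (P⁻¹ * g * P) := by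
    ext1
    rw [Units.val_mul, hQ, Units.val_mul, mul_assoc P⁻¹, Units.val_mul, Units.val_mul, hP, htr,
      hdet, ← mul_assoc P⁻¹.val, Units.inv_mul, one_mul]
  exact isConj_iff.2 ⟨Q * P⁻¹, by rw [eq_mul_inv_of_mul_eq hC]; group⟩

theorem notMem_range_scalar_of_discr_ne_zero {A : Matrix (Fin 2) (Fin 2) K} (hA : A.discr ≠ 0) :
    A ∉ Set.range (scalar (Fin 2)) := by
  rintro ⟨a, rfl⟩
  exact hA (by simp only [discr_fin_two, scalar_apply, diagonal_fin_two, trace_fin_two_of,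
    det_fin_two_of]; ring)

theorem discr_eq_of_isConj {g h : GL (Fin 2) K} (hgh : IsConj g h) :
    g.val.discr = h.val.discr := by
  obtain ⟨x, rfl⟩ := isConj_iff.1 hgh
  simp [coe_units_inv, discr_conj]

theorem exists_conj_eq_of_trace_eq_of_det_eq {g : GL (Fin 2) K} {A : Matrix (Fin 2) (Fin 2) K}
    (hg : g.val.discr ≠ 0) (htr : A.trace = g.val.trace) (hdet : A.det = g.val.det) :
    ∃ x : GL (Fin 2) K, (x * g * x⁻¹).val = A := by
  have hA : A.discr ≠ 0 := by rwa [discr_fin_two, htr, hdet, ← discr_fin_two]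
  obtain ⟨x, hx⟩ := isConj_iff.1 (isConj_of_trace_eq_of_det_eq
    (h := .mkOfDetNeZero A (hdet ▸ g.det_ne_zero)) (notMem_range_scalar_of_discr_ne_zero hg)
    (notMem_range_scalar_of_discr_ne_zero hA) htr.symm hdet.symm)
  exact ⟨x, by rw [hx]; rfl⟩

theorem exists_conj_eq_diagonal [NeZero (2 : K)] {g : GL (Fin 2) K} (hg : g.val.discr ≠ 0)
    (hsq : IsSquare g.val.discr) :
    ∃ (x : GL (Fin 2) K) (a b : K), a ≠ b ∧ (x * g * x⁻¹).val = !![a, 0; 0, b] := by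
  have h2 : (2 : K) ≠ 0 := NeZero.ne 2
  obtain ⟨s, hs⟩ := hsq
  have hs0 : s ≠ 0 := by
    rintro rfl
    exact hg (by rw [hs, mul_zero])
  rw [discr_fin_two] at hs
  obtain ⟨x, hx⟩ := exists_conj_eq_of_trace_eq_of_det_eq hg
    (A := !![(g.val.trace + s) / 2, 0; 0, (g.val.trace - s) / 2])
    (by rw [trace_fin_two_of]; grind) (by rw [det_fin_two_of]; grind)
  exact ⟨x, _, _, by grind, hx⟩

theorem exists_conj_eq_nonsplit [NeZero (2 : K)] {g : GL (Fin 2) K} (hg : g.val.discr ≠ 0)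
    {δ s : K} (hs : g.val.discr = δ * (s * s)) :
    ∃ (x : GL (Fin 2) K) (a b : K), b ≠ 0 ∧ (x * g * x⁻¹).val = !![a, δ * b; b, a] := by
  have h2 : (2 : K) ≠ 0 := NeZero.ne 2
  have hs0 : s ≠ 0 := by
    rintro rfl
    exact hg (by rw [hs, mul_zero, mul_zero])
  rw [discr_fin_two] at hs
  obtain ⟨x, hx⟩ := exists_conj_eq_of_trace_eq_of_det_eq hg
    (A := !![g.val.trace / 2, δ * (s / 2); s / 2, g.val.trace / 2])
    (by rw [trace_fin_two_of]; grind) (by rw [det_fin_two_of]; grind)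
  exact ⟨x, _, _, div_ne_zero hs0 h2, hx⟩

end Matrices

section ProjectiveLine

open OnePoint MulAction

variable {K : Type*} [Field K] [DecidableEq K]

theorem smul_infty_eq_zero_iff {g : GL (Fin 2) K} :
    g • ∞ = ((0 : K) : OnePoint K) ↔ g.val 0 0 = 0 := by
  have hdet := g.det_ne_zero
  rw [det_fin_two] at hdet
  rw [smul_infty_eq_ite]
  split_ifs with h
  · have : g.val 0 0 ≠ 0 := by grind
    simp [this]
  · simp [h]

theorem smul_zero_eq_infty_iff {g : GL (Fin 2) K} :
    g • ((0 : K) : OnePoint K) = ∞ ↔ g.val 1 1 = 0 := by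
  simp [smul_some_eq_ite]

theorem smul_zero_eq_self_iff {g : GL (Fin 2) K} :
    g • ((0 : K) : OnePoint K) = (0 : K) ↔ g.val 0 1 = 0 := by
  have hdet := g.det_ne_zero
  rw [det_fin_two] at hdet
  rw [smul_some_eq_ite, mul_zero, mul_zero, zero_add, zero_add]
  split_ifs with h
  · have : g.val 0 1 ≠ 0 := by grind
    simp [this]
  · simp [h]

theorem exists_smul_eq_infty (P : OnePoint K) : ∃ x : GL (Fin 2) K, x • P = ∞ := by
  induction P using OnePoint.rec with
  | infty => exact ⟨1, one_smul _ _⟩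
  | coe c => exact ⟨.mkOfDetNeZero !![0, 1; 1, -c] (by simp), by
      simp [smul_some_eq_ite, GeneralLinearGroup.mkOfDetNeZero]⟩

theorem exists_smul_eq_infty_and_smul_eq_zero {P Q : OnePoint K} (hPQ : P ≠ Q) :
    ∃ x : GL (Fin 2) K, x • P = ∞ ∧ x • Q = (0 : K) := by
  obtain ⟨x, hx⟩ := exists_smul_eq_infty P
  obtain ⟨q, hq⟩ : ∃ q : K, q = x • Q :=
    OnePoint.ne_infty_iff_exists.1 fun h => hPQ (smul_left_cancel x (hx.trans h.symm))
  refine ⟨GeneralLinearGroup.upperRightHom (-q) * x, ?_, ?_⟩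
  · rw [mul_smul, hx, smul_infty_eq_self_iff]
    simp [GeneralLinearGroup.upperRightHom_apply]
  · rw [mul_smul, ← hq]
    simp [smul_some_eq_ite, GeneralLinearGroup.upperRightHom_apply]

theorem fixedBy_eq_of_diagonal {g : GL (Fin 2) K} {a b : K} (hab : a ≠ b)
    (hg : g.val = !![a, 0; 0, b]) : fixedBy (OnePoint K) g = {∞, ((0 : K) : OnePoint K)} := by
  have hb : b ≠ 0 := by
    rintro rfl
    exact g.det_ne_zero (by simp [hg])
  ext P
  induction P using OnePoint.rec with
  | infty => simp [smul_infty_eq_self_iff, hg]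
  | coe c =>
    have hfix : g • (c : OnePoint K) = c ↔ a * c = c * b := by
      simp [smul_some_eq_ite, hg, hb, div_eq_iff hb]
    have hc : a * c = c * b ↔ c = 0 := by grind
    simp [hfix, hc]

end ProjectiveLine

section EigenlineExchange

open MulAction OnePoint

theorem SwapsFixedPoints.conj {H X : Type*} [Group H] [MulAction H X] {h c : H}
    (hc : SwapsFixedPoints X h c) (x : H) :
    SwapsFixedPoints X (x * h * x⁻¹) (x * c * x⁻¹) := by
  rw [SwapsFixedPoints, ← smul_fixedBy]
  rintro _ ⟨y, hy, rfl⟩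
  rw [mul_smul, inv_smul_smul, mul_smul]
  exact ⟨Set.smul_mem_smul_set (hc y hy).1, (smul_left_cancel x).mt (hc y hy).2⟩

variable {K L : Type*} [Field K] [Field L]

/-- The matrix `k` anticommutes with the traceless part of `g`. When `g` has two distinct
eigenlines (possibly over a quadratic extension), this says that `k` exchanges them; the
formulation as a matrix identity makes sense over the base field. -/
def ExchangesEigenlines (k g : GL (Fin 2) K) : Prop :=
  k.val * g.val + g.val * k.val = g.val.trace • k.val

theorem exchangesEigenlines_conj_iff {k g : GL (Fin 2) K} (x : GL (Fin 2) K) :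
    ExchangesEigenlines (x * k * x⁻¹) (x * g * x⁻¹) ↔ ExchangesEigenlines k g := by
  have hmul : ∀ a b : GL (Fin 2) K,
      (x * a * x⁻¹).val * (x * b * x⁻¹).val = x.val * (a.val * b.val) * (x⁻¹).val := fun a b => by
    simp only [← Units.val_mul]
    group
  rw [ExchangesEigenlines, ExchangesEigenlines, hmul, hmul, ← add_mul, ← mul_add, Units.val_mul,
    Units.val_mul, trace_units_conj, Units.val_mul, Units.val_mul, ← Matrix.smul_mul,
    ← Matrix.mul_smul, Units.mul_left_inj, Units.mul_right_inj]

theorem generalLinearGroup_map_injective (f : K →+* L) :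
    Function.Injective (GeneralLinearGroup.map (n := Fin 2) f) :=
  Units.map_injective (Matrix.map_injective f.injective)

theorem exchangesEigenlines_map_iff (f : K →+* L) {k g : GL (Fin 2) K} :
    ExchangesEigenlines (GeneralLinearGroup.map f k) (GeneralLinearGroup.map f g) ↔
      ExchangesEigenlines k g := by
  have hinj : Function.Injective (f.mapMatrix : Matrix (Fin 2) (Fin 2) K → _) :=
    Matrix.map_injective f.injective
  have hval (x : GL (Fin 2) K) : (GeneralLinearGroup.map f x).val = f.mapMatrix x.val := rfl
  have hsmul : f.mapMatrix (g.val.trace • k.val) =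
      (f.mapMatrix g.val).trace • f.mapMatrix k.val := by
    rw [RingHom.mapMatrix_apply, RingHom.mapMatrix_apply, ← AddMonoidHom.map_trace]
    exact Matrix.map_smul' _ _ _ (map_mul f)
  rw [ExchangesEigenlines, ExchangesEigenlines, ← hinj.eq_iff, hsmul, map_add, map_mul, map_mul,
    hval, hval]

variable [DecidableEq K]

theorem commute_of_fixedBy_subset_of_diagonal {g k : GL (Fin 2) K} {a b : K} (hab : a ≠ b)
    (hg : g.val = !![a, 0; 0, b])
    (hk : fixedBy (OnePoint K) g ⊆ fixedBy (OnePoint K) k) : Commute k g := by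
  rw [fixedBy_eq_of_diagonal hab hg, Set.pair_subset_iff, mem_fixedBy, mem_fixedBy,
    smul_infty_eq_self_iff, smul_zero_eq_self_iff] at hk
  ext1
  rw [Units.val_mul, Units.val_mul, eta_fin_two k.val, hk.1, hk.2, hg, mul_fin_two, mul_fin_two]
  congrm !![?_, ?_; ?_, ?_] <;> ring

theorem exchangesEigenlines_of_swapsFixedPoints_of_diagonal {g k : GL (Fin 2) K} {a b : K}
    (hab : a ≠ b) (hg : g.val = !![a, 0; 0, b]) (hk : SwapsFixedPoints (OnePoint K) k g) :
    ExchangesEigenlines k g := by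
  rw [SwapsFixedPoints, fixedBy_eq_of_diagonal hab hg] at hk
  have h00 : k.val 0 0 = 0 :=
    smul_infty_eq_zero_iff.1 ((hk ∞ (by simp)).1.resolve_left (hk ∞ (by simp)).2)
  have h11 : k.val 1 1 = 0 :=
    smul_zero_eq_infty_iff.1 ((hk (0 : K) (by simp)).1.resolve_right (hk (0 : K) (by simp)).2)
  rw [ExchangesEigenlines, eta_fin_two k.val, h00, h11, hg, trace_fin_two_of, mul_fin_two,
    mul_fin_two]
  simp [mul_comm, add_comm, add_mul]

variable [NeZero (2 : K)] {g k : GL (Fin 2) K} (hg : g.val.discr ≠ 0) (hsq : IsSquare g.val.discr)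
include hg hsq

theorem ncard_fixedBy_eq_two : (fixedBy (OnePoint K) g).ncard = 2 := by
  obtain ⟨x, a, b, hab, hx⟩ := exists_conj_eq_diagonal hg hsq
  rw [← Set.ncard_smul_set x, smul_fixedBy, fixedBy_eq_of_diagonal hab hx,
    Set.ncard_pair (infty_ne_coe 0)]

theorem commute_of_fixedBy_subset
    (hk : fixedBy (OnePoint K) g ⊆ fixedBy (OnePoint K) k) : Commute k g := by
  obtain ⟨x, a, b, hab, hx⟩ := exists_conj_eq_diagonal hg hsq
  rw [← Commute.conj_iff x]
  refine commute_of_fixedBy_subset_of_diagonal hab hx ?_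
  rwa [← smul_fixedBy, ← smul_fixedBy, Set.smul_set_subset_smul_set_iff]

theorem exchangesEigenlines_of_swapsFixedPoints (hk : SwapsFixedPoints (OnePoint K) k g) :
    ExchangesEigenlines k g := by
  obtain ⟨x, a, b, hab, hx⟩ := exists_conj_eq_diagonal hg hsq
  rw [← exchangesEigenlines_conj_iff x]
  exact exchangesEigenlines_of_swapsFixedPoints_of_diagonal hab hx (hk.conj x)

end EigenlineExchange

section CoprimeOrder

open MulAction OnePoint

variable {F : Type*} [Field F]

-- The minimal polynomial of `A` divides the squarefree `X ^ m - 1`, hence is not `(X - a) ^ 2`.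
theorem discr_ne_zero_of_pow_eq_one [NeZero (2 : F)] {A : Matrix (Fin 2) (Fin 2) F} {m : ℕ}
    (hm : (m : F) ≠ 0) (hpow : A ^ m = 1) (hA : A ∉ Set.range (scalar (Fin 2))) :
    A.discr ≠ 0 := fun hdiscr => by
  have hsqf : Squarefree (minpoly F A) :=
    (Polynomial.X_pow_sub_one_separable_iff.2 hm).squarefree.squarefree_of_dvd
      (minpoly.dvd F A (by simp [hpow]))
  have hdvd : minpoly F A ∣ (Polynomial.X - Polynomial.C (A.trace / 2)) ^ 2 := by
    refine minpoly.dvd F A ?_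
    rw [map_pow, map_sub, Polynomial.aeval_X, Polynomial.aeval_C]
    exact sub_scalar_sq_eq_discr.trans (by rw [hdiscr, zero_div, map_zero])
  have hlin := minpoly.dvd_iff.1 ((hsqf.dvd_pow_iff_dvd two_ne_zero).1 hdvd)
  rw [map_sub, Polynomial.aeval_X, Polynomial.aeval_C, sub_eq_zero] at hlin
  exact hA ⟨_, hlin.symm⟩

theorem mk_eq_one_of_discr_eq_zero [NeZero (2 : F)] {G : Subgroup (GL (Fin 2) F)}
    (hG : (Nat.card G : F) ≠ 0) {g : GL (Fin 2) F} (hg : g ∈ G) (hdiscr : g.val.discr = 0) :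
    (g : GL (Fin 2) F ⧸ Subgroup.center (GL (Fin 2) F)) = 1 := by
  rw [QuotientGroup.eq_one_iff, GeneralLinearGroup.mem_center_iff_val_mem_range_scalar]
  have hpow : g ^ Nat.card G = 1 := congrArg Subtype.val (pow_card_eq_one' (x := (⟨g, hg⟩ : G)))
  refine of_not_not fun hscalar => discr_ne_zero_of_pow_eq_one hG ?_ hscalar hdiscr
  rw [← Units.val_pow_eq_pow_val, hpow, Units.val_one]

theorem isCyclic_of_ker_le {S T R : Type*} [Group S] [Group T] [Finite S] [CommRing R] [IsDomain R]
    {χ : S →* Rˣ} {π : S →* T} (hπ : Function.Surjective π) (hker : χ.ker ≤ π.ker) :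
    IsCyclic T :=
  have : IsCyclic (S ⧸ χ.ker) :=
    isCyclic_of_injective_ringHom ((Units.coeHom R).comp (QuotientGroup.kerLift χ))
      (Units.val_injective.comp (QuotientGroup.kerLift_injective χ))
  isCyclic_of_surjective _ (QuotientGroup.lift_surjective_of_surjective χ.ker π hπ hker)

/-- The ratio of the diagonal entries of an invertible upper triangular matrix, that is, of a
matrix whose Möbius transformation fixes `∞`. -/
noncomputable def diagonalRatio (K : Type*) [Field K] [DecidableEq K] :
    stabilizer (GL (Fin 2) K) (∞ : OnePoint K) →* Kˣ :=
  MonoidHom.toHomUnits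
    { toFun g := g.1.val 0 0 / g.1.val 1 1
      map_one' := by simp
      map_mul' g h := by
        have hg : g.1.val 1 0 = 0 := smul_infty_eq_self_iff.1 g.2
        have hh : h.1.val 1 0 = 0 := smul_infty_eq_self_iff.1 h.2
        simp only [Subgroup.coe_mul, Units.val_mul, mul_apply, Fin.sum_univ_two, hg, hh, mul_zero,
          zero_mul, add_zero, zero_add, mul_div_mul_comm] }

theorem discr_eq_zero_of_diagonalRatio_eq_one {K : Type*} [Field K] [DecidableEq K]
    {g : stabilizer (GL (Fin 2) K) (∞ : OnePoint K)} (hg : diagonalRatio K g = 1) :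
    g.1.val.discr = 0 := by
  have h10 : g.1.val 1 0 = 0 := smul_infty_eq_self_iff.1 g.2
  have hratio : g.1.val 0 0 / g.1.val 1 1 = 1 := congrArg Units.val hg
  rw [discr_fin_two, trace_fin_two, det_fin_two, h10, eq_of_div_eq_one hratio]
  ring

variable (E : Type*) [Field E] [Algebra F E]

theorem discr_map (g : GL (Fin 2) F) :
    (GeneralLinearGroup.map (algebraMap F E) g).val.discr = algebraMap F E g.val.discr := by
  simp only [discr_fin_two, trace_fin_two, det_fin_two, GeneralLinearGroup.map_apply, map_sub,
    map_mul, map_add, map_pow, map_ofNat]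

variable [DecidableEq E]

/-- The action of `PGL₂(F)` on the projective line over an extension field `E` of `F` by Möbius
transformations. -/
noncomputable instance projectiveLineAction :
    MulAction (GL (Fin 2) F ⧸ Subgroup.center (GL (Fin 2) F)) (OnePoint E) :=
  MulAction.compHom _ <| QuotientGroup.lift (Subgroup.center (GL (Fin 2) F))
    ((MulAction.toPermHom (GL (Fin 2) E) (OnePoint E)).comp
      (GeneralLinearGroup.map (algebraMap F E))) fun g hg => by
    obtain ⟨a, ha⟩ := GeneralLinearGroup.mem_center_iff_val_mem_range_scalar.1 hg
    have ha0 : a ≠ 0 := by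
      rintro rfl
      exact g.det_ne_zero (by simp [← ha])
    ext P
    induction P using OnePoint.rec with
    | infty => simp [smul_infty_eq_self_iff, ← ha]
    | coe c => simp [smul_some_eq_ite, ← ha, ha0]

theorem mk_smul (g : GL (Fin 2) F) (P : OnePoint E) :
    (g : GL (Fin 2) F ⧸ Subgroup.center (GL (Fin 2) F)) • P =
      GeneralLinearGroup.map (algebraMap F E) g • P :=
  rfl

variable {E} {G : Subgroup (GL (Fin 2) F)}

theorem isCyclic_stabilizer_map_mk' [NeZero (2 : F)] (hG : (Nat.card G : F) ≠ 0)
    (P : OnePoint E) :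
    IsCyclic (stabilizer (G.map (QuotientGroup.mk' (Subgroup.center (GL (Fin 2) F)))) P) := by
  have : Finite G := Nat.finite_of_card_ne_zero fun h => hG (by rw [h, Nat.cast_zero])
  obtain ⟨x, hx⟩ := exists_smul_eq_infty P
  let ι : G →* GL (Fin 2) E := (GeneralLinearGroup.map (algebraMap F E)).comp G.subtype
  let S : Subgroup G := (stabilizer (GL (Fin 2) E) P).comap ι
  let ψ : S →* stabilizer (GL (Fin 2) E) (∞ : OnePoint E) :=
    ((MulAut.conj x).toMonoidHom.comp (ι.comp S.subtype)).codRestrict _ fun s => by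
      change (x * ι s * x⁻¹) • ∞ = ∞
      rw [← hx, mul_smul, inv_smul_smul, mul_smul, s.2]
  let π : S →* stabilizer (G.map (QuotientGroup.mk' (Subgroup.center (GL (Fin 2) F)))) P :=
    (((QuotientGroup.mk' _).subgroupMap G).comp S.subtype).codRestrict _ fun s =>
      mem_stabilizer_iff.2 ((mk_smul E (s : GL (Fin 2) F) P).trans s.2)
  have hπ : Function.Surjective π := by
    rintro ⟨⟨_, g, hg, rfl⟩, hgP⟩
    exact ⟨⟨⟨g, hg⟩, hgP⟩, rfl⟩
  refine isCyclic_of_ker_le (χ := (diagonalRatio E).comp ψ) hπ fun s hs => ?_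
  have hdiscr : (s : GL (Fin 2) F).val.discr = 0 := by
    have h : (ψ s).1.val.discr = 0 :=
      discr_eq_zero_of_diagonalRatio_eq_one (MonoidHom.mem_ker.1 hs)
    change (x * GeneralLinearGroup.map (algebraMap F E) s * x⁻¹).val.discr = 0 at h
    rwa [← discr_eq_of_isConj (isConj_iff.2 ⟨x, rfl⟩), discr_map, map_eq_zero] at h
  refine MonoidHom.mem_ker.2 ?_
  ext1
  ext1
  exact mk_eq_one_of_discr_eq_zero hG s.1.2 hdiscr

variable [IsAlgClosed E] [NeZero (2 : E)]

theorem commute_of_fixedBy_mk_subset {g k : GL (Fin 2) F} (hg : g.val.discr ≠ 0)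
    (hk : fixedBy (OnePoint E) (g : GL (Fin 2) F ⧸ Subgroup.center (GL (Fin 2) F)) ⊆
      fixedBy (OnePoint E) (k : GL (Fin 2) F ⧸ Subgroup.center (GL (Fin 2) F))) :
    Commute k g :=
  .of_map (generalLinearGroup_map_injective (algebraMap F E)) <|
    commute_of_fixedBy_subset (by rwa [discr_map, map_ne_zero])
      (IsAlgClosed.exists_eq_mul_self _) hk

theorem exchangesEigenlines_of_swapsFixedPoints_mk {g k : GL (Fin 2) F}
    (hg : g.val.discr ≠ 0)
    (hk : SwapsFixedPoints (OnePoint E) (k : GL (Fin 2) F ⧸ Subgroup.center (GL (Fin 2) F)) g) :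
    ExchangesEigenlines k g :=
  (exchangesEigenlines_map_iff (algebraMap F E)).1 <|
    exchangesEigenlines_of_swapsFixedPoints (by rwa [discr_map, map_ne_zero])
      (IsAlgClosed.exists_eq_mul_self _) hk

theorem hasTwoFixedPoints_map_mk' [NeZero (2 : F)] (hG : (Nat.card G : F) ≠ 0) :
    HasTwoFixedPoints (G.map (QuotientGroup.mk' (Subgroup.center (GL (Fin 2) F))))
      (OnePoint E) := by
  rintro ⟨_, g, hg, rfl⟩ hne
  refine ncard_fixedBy_eq_two ?_ (IsAlgClosed.exists_eq_mul_self _)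
  rw [discr_map, map_ne_zero]
  exact fun h => hne (Subtype.ext (mk_eq_one_of_discr_eq_zero hG hg h))

theorem classification_of_natCast_card_ne_zero [NeZero (2 : F)] (hG : (Nat.card G : F) ≠ 0) :
    let H := G.map (QuotientGroup.mk' (Subgroup.center (GL (Fin 2) F)))
    G ≤ Subgroup.center (GL (Fin 2) F) ∨
    (IsCyclic H ∧ ∃ g ∈ G, g.val.discr ≠ 0 ∧ ∀ k ∈ G, Commute k g) ∨
    ((∃ a b : H, a ≠ b ∧ orderOf a = 2 ∧ orderOf b = 2 ∧ Subgroup.closure {a, b} = ⊤) ∧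
      ∃ g ∈ G, g.val.discr ≠ 0 ∧ (∀ k ∈ G, Commute k g ∨ ExchangesEigenlines k g) ∧
        ∃ k ∈ G, ExchangesEigenlines k g) ∨
    Nonempty (H ≃* alternatingGroup (Fin 4)) ∨ Nonempty (H ≃* Equiv.Perm (Fin 4)) ∨
      Nonempty (H ≃* alternatingGroup (Fin 5)) := by
  classical
  intro H
  have : NeZero (2 : AlgebraicClosure F) :=
    ⟨by rw [← map_ofNat (algebraMap F (AlgebraicClosure F)), map_ne_zero]; exact NeZero.ne 2⟩
  have hdiscr {g : GL (Fin 2) F} (hg : g ∈ G) (hne : (⟨g, g, hg, rfl⟩ : H) ≠ 1) :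
      g.val.discr ≠ 0 := fun h => hne (Subtype.ext (mk_eq_one_of_discr_eq_zero hG hg h))
  have : Finite G := Nat.finite_of_card_ne_zero fun h => hG (by rw [h, Nat.cast_zero])
  have : Finite H := .of_surjective _ ((QuotientGroup.mk' _).subgroupMap_surjective G)
  rcases subsingleton_or_nontrivial H with hsub | hnontriv
  · exact .inl fun g hg => (QuotientGroup.eq_one_iff g).1
      (congrArg Subtype.val (Subsingleton.elim (⟨g, g, hg, rfl⟩ : H) 1))
  rcases (hasTwoFixedPoints_map_mk' (E := AlgebraicClosure F) hG).classification
    (isCyclic_stabilizer_map_mk' hG) with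
    ⟨hcyc, ⟨_, g, hg, rfl⟩, hne, hfix⟩ |
      ⟨hdih, ⟨_, g, hg, rfl⟩, hne, hfix, ⟨_, k, hk, rfl⟩, hswap⟩ |
      hpoly
  · exact .inr <| .inl ⟨hcyc, g, hg, hdiscr hg hne, fun k hk =>
      commute_of_fixedBy_mk_subset (hdiscr hg hne) (hfix ⟨k, k, hk, rfl⟩)⟩
  · refine .inr <| .inr <| .inl ⟨hdih, g, hg, hdiscr hg hne, fun k hk => ?_, k, hk,
      exchangesEigenlines_of_swapsFixedPoints_mk (hdiscr hg hne) hswap⟩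
    exact (hfix ⟨k, k, hk, rfl⟩).imp (commute_of_fixedBy_mk_subset (hdiscr hg hne))
      (exchangesEigenlines_of_swapsFixedPoints_mk (hdiscr hg hne))
  · exact .inr <| .inr <| .inr hpoly

end CoprimeOrder

section Cartan

theorem isSquare_or_exists_eq_mul_sq {F : Type*} [Field F] [Finite F] {δ : F} (hδ : ¬IsSquare δ)
    (d : F) : IsSquare d ∨ ∃ s, d = δ * (s * s) := by
  classical
  have := Fintype.ofFinite F
  refine or_iff_not_imp_left.2 fun hd => ?_
  have hmul : IsSquare (δ * d) := by
    rw [← not_not (a := IsSquare _), ← quadraticChar_neg_one_iff_not_isSquare, map_mul,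
      quadraticChar_neg_one_iff_not_isSquare.2 hδ, quadraticChar_neg_one_iff_not_isSquare.2 hd]
    decide
  obtain ⟨t, ht⟩ := hmul
  have hδ0 : δ ≠ 0 := fun h => hδ (h ▸ IsSquare.zero)
  exact ⟨t / δ, by field_simp; rw [sq, ← ht, mul_comm]⟩

variable {ℓ : ℕ} {a b δ : ZMod ℓ} {g k : GL2 ℓ}
  {G : Subgroup (GL2 ℓ)}

theorem isDihedralSub_of_exists {H : Subgroup (PGL2 ℓ)}
    (h : ∃ a b : H, a ≠ b ∧ orderOf a = 2 ∧ orderOf b = 2 ∧ Subgroup.closure {a, b} = ⊤) :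
    IsDihedralSub H := by
  obtain ⟨a, b, hab, ha, hb, hclosure⟩ := h
  refine ⟨a, b, Subtype.coe_injective.ne hab, by rwa [Subgroup.orderOf_coe],
    by rwa [Subgroup.orderOf_coe], ?_⟩
  have hmap := congrArg (Subgroup.map H.subtype) hclosure
  rwa [MonoidHom.map_closure, Set.image_pair, ← MonoidHom.range_eq_map, H.range_subtype] at hmap

theorem isCyclic_projImage_of_le_center (hG : G ≤ Subgroup.center (GL2 ℓ)) :
    IsCyclic (projImage G) := by
  have : projImage G = ⊥ := (Subgroup.map_eq_bot_iff _).2 (by rwa [toPGL, QuotientGroup.ker_mk'])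
  rw [this]
  infer_instance

variable [Fact ℓ.Prime]

theorem inCsp_of_mem_center (hg : g ∈ Subgroup.center (GL2 ℓ)) : InCsp g := by
  obtain ⟨a, ha⟩ := GeneralLinearGroup.mem_center_iff_val_mem_range_scalar.1 hg
  change g.val 0 1 = 0 ∧ g.val 1 0 = 0
  simp [← ha]

theorem not_inCsp_of_isAnti (hk : IsAnti k) : ¬InCsp k := fun hdiag =>
  k.det_ne_zero <| by
    have h00 : k.val 0 0 = 0 := hk.1
    have h01 : k.val 0 1 = 0 := hdiag.1
    rw [det_fin_two, h00, h01, zero_mul, zero_mul, sub_zero]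

theorem not_inCns_of_inNnsAnti [NeZero (2 : ZMod ℓ)] (hk : InNnsAnti δ k) : ¬InCns δ k := by
  intro hcns
  have h2 : (2 : ZMod ℓ) ≠ 0 := NeZero.ne 2
  have h00 : k.val 1 1 = k.val 0 0 := hcns.1
  have h00' : k.val 1 1 = -k.val 0 0 := hk.1
  have h01 : k.val 0 1 = δ * k.val 1 0 := hcns.2
  have h01' : k.val 0 1 = -(δ * k.val 1 0) := hk.2
  refine k.det_ne_zero ?_
  rw [det_fin_two]
  grind

theorem inCsp_of_commute (hab : a ≠ b) (hg : g.val = !![a, 0; 0, b]) (hk : Commute k g) :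
    InCsp k := by
  have hmul : k.val * g.val = g.val * k.val := congrArg Units.val hk
  rw [eta_fin_two k.val, hg, mul_fin_two, mul_fin_two] at hmul
  have h01 : k.val 0 0 * 0 + k.val 0 1 * b = a * k.val 0 1 + 0 * k.val 1 1 := congrFun₂ hmul 0 1
  have h10 : k.val 1 0 * a + k.val 1 1 * 0 = 0 * k.val 0 0 + b * k.val 1 0 := congrFun₂ hmul 1 0
  constructor
  · change k.val 0 1 = 0
    grind
  · change k.val 1 0 = 0
    grind

theorem isAnti_of_exchangesEigenlines (hab : a ≠ b) (hg : g.val = !![a, 0; 0, b])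
    (hk : ExchangesEigenlines k g) : IsAnti k := by
  rw [ExchangesEigenlines, eta_fin_two k.val, hg, mul_fin_two, mul_fin_two, trace_fin_two_of] at hk
  have h00 : k.val 0 0 * a + k.val 0 1 * 0 + (a * k.val 0 0 + 0 * k.val 1 0) =
    (a + b) * k.val 0 0 := congrFun₂ hk 0 0
  have h11 : k.val 1 0 * 0 + k.val 1 1 * b + (0 * k.val 0 1 + b * k.val 1 1) =
    (a + b) * k.val 1 1 := congrFun₂ hk 1 1
  constructor
  · change k.val 0 0 = 0
    grind
  · change k.val 1 1 = 0
    grind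

theorem inCns_of_commute (hb : b ≠ 0) (hg : g.val = !![a, δ * b; b, a]) (hk : Commute k g) :
    InCns δ k := by
  have hmul : k.val * g.val = g.val * k.val := congrArg Units.val hk
  rw [eta_fin_two k.val, hg, mul_fin_two, mul_fin_two] at hmul
  have h00 : k.val 0 0 * a + k.val 0 1 * b = a * k.val 0 0 + δ * b * k.val 1 0 :=
    congrFun₂ hmul 0 0
  have h10 : k.val 1 0 * a + k.val 1 1 * b = b * k.val 0 0 + a * k.val 1 0 := congrFun₂ hmul 1 0
  constructor
  · change k.val 1 1 = k.val 0 0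
    grind
  · change k.val 0 1 = δ * k.val 1 0
    grind

theorem inNnsAnti_of_exchangesEigenlines (hb : b ≠ 0) (hg : g.val = !![a, δ * b; b, a])
    (hk : ExchangesEigenlines k g) : InNnsAnti δ k := by
  rw [ExchangesEigenlines, eta_fin_two k.val, hg, mul_fin_two, mul_fin_two, trace_fin_two_of] at hk
  have h00 : k.val 0 0 * a + k.val 0 1 * b + (a * k.val 0 0 + δ * b * k.val 1 0) =
    (a + a) * k.val 0 0 := congrFun₂ hk 0 0
  have h10 : k.val 1 0 * a + k.val 1 1 * b + (b * k.val 0 0 + a * k.val 1 0) =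
    (a + a) * k.val 1 0 := congrFun₂ hk 1 0
  constructor
  · change k.val 1 1 = -k.val 0 0
    grind
  · change k.val 0 1 = -(δ * k.val 1 0)
    grind

variable [NeZero (2 : ZMod ℓ)]

theorem exists_conj_inCsp_or_inCns (hδ : ¬IsSquare δ) (hg : g.val.discr ≠ 0)
    (hG : ∀ k ∈ G, Commute k g) :
    (∃ x : GL2 ℓ, ∀ k ∈ G, InCsp (x * k * x⁻¹)) ∨
      ∃ x : GL2 ℓ, ∀ k ∈ G, InCns δ (x * k * x⁻¹) := by
  rcases isSquare_or_exists_eq_mul_sq hδ g.val.discr with hsq | ⟨s, hs⟩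
  · obtain ⟨x, a, b, hab, hx⟩ := exists_conj_eq_diagonal hg hsq
    exact .inl ⟨x, fun k hk => inCsp_of_commute hab hx ((Commute.conj_iff x).2 (hG k hk))⟩
  · obtain ⟨x, a, b, hb, hx⟩ := exists_conj_eq_nonsplit hg hs
    exact .inr ⟨x, fun k hk => inCns_of_commute hb hx ((Commute.conj_iff x).2 (hG k hk))⟩

theorem exists_conj_inNsp_or_inNns (hδ : ¬IsSquare δ) (hg : g.val.discr ≠ 0)
    (hG : ∀ k ∈ G, Commute k g ∨ ExchangesEigenlines k g)
    (hswap : ∃ k ∈ G, ExchangesEigenlines k g) :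
    (∃ x : GL2 ℓ, (∀ k ∈ G, InNsp (x * k * x⁻¹)) ∧ ¬∀ k ∈ G, InCsp (x * k * x⁻¹)) ∨
      ∃ x : GL2 ℓ, (∀ k ∈ G, InNns δ (x * k * x⁻¹)) ∧ ¬∀ k ∈ G, InCns δ (x * k * x⁻¹) := by
  obtain ⟨c, hc, hcg⟩ := hswap
  rcases isSquare_or_exists_eq_mul_sq hδ g.val.discr with hsq | ⟨s, hs⟩
  · obtain ⟨x, a, b, hab, hx⟩ := exists_conj_eq_diagonal hg hsq
    have hanti {k} (hk : ExchangesEigenlines k g) : IsAnti (x * k * x⁻¹) :=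
      isAnti_of_exchangesEigenlines hab hx ((exchangesEigenlines_conj_iff x).2 hk)
    exact .inl ⟨x, fun k hk => (hG k hk).imp
      (fun h => inCsp_of_commute hab hx ((Commute.conj_iff x).2 h)) hanti,
      fun h => not_inCsp_of_isAnti (hanti hcg) (h c hc)⟩
  · obtain ⟨x, a, b, hb, hx⟩ := exists_conj_eq_nonsplit hg hs
    have hanti {k} (hk : ExchangesEigenlines k g) : InNnsAnti δ (x * k * x⁻¹) :=
      inNnsAnti_of_exchangesEigenlines hb hx ((exchangesEigenlines_conj_iff x).2 hk)
    exact .inr ⟨x, fun k hk => (hG k hk).imp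
      (fun h => inCns_of_commute hb hx ((Commute.conj_iff x).2 h)) hanti,
      fun h => not_inCns_of_inNnsAnti (hanti hcg) (h c hc)⟩

theorem classification_of_not_dvd_card (hδ : ¬IsSquare δ) (hG : ¬ℓ ∣ Nat.card G) :
    (IsCyclic (projImage G) ∧
      ((∃ x : GL2 ℓ, ∀ g ∈ G, InCsp (x * g * x⁻¹)) ∨
        ∃ x : GL2 ℓ, ∀ g ∈ G, InCns δ (x * g * x⁻¹))) ∨
    (IsDihedralSub (projImage G) ∧
      ((∃ x : GL2 ℓ, (∀ g ∈ G, InNsp (x * g * x⁻¹)) ∧ ¬∀ g ∈ G, InCsp (x * g * x⁻¹)) ∨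
        ∃ x : GL2 ℓ, (∀ g ∈ G, InNns δ (x * g * x⁻¹)) ∧ ¬∀ g ∈ G, InCns δ (x * g * x⁻¹))) ∨
    (IsA4 (projImage G) ∨ IsS4 (projImage G) ∨ IsA5 (projImage G)) := by
  rcases classification_of_natCast_card_ne_zero
    (mt (ZMod.natCast_eq_zero_iff _ ℓ).1 hG) with
    hcenter | ⟨hcyc, g, -, hg, hcomm⟩ | ⟨hdih, g, -, hg, hcomm, hswap⟩ | hpoly
  · exact .inl ⟨isCyclic_projImage_of_le_center hcenter, .inl ⟨1, fun g hg => by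
      simpa using inCsp_of_mem_center (hcenter hg)⟩⟩
  · exact .inl ⟨hcyc, exists_conj_inCsp_or_inCns hδ hg hcomm⟩
  · exact .inr <| .inl ⟨isDihedralSub_of_exists hdih, exists_conj_inNsp_or_inNns hδ hg hcomm hswap⟩
  · exact .inr <| .inr hpoly

end Cartan

section Unipotents

open OnePoint MulAction GeneralLinearGroup SpecialLinearGroup

section Field

variable {n F : Type*} [Fintype n] [DecidableEq n] [Field F]

theorem det_eq_one_of_pow_char_eq_one {p : ℕ} [Fact p.Prime] [CharP F p] {A : Matrix n n F}
    (hA : A ^ p = 1) : A.det = 1 :=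
  frobenius_inj F p <| by rw [frobenius_def, frobenius_def, ← det_pow, hA, det_one, one_pow]

theorem trace_eq_card_of_pow_char_eq_one {p : ℕ} [Fact p.Prime] [CharP F p] {A : Matrix n n F}
    (hA : A ^ p = 1) : A.trace = Fintype.card n := by
  cases isEmpty_or_nonempty n
  · simp [trace]
  have hnil : IsNilpotent (A - 1) :=
    ⟨p, by rw [sub_pow_char_of_commute p (Commute.one_right A), hA, one_pow, sub_self]⟩
  have htr : (A - 1).trace = 0 := (isNilpotent_trace_of_isNilpotent hnil).eq_zero
  rwa [trace_sub, trace_one, sub_eq_zero] at htr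

theorem isParabolic_of_trace_eq_two {A : Matrix (Fin 2) (Fin 2) F} (hA : A ≠ 1)
    (htr : A.trace = 2) (hdet : A.det = 1) : A.IsParabolic := by
  refine ⟨?_, by rw [discr_fin_two, htr, hdet]; ring⟩
  rintro ⟨a, rfl⟩
  rw [scalar_apply, diagonal_fin_two, trace_fin_two_of] at htr
  rw [scalar_apply, diagonal_fin_two, det_fin_two_of] at hdet
  have ha : a = 1 := sub_eq_zero.1 <| pow_eq_zero_iff two_ne_zero |>.1 (by grind : (a - 1) ^ 2 = 0)
  exact hA (by rw [ha, map_one])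

theorem exists_toGL_transvection_eq {g : GL (Fin 2) F} {i j : Fin 2} (hij : i ≠ j)
    (hg : g.val j i = 0) (htr : g.val.trace = 2) (hdet : g.val.det = 1) :
    ∃ c, toGL (SpecialLinearGroup.transvection hij c) = g := by
  rw [trace_fin_two] at htr
  rw [det_fin_two] at hdet
  have h00 : g.val 0 0 = 1 := by fin_cases i <;> fin_cases j <;> grind
  have h11 : g.val 1 1 = 1 := by grind
  refine ⟨g.val i j, Units.ext <| Matrix.ext fun k l => ?_⟩
  change (1 + Matrix.single i j (g.val i j)) k l = g.val k l
  fin_cases i <;> fin_cases j <;> fin_cases k <;> fin_cases l <;> simp_all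

end Field

variable {p : ℕ} [Fact p.Prime]

theorem transvection_mem_of_transvection_mem {n : Type*} [Fintype n] [DecidableEq n]
    {Γ : Subgroup (SpecialLinearGroup n (ZMod p))} {i j : n} {hij : i ≠ j} {c : ZMod p}
    (hc : c ≠ 0) (h : SpecialLinearGroup.transvection hij c ∈ Γ) (d : ZMod p) :
    SpecialLinearGroup.transvection hij d ∈ Γ := by
  have hmul (m : ℕ) : SpecialLinearGroup.transvection hij (m * c) ∈ Γ := by
    induction m with
    | zero => simp only [Nat.cast_zero, zero_mul, transvection_coeff_zero, one_mem]
    | succ m ih =>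
      rw [Nat.cast_succ, add_one_mul, transvection_add]
      exact mul_mem ih h
  simpa only [ZMod.natCast_zmod_val, div_mul_cancel₀ d hc] using hmul (d / c).val

theorem eq_top_of_transvection_mem {Γ : Subgroup (SpecialLinearGroup (Fin 2) (ZMod p))}
    (h : ∀ (i j : Fin 2) (hij : i ≠ j), ∃ c ≠ 0, SpecialLinearGroup.transvection hij c ∈ Γ) :
    Γ = ⊤ :=
  eq_top_iff.2 fun A _ => SL2.transvection_induction (· ∈ Γ)
    (fun i j hij d =>
      let ⟨_, hc, hmem⟩ := h i j hij
      transvection_mem_of_transvection_mem hc hmem d) (fun _ _ => mul_mem) A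

variable {u : GL2 p} {G : Subgroup (GL2 p)}

theorem ne_one_of_orderOf_eq (hu : orderOf u = p) : u ≠ 1 :=
  mt orderOf_eq_one_iff.2 (hu.trans_ne (Fact.out : p.Prime).ne_one)

theorem trace_eq_two_and_det_eq_one_of_orderOf_eq (hu : orderOf u = p) :
    u.val.trace = 2 ∧ u.val.det = 1 := by
  have hpow : u.val ^ p = 1 := congrArg Units.val (orderOf_dvd_iff_pow_eq_one.1 hu.dvd)
  exact ⟨trace_eq_card_of_pow_char_eq_one hpow, det_eq_one_of_pow_char_eq_one hpow⟩

theorem isParabolic_of_orderOf_eq (hu : orderOf u = p) : u.IsParabolic := by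
  obtain ⟨htr, hdet⟩ := trace_eq_two_and_det_eq_one_of_orderOf_eq hu
  exact isParabolic_of_trace_eq_two (fun h => ne_one_of_orderOf_eq hu (Units.ext h)) htr hdet

theorem exists_toGL_transvection_eq_conj (x : GL2 p) {i j : Fin 2} (hij : i ≠ j)
    (hu : orderOf u = p) (hx : (x * u * x⁻¹).val j i = 0) :
    ∃ c ≠ 0, toGL (SpecialLinearGroup.transvection hij c) = x * u * x⁻¹ := by
  have hconj : orderOf (x * u * x⁻¹) = p := by
    rwa [← (SemiconjBy.conj_mk x u).orderOf_eq x]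
  obtain ⟨htr, hdet⟩ := trace_eq_two_and_det_eq_one_of_orderOf_eq hconj
  obtain ⟨c, hc⟩ := exists_toGL_transvection_eq hij hx htr hdet
  refine ⟨c, ?_, hc⟩
  rintro rfl
  exact ne_one_of_orderOf_eq hconj (by rw [← hc, transvection_coeff_zero, map_one])

theorem mem_of_det_eq_one_of_toGL_transvection_mem {x : GL2 p}
    (h : ∀ (i j : Fin 2) (hij : i ≠ j), ∃ c ≠ 0, ∃ u ∈ G,
      toGL (SpecialLinearGroup.transvection hij c) = x * u * x⁻¹)
    {g : GL2 p} (hg : g.val.det = 1) : g ∈ G := by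
  have htop : (G.map (MulAut.conj x).toMonoidHom).comap toGL = ⊤ :=
    eq_top_of_transvection_mem fun i j hij =>
      let ⟨c, hc, u, hu, hcu⟩ := h i j hij
      ⟨c, hc, u, hu, hcu.symm⟩
  have hdet : (x * g * x⁻¹).val.det = 1 := by
    rw [Units.val_mul, Units.val_mul, det_units_conj, hg]
  obtain ⟨k, hk, hkg⟩ := htop.ge (Subgroup.mem_top ⟨_, hdet⟩)
  have : x * k * x⁻¹ = x * g * x⁻¹ := hkg.trans (Units.ext rfl)
  rwa [← mul_left_cancel (mul_right_cancel this)]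

theorem mem_of_det_eq_one_of_fixed_ne {v : GL2 p} (hu : orderOf u = p) (hv : orderOf v = p)
    (huG : u ∈ G) (hvG : v ∈ G) {P Q : OnePoint (ZMod p)} (hP : u • P = P) (hQ : v • Q = Q)
    (hPQ : P ≠ Q) {g : GL2 p} (hg : g.val.det = 1) : g ∈ G := by
  obtain ⟨x, hxP, hxQ⟩ := exists_smul_eq_infty_and_smul_eq_zero hPQ
  have hlower : (x * u * x⁻¹).val 1 0 = 0 := smul_infty_eq_self_iff.1 <| by
    rw [← hxP, mul_smul, mul_smul, inv_smul_smul, hP]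
  have hupper : (x * v * x⁻¹).val 0 1 = 0 := smul_zero_eq_self_iff.1 <| by
    rw [← hxQ, mul_smul, mul_smul, inv_smul_smul, hQ]
  refine mem_of_det_eq_one_of_toGL_transvection_mem (x := x) (fun i j hij => ?_) hg
  obtain ⟨rfl, rfl⟩ | ⟨rfl, rfl⟩ : i = 0 ∧ j = 1 ∨ i = 1 ∧ j = 0 := by omega
  · obtain ⟨c, hc, hcu⟩ := exists_toGL_transvection_eq_conj x hij hu hlower
    exact ⟨c, hc, u, huG, hcu⟩
  · obtain ⟨c, hc, hcv⟩ := exists_toGL_transvection_eq_conj x hij hv hupper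
    exact ⟨c, hc, v, hvG, hcv⟩

theorem classification_of_dvd_card [NeZero (2 : ZMod p)] (hG : p ∣ Nat.card G) :
    (∃ x : GL2 p, ∀ g ∈ G, IsUpperTri (x * g * x⁻¹)) ∨
      ∀ g : GL2 p, (mat g).det = 1 → g ∈ G := by
  obtain ⟨⟨u, huG⟩, hu⟩ := exists_prime_orderOf_dvd_card' p hG
  rw [Subgroup.orderOf_mk] at hu
  have hfix : u • u.parabolicFixedPoint = u.parabolicFixedPoint :=
    (isParabolic_of_orderOf_eq hu).smul_eq_self_iff.2 rfl
  by_cases hGfix : ∀ g ∈ G, g • u.parabolicFixedPoint = u.parabolicFixedPoint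
  · obtain ⟨x, hx⟩ := exists_smul_eq_infty u.parabolicFixedPoint
    refine .inl ⟨x, fun g hg => smul_infty_eq_self_iff.1 ?_⟩
    rw [← hx, mul_smul, mul_smul, inv_smul_smul, hGfix g hg]
  · push Not at hGfix
    obtain ⟨g, hg, hne⟩ := hGfix
    refine .inr fun k => mem_of_det_eq_one_of_fixed_ne hu (v := g * u * g⁻¹) ?_ huG
      (mul_mem (mul_mem hg huG) (inv_mem hg)) hfix (Q := g • u.parabolicFixedPoint) ?_ hne.symm
    · rwa [← (SemiconjBy.conj_mk g u).orderOf_eq g]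
    · rw [mul_smul, mul_smul, inv_smul_smul, hfix]

end Unipotents

end Dickson

/-- Dickson's classification of subgroups of `GL₂(F_ℓ)`. -/
theorem dickson_classification
    {ℓ : ℕ} [Fact ℓ.Prime] (hℓ : ℓ ≠ 2)
    (δ : ZMod ℓ) (hδ : ¬ IsSquare δ) (G : Subgroup (GL2 ℓ)) :
    ((ℓ ∣ Nat.card G) →
      (∃ x : GL2 ℓ, ∀ g ∈ G, IsUpperTri (x * g * x⁻¹)) ∨
        (∀ g : GL2 ℓ, (mat g).det = 1 → g ∈ G)) ∧
    (¬ (ℓ ∣ Nat.card G) →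
      (IsCyclic ↥(projImage G) ∧
        ((∃ x : GL2 ℓ, ∀ g ∈ G, InCsp (x * g * x⁻¹)) ∨
         (∃ x : GL2 ℓ, ∀ g ∈ G, InCns δ (x * g * x⁻¹)))) ∨
      (IsDihedralSub (projImage G) ∧
        ((∃ x : GL2 ℓ, (∀ g ∈ G, InNsp (x * g * x⁻¹)) ∧ ¬ (∀ g ∈ G, InCsp (x * g * x⁻¹))) ∨
         (∃ x : GL2 ℓ, (∀ g ∈ G, InNns δ (x * g * x⁻¹)) ∧
            ¬ (∀ g ∈ G, InCns δ (x * g * x⁻¹))))) ∨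
      (IsA4 (projImage G) ∨ IsS4 (projImage G) ∨ IsA5 (projImage G))) := by
  have : NeZero (2 : ZMod ℓ) := ⟨Ring.two_ne_zero (by rwa [ZMod.ringChar_zmod_n])⟩
  exact ⟨Dickson.classification_of_dvd_card, Dickson.classification_of_not_dvd_card hδ⟩
end

section
/- Let ℓ > 5 be a prime. Any two subgroups of PGL₂(F_ℓ) isomorphic to A₄ are conjugate in PGL₂(F_ℓ); likewise any two subgroups isomorphic to S₄ are conjugate, and any two subgroups isomorphic to A₅ are conjugate. -/
open Matrix

/-!
Each of `A₄`, `S₄`, `A₅` is generated by an element `a` of order `2` and an element `b` of order `3`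
whose product has order `n = 3, 4, 5`. Inside `PGL₂` such a pair lifts to matrices `X`, `Y` with
`tr X = 0` and `tr Y = det Y = tr XY = 1`, so that only `d = det X` is free, and `(ab)ⁿ = 1` becomes
`d = 1`, `2d = 1` and `d² - 3d + 1 = 0` respectively. When `XY - YX` is invertible, `1, X, Y, XY`
is a basis of the matrix algebra whose multiplication table depends only on the traces and
determinants of `X`, `Y`, `XY`; by Skolem–Noether these therefore determine the pair up to
conjugacy. For `A₅` an outer automorphism sending `ab` to `(ab)²` exchanges the two values of `d`.
-/

open MatrixGroups Matrix.ProjGenLinGroup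

section TwoByTwo

section CommRing

variable {R : Type*} [CommRing R]

lemma mul_self_eq_trace_smul_sub (A : Matrix (Fin 2) (Fin 2) R) :
    A * A = A.trace • A - A.det • 1 := by
  nontriviality R
  have hA := A.aeval_self_charpoly
  simp only [charpoly_fin_two, map_add, map_sub, map_mul, Polynomial.aeval_X,
    Polynomial.aeval_C, Algebra.algebraMap_eq_smul_one, pow_two] at hA
  rw [smul_mul_assoc, one_mul, sub_add, sub_eq_zero] at hA
  exact hA

lemma mul_swap_eq (A B : Matrix (Fin 2) (Fin 2) R) :
    B * A = A.trace • B + B.trace • A + ((A * B).trace - A.trace * B.trace) • 1 - A * B := by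
  ext i j
  fin_cases i <;> fin_cases j <;>
    simp [mul_apply, trace_fin_two] <;> ring

lemma det_commutator (A B : Matrix (Fin 2) (Fin 2) R) :
    (A * B - B * A).det = 4 * A.det * B.det - A.trace ^ 2 * B.det - B.trace ^ 2 * A.det
      - (A * B).trace ^ 2 + A.trace * B.trace * (A * B).trace := by
  simp only [det_fin_two, trace_fin_two, Matrix.sub_apply, mul_apply, Fin.sum_univ_two]
  ring

-- By `mul_self_eq_trace_smul_sub` and `mul_swap_eq`, the multiplication table of the basis
-- `1, A, B, A * B` is determined by the traces and determinants.
lemma map_mul_of_trace_eq {A B : Matrix (Fin 2) (Fin 2) R}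
    {b : Module.Basis (Fin 4) R (Matrix (Fin 2) (Fin 2) R)}
    (hb : ⇑b = ![1, A, B, A * B])
    {φ : Matrix (Fin 2) (Fin 2) R →ₗ[R] Matrix (Fin 2) (Fin 2) R}
    (φ_one : φ 1 = 1) (φ_AB : φ (A * B) = φ A * φ B)
    (htrA : (φ A).trace = A.trace) (hdetA : (φ A).det = A.det)
    (htrB : (φ B).trace = B.trace) (hdetB : (φ B).det = B.det)
    (htrAB : (φ A * φ B).trace = (A * B).trace) (M N : Matrix (Fin 2) (Fin 2) R) :
    φ (M * N) = φ M * φ N := by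
  have φ_A_mul : ∀ N, φ (A * N) = φ A * φ N := by
    refine fun N ↦ LinearMap.congr_fun (f := φ ∘ₗ LinearMap.mulLeft R A)
      (g := LinearMap.mulLeft R (φ A) ∘ₗ φ) (b.ext fun i ↦ ?_) N
    fin_cases i <;>
      simp [hb, φ_one, φ_AB, ← mul_assoc, mul_self_eq_trace_smul_sub, sub_mul, htrA, hdetA]
  have φ_BB : φ (B * B) = φ B * φ B := by
    simp [mul_self_eq_trace_smul_sub, φ_one, htrB, hdetB]
  have φ_BA : φ (B * A) = φ B * φ A := by
    simp [mul_swap_eq A, mul_swap_eq (φ A), φ_one, φ_AB, htrA, htrB, htrAB]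
  have φ_BAB : φ (B * (A * B)) = φ B * (φ A * φ B) := by
    simp only [← mul_assoc, mul_swap_eq A, mul_swap_eq (φ A), add_mul, sub_mul, smul_mul_assoc,
      one_mul, map_add, map_sub, map_smul, φ_AB, φ_BB, htrA, htrB, htrAB]
    rw [mul_assoc, φ_A_mul, φ_BB, mul_assoc]
  have φ_B_mul : ∀ N, φ (B * N) = φ B * φ N := by
    refine fun N ↦ LinearMap.congr_fun (f := φ ∘ₗ LinearMap.mulLeft R B)
      (g := LinearMap.mulLeft R (φ B) ∘ₗ φ) (b.ext fun i ↦ ?_) N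
    fin_cases i <;> simp [hb, φ_one, φ_AB, φ_BA, φ_BB, φ_BAB]
  refine LinearMap.congr_fun (f := φ ∘ₗ LinearMap.mulRight R N)
    (g := LinearMap.mulRight R (φ N) ∘ₗ φ) (b.ext fun i ↦ ?_) M
  fin_cases i <;> simp [hb, φ_one, φ_AB, mul_assoc, φ_A_mul, φ_B_mul]

end CommRing

variable {F : Type*} [Field F] {A B : Matrix (Fin 2) (Fin 2) F}

lemma eq_zero_of_smul_one_add_smul_eq_zero {M : Type*} [Ring M] [Algebra F M] {A B : M}
    (h : ¬ Commute A B) {r s : F} (hrs : r • (1 : M) + s • A = 0) : r = 0 ∧ s = 0 := by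
  have : Nontrivial M := ⟨_, _, h⟩
  have hs : s • (A * B - B * A) = 0 := by
    have := congrArg (fun N ↦ N * B - B * N) hrs
    simpa [add_mul, mul_add, smul_sub] using this
  obtain rfl := (smul_eq_zero.1 hs).resolve_right (sub_ne_zero.2 h)
  simpa using hrs

lemma linearIndependent_of_det_commutator_ne_zero (h : (A * B - B * A).det ≠ 0) :
    LinearIndependent F ![1, A, B, A * B] := by
  have hAB : ¬ Commute A B := fun hc ↦ h (by rw [hc.eq, sub_self, det_zero])
  rw [Fintype.linearIndependent_iff]
  intro c hc
  replace hc : (c 0 • 1 + c 1 • A) + (c 2 • 1 + c 3 • A) * B = 0 := by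
    simpa [Fin.sum_univ_four, add_mul, add_assoc] using hc
  have hK : (c 2 • 1 + c 3 • A) * (A * B - B * A) = 0 := by
    have h1 := congrArg (fun M ↦ A * M - M * A) hc
    simp only [mul_add, add_mul, mul_sub, smul_mul_assoc, mul_smul_comm, one_mul, mul_one,
      mul_zero, zero_mul, mul_assoc] at h1 ⊢
    rw [← sub_zero (0 : Matrix _ _ F), ← h1]
    abel
  have h23 : c 2 • 1 + c 3 • A = 0 := by
    have hunit : IsUnit (A * B - B * A) := (isUnit_iff_isUnit_det _).2 h.isUnit
    exact hunit.mul_left_eq_zero.1 hK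
  rw [h23, zero_mul, add_zero] at hc
  obtain ⟨h2, h3⟩ := eq_zero_of_smul_one_add_smul_eq_zero hAB h23
  obtain ⟨h0, h1⟩ := eq_zero_of_smul_one_add_smul_eq_zero hAB hc
  intro i
  fin_cases i <;> assumption

lemma exists_basis_of_det_commutator_ne_zero (h : (A * B - B * A).det ≠ 0) :
    ∃ b : Module.Basis (Fin 4) F (Matrix (Fin 2) (Fin 2) F), ⇑b = ![1, A, B, A * B] :=
  ⟨basisOfLinearIndependentOfCardEqFinrank (linearIndependent_of_det_commutator_ne_zero h)
    (by simp [Module.finrank_matrix]), by simp⟩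

lemma exists_algEquiv_of_trace_eq {A' B' : Matrix (Fin 2) (Fin 2) F}
    (htrA : A'.trace = A.trace) (hdetA : A'.det = A.det) (htrB : B'.trace = B.trace)
    (hdetB : B'.det = B.det) (htrAB : (A' * B').trace = (A * B).trace)
    (h : (A * B - B * A).det ≠ 0) :
    ∃ φ : Matrix (Fin 2) (Fin 2) F ≃ₐ[F] Matrix (Fin 2) (Fin 2) F, φ A = A' ∧ φ B = B' := by
  have h' : (A' * B' - B' * A').det ≠ 0 := by
    rwa [det_commutator, htrA, hdetA, htrB, hdetB, htrAB, ← det_commutator]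
  obtain ⟨b, hb⟩ := exists_basis_of_det_commutator_ne_zero h
  obtain ⟨b', hb'⟩ := exists_basis_of_det_commutator_ne_zero h'
  let φ := b.equiv b' (Equiv.refl _)
  have hφ i : φ (![1, A, B, A * B] i) = ![1, A', B', A' * B'] i := by
    simpa [φ, hb, hb'] using b.equiv_apply i b' (Equiv.refl _)
  have φ_A : φ A = A' := hφ 1
  have φ_B : φ B = B' := hφ 2
  have φ_AB : φ (A * B) = φ A * φ B := by rw [φ_A, φ_B]; exact hφ 3
  subst φ_A φ_B
  exact ⟨.ofLinearEquiv φ (hφ 0) (map_mul_of_trace_eq hb (φ := φ.toLinearMap)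
    (hφ 0) φ_AB htrA hdetA htrB hdetB htrAB), rfl, rfl⟩

lemma exists_GL_mul_eq_of_algEquiv {n : Type*} [Fintype n] [DecidableEq n]
    (φ : Matrix n n F ≃ₐ[F] Matrix n n F) :
    ∃ P : GL n F, ∀ M : Matrix n n F, P * M = φ M * P := by
  obtain ⟨T, hT⟩ :=
    ((toLinAlgEquiv'.symm.trans φ).trans toLinAlgEquiv').eq_linearEquivConjAlgEquiv
  refine ⟨GeneralLinearGroup.toLin.symm (.ofLinearEquiv T), fun M ↦ toLinAlgEquiv'.injective ?_⟩
  have hP : toLinAlgEquiv' (GeneralLinearGroup.toLin.symm (.ofLinearEquiv T) : GL n F).1 = T :=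
    congrArg Units.val (GeneralLinearGroup.toLin.apply_symm_apply (.ofLinearEquiv T))
  have hM : toLinAlgEquiv' (φ M) = T.conjAlgEquiv F (toLinAlgEquiv' M) := by
    simpa using congr($hT (toLinAlgEquiv' M))
  rw [map_mul, map_mul, hP, hM]
  ext
  simp [LinearEquiv.conjAlgEquiv_apply]

lemma exists_GL_conj_of_trace_eq {A' B' : Matrix (Fin 2) (Fin 2) F}
    (htrA : A'.trace = A.trace) (hdetA : A'.det = A.det) (htrB : B'.trace = B.trace)
    (hdetB : B'.det = B.det) (htrAB : (A' * B').trace = (A * B).trace)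
    (h : (A * B - B * A).det ≠ 0) :
    ∃ P : GL (Fin 2) F, P * A = A' * P ∧ P * B = B' * P := by
  obtain ⟨φ, rfl, rfl⟩ := exists_algEquiv_of_trace_eq htrA hdetA htrB hdetB htrAB h
  obtain ⟨P, hP⟩ := exists_GL_mul_eq_of_algEquiv φ
  exact ⟨P, hP A, hP B⟩

end TwoByTwo

section LucasSequence

variable {R : Type*} [CommRing R]

/-- The Lucas sequence `Uₙ(t, d)`: if `t = α + β` and `d = αβ`, then
`Uₙ = αⁿ⁻¹ + αⁿ⁻²β + ⋯ + βⁿ⁻¹`. It gives the powers of a `2 × 2` matrix of trace `t` and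
determinant `d`. -/
def lucasU (t d : R) : ℕ → R
  | 0 => 0
  | 1 => 1
  | n + 2 => t * lucasU t d (n + 1) - d * lucasU t d n

lemma pow_succ_eq_lucasU (A : Matrix (Fin 2) (Fin 2) R) (n : ℕ) :
    A ^ (n + 1) = lucasU A.trace A.det (n + 1) • A - (A.det * lucasU A.trace A.det n) • 1 := by
  induction n with
  | zero => simp [lucasU]
  | succ n ih =>
    rw [pow_succ, ih, sub_mul, smul_mul_assoc, smul_mul_assoc, mul_self_eq_trace_smul_sub A,
      one_mul, lucasU]
    module

lemma lucasU_one_three (d : R) : lucasU 1 d 3 = 1 - d := by simp [lucasU]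

lemma lucasU_one_four (d : R) : lucasU 1 d 4 = 1 - 2 * d := by
  simp only [lucasU]
  ring

lemma lucasU_one_five (d : R) : lucasU 1 d 5 = d ^ 2 - 3 * d + 1 := by
  simp only [lucasU]
  ring

end LucasSequence

section ProjectiveLinearGroup

lemma mk_eq_one_iff_exists_smul {n R : Type*} [Fintype n] [DecidableEq n] [CommRing R]
    {g : GL n R} : mk g = 1 ↔ ∃ c : R, g.1 = c • 1 := by
  simp [GeneralLinearGroup.mem_center_iff_val_mem_range_scalar, smul_one_eq_diagonal,
    eq_comm (a := g.1)]

lemma trace_sq_mul_det_eq_of_mk_eq {R : Type*} [CommRing R] {g g' : GL (Fin 2) R}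
    (h : mk g = mk g') : g.1.trace ^ 2 * g'.1.det = g'.1.trace ^ 2 * g.1.det := by
  obtain ⟨u, rfl⟩ := mk_eq_mk_iff.1 h
  simp only [Units.val_mul, GeneralLinearGroup.coe_scalar, scalar_apply, mul_diagonal,
    trace_fin_two, det_fin_two]
  ring

variable {F : Type*} [Field F]

lemma mk_pow_eq_one_iff {g : GL (Fin 2) F} (hg : mk g ≠ 1) (n : ℕ) :
    mk g ^ n = 1 ↔ lucasU g.1.trace g.1.det n = 0 := by
  cases n with
  | zero => simp [lucasU]
  | succ n =>
    rw [← map_pow, mk_eq_one_iff_exists_smul, Units.val_pow_eq_pow_val, pow_succ_eq_lucasU]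
    refine ⟨fun ⟨c, hc⟩ ↦ ?_, fun h ↦ ⟨-(g.1.det * lucasU g.1.trace g.1.det n), by simp [h]⟩⟩
    by_contra hU
    refine hg (mk_eq_one_iff_exists_smul.2
      ⟨(lucasU g.1.trace g.1.det (n + 1))⁻¹ * (c + g.1.det * lucasU g.1.trace g.1.det n), ?_⟩)
    rw [mul_smul, eq_inv_smul_iff₀ hU, add_smul, ← hc, sub_add_cancel]

lemma exists_mk_eq_and_eq_smul {n : Type*} [Fintype n] [DecidableEq n] (g : GL n F) {c : F}
    (hc : c ≠ 0) : ∃ g' : GL n F, mk g' = mk g ∧ g'.1 = c • g.1 :=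
  ⟨g * .scalar n (.mk0 c hc), by simp, by simp [← smul_one_eq_diagonal]⟩

/-- `a` and `b` have lifts to `GL₂` of the normal form that exists when `a` has order `2`, `b` has
order `3` and `a * b` is not an involution; `d` is the determinant of the lift of `a`, and it
determines the pair `(a, b)` up to conjugacy when `3 * d ≠ 1`. -/
def HasNormalizedLift (a b : PGL(2, F)) (d : F) : Prop :=
  ∃ X Y : GL (Fin 2) F, mk X = a ∧ mk Y = b ∧ X.1.trace = 0 ∧ X.1.det = d ∧
    Y.1.trace = 1 ∧ Y.1.det = 1 ∧ (X.1 * Y.1).trace = 1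

variable {a b a' b' : PGL(2, F)} {d : F}

lemma exists_hasNormalizedLift (ha : orderOf a = 2) (hb : orderOf b = 3) (hab : (a * b) ^ 2 ≠ 1) :
    ∃ d, HasNormalizedLift a b d := by
  obtain ⟨X, rfl⟩ := mk_surjective a
  obtain ⟨Y, rfl⟩ := mk_surjective b
  have hX : X.1.trace = 0 := by
    have hX1 : mk X ≠ 1 := fun h ↦ by simp [h] at ha
    have hX2 : mk X ^ 2 = 1 := orderOf_dvd_iff_pow_eq_one.1 ha.dvd
    simpa [lucasU, mk_pow_eq_one_iff hX1] using hX2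
  have hY : Y.1.trace * Y.1.trace = Y.1.det := by
    have hY1 : mk Y ≠ 1 := fun h ↦ by simp [h] at hb
    have hY3 : mk Y ^ 3 = 1 := orderOf_dvd_iff_pow_eq_one.1 hb.dvd
    simpa [lucasU, mk_pow_eq_one_iff hY1, sub_eq_zero] using hY3
  have hXY : (X.1 * Y.1).trace ≠ 0 := by
    have hXY1 : mk (X * Y) ≠ 1 := fun h ↦ hab (by rw [← map_mul, h, one_pow])
    rw [← map_mul, Ne, mk_pow_eq_one_iff hXY1] at hab
    simpa [lucasU] using hab
  have hY0 : Y.1.trace ≠ 0 := fun h ↦ Y.det.ne_zero (by simp [← hY, h])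
  obtain ⟨Y', hY', hYY'⟩ := exists_mk_eq_and_eq_smul Y (inv_ne_zero hY0)
  obtain ⟨X', hX', hXX'⟩ := exists_mk_eq_and_eq_smul X (div_ne_zero hY0 hXY)
  refine ⟨_, X', Y', hX', hY', ?_, rfl, ?_, ?_, ?_⟩
  · simp [hXX', hX]
  · simp [hYY', hY0]
  · rw [hYY', det_smul, Fintype.card_fin, ← hY]
    field_simp
  · simp only [hXX', hYY', smul_mul_assoc, mul_smul_comm, trace_smul, smul_eq_mul]
    field_simp

namespace HasNormalizedLift

lemma ne_zero (h : HasNormalizedLift a b d) : d ≠ 0 := by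
  obtain ⟨X, -, -, -, -, rfl, -⟩ := h
  exact X.det.ne_zero

lemma mul_pow_eq_one_iff (h : HasNormalizedLift a b d) (hab : a * b ≠ 1) (n : ℕ) :
    (a * b) ^ n = 1 ↔ lucasU 1 d n = 0 := by
  obtain ⟨X, Y, rfl, rfl, -, rfl, -, hY, hXY⟩ := h
  rw [← map_mul] at hab ⊢
  rw [mk_pow_eq_one_iff hab, Units.val_mul, det_mul, hXY, hY, mul_one]

lemma exists_conj (h : HasNormalizedLift a b d) (h' : HasNormalizedLift a' b' d)
    (hd : 3 * d ≠ 1) : ∃ p, p * a * p⁻¹ = a' ∧ p * b * p⁻¹ = b' := by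
  obtain ⟨X, Y, rfl, rfl, hX, hXd, hY, hYd, hXY⟩ := h
  obtain ⟨X', Y', rfl, rfl, hX', hXd', hY', hYd', hXY'⟩ := h'
  obtain ⟨P, hPX, hPY⟩ := exists_GL_conj_of_trace_eq (hX'.trans hX.symm) (hXd'.trans hXd.symm)
    (hY'.trans hY.symm) (hYd'.trans hYd.symm) (hXY'.trans hXY.symm) (by
      rw [det_commutator, hX, hXd, hY, hYd, hXY]
      contrapose! hd
      linear_combination hd)
  replace hPX : P * X = X' * P := Units.ext hPX
  replace hPY : P * Y = Y' * P := Units.ext hPY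
  exact ⟨mk P, by rw [mul_inv_eq_iff_eq_mul, ← map_mul, hPX, map_mul],
    by rw [mul_inv_eq_iff_eq_mul, ← map_mul, hPY, map_mul]⟩

lemma mul_one_sub_sq_eq (h : HasNormalizedLift a b d) {e : F} (h' : HasNormalizedLift a' b' e)
    (hab : a' * b' = (a * b) ^ 2) : e * (1 - 2 * d) ^ 2 = d ^ 2 := by
  obtain ⟨X, Y, rfl, rfl, -, rfl, -, hYd, hXY⟩ := h
  obtain ⟨X', Y', rfl, rfl, -, rfl, -, hYd', hXY'⟩ := h'
  have hinv := trace_sq_mul_det_eq_of_mk_eq (g := X' * Y') (g' := (X * Y) ^ 2) (by simpa using hab)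
  have htr : ((X.1 * Y.1) ^ 2).trace = 1 - 2 * X.1.det := by
    rw [pow_two, mul_self_eq_trace_smul_sub, det_mul, hXY, hYd]
    simp [hXY, mul_comm]
  simp only [Units.val_mul, Units.val_pow_eq_pow_val, det_pow, det_mul, htr, hXY', hYd', hYd]
    at hinv
  linear_combination -hinv

end HasNormalizedLift

end ProjectiveLinearGroup

section GroupTheory

variable {G P : Type*} [Group G] [Group P]

lemma exists_eq_map_conj_of_forall_injective {S : Set G} (hS : Subgroup.closure S = ⊤)
    (hconj : ∀ f g : G →* P, Function.Injective f → Function.Injective g →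
      ∃ (σ : MulAut G) (p : P), ∀ s ∈ S, p * f s * p⁻¹ = g (σ s))
    {H₁ H₂ : Subgroup P} (e₁ : H₁ ≃* G) (e₂ : H₂ ≃* G) :
    ∃ p : P, H₂ = H₁.map (MulAut.conj p).toMonoidHom := by
  have range_eq {H : Subgroup P} (e : H ≃* G) : (H.subtype.comp e.symm.toMonoidHom).range = H := by
    rw [MonoidHom.range_comp, MonoidHom.range_eq_top.2 e.symm.surjective,
      ← MonoidHom.range_eq_map, Subgroup.range_subtype]
  obtain ⟨σ, p, hp⟩ := hconj (H₁.subtype.comp e₁.symm.toMonoidHom)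
    (H₂.subtype.comp e₂.symm.toMonoidHom) (H₁.subtype_injective.comp e₁.symm.injective)
    (H₂.subtype_injective.comp e₂.symm.injective)
  refine ⟨p, ?_⟩
  have heq : (MulAut.conj p).toMonoidHom.comp (H₁.subtype.comp e₁.symm.toMonoidHom) =
      (H₂.subtype.comp e₂.symm.toMonoidHom).comp σ.toMonoidHom :=
    MonoidHom.eq_of_eqOn_dense hS hp
  have := congrArg MonoidHom.range heq
  rwa [MonoidHom.range_comp, range_eq, MonoidHom.range_comp,
    MonoidHom.range_eq_top.2 σ.surjective, ← MonoidHom.range_eq_map, range_eq, eq_comm] at this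

end GroupTheory

section Generators

open Equiv

lemma alternatingGroup_eq_top_of_card_dvd {α : Type*} [Fintype α] [DecidableEq α]
    {K : Subgroup (alternatingGroup α)}
    (hK : Nat.card (alternatingGroup α) ∣ 2 * Nat.card K) : K = ⊤ := by
  rw [← K.index_mul_card] at hK
  rcases (Nat.dvd_prime Nat.prime_two).1 (Nat.dvd_of_mul_dvd_mul_right Nat.card_pos hK)
    with h1 | h2
  · exact Subgroup.index_eq_one.1 h1
  rw [eq_top_iff, ← alternatingGroup.closure_isThreeCycles_eq_top, Subgroup.closure_le]
  intro g (hg : (g : Perm α).IsThreeCycle)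
  have hg3 : g ^ 3 = 1 := by
    rw [← hg.orderOf, Subgroup.orderOf_coe, pow_orderOf_eq_one]
  have hg4 : (g ^ 2) ^ 2 = g := by rw [← pow_mul, pow_succ, hg3, one_mul]
  exact hg4 ▸ Subgroup.sq_mem_of_index_two h2 (g ^ 2)

lemma orderOf_dvd_card_closure {G : Type*} [Group G] {S : Set G} {x : G} (hx : x ∈ S) :
    orderOf x ∣ Nat.card (Subgroup.closure S) :=
  Subgroup.orderOf_dvd_natCard _ (Subgroup.subset_closure hx)

theorem exists_generators_alternatingGroup_four : ∃ x y : alternatingGroup (Fin 4),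
    Subgroup.closure {x, y} = ⊤ ∧ orderOf x = 2 ∧ orderOf y = 3 ∧ orderOf (x * y) = 3 := by
  let x : alternatingGroup (Fin 4) := ⟨swap 0 1 * swap 2 3, Perm.mem_alternatingGroup.2 (by decide)⟩
  let y : alternatingGroup (Fin 4) := ⟨swap 0 1 * swap 1 2, Perm.mem_alternatingGroup.2 (by decide)⟩
  have hx : orderOf x = 2 := orderOf_eq_prime (by decide) (by decide)
  have hy : orderOf y = 3 := orderOf_eq_prime (by decide) (by decide)
  refine ⟨x, y, alternatingGroup_eq_top_of_card_dvd ?_, hx, hy,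
    orderOf_eq_prime (by decide) (by decide)⟩
  have h2 := hx ▸ orderOf_dvd_card_closure (S := {x, y}) (x := x) (by simp)
  have h3 := hy ▸ orderOf_dvd_card_closure (S := {x, y}) (x := y) (by simp)
  have hcard : Nat.card (alternatingGroup (Fin 4)) = 12 := by
    rw [nat_card_alternatingGroup]
    simp [Nat.factorial]
  rw [hcard]
  omega

theorem exists_generators_perm_four : ∃ x y : Perm (Fin 4),
    Subgroup.closure {x, y} = ⊤ ∧ orderOf x = 2 ∧ orderOf y = 3 ∧ orderOf (x * y) = 4 := by
  let x : Perm (Fin 4) := swap 0 1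
  let y : Perm (Fin 4) := x * finRotate 4
  have hxy : x * y = finRotate 4 := swap_mul_self_mul 0 1 _
  refine ⟨x, y, ?_, orderOf_eq_prime (by decide) (by decide),
    orderOf_eq_prime (by decide) (by decide),
    orderOf_eq_prime_pow (p := 2) (n := 1) (by decide) (by decide)⟩
  rw [eq_top_iff, ← Perm.closure_cycle_adjacent_swap isCycle_finRotate support_finRotate 0,
    Subgroup.closure_le, Set.pair_subset_iff, ← hxy]
  have hx : x ∈ Subgroup.closure {x, y} := Subgroup.subset_closure (by simp)
  have hy : y ∈ Subgroup.closure {x, y} := Subgroup.subset_closure (by simp)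
  exact ⟨mul_mem hx hy, hx⟩

theorem exists_generators_alternatingGroup_five : ∃ x y : alternatingGroup (Fin 5),
    Subgroup.closure {x, y} = ⊤ ∧ orderOf x = 2 ∧ orderOf y = 3 ∧ orderOf (x * y) = 5 ∧
      ∃ σ : MulAut (alternatingGroup (Fin 5)), σ (x * y) = (x * y) ^ 2 := by
  let x : alternatingGroup (Fin 5) := ⟨swap 1 2 * swap 3 4, Perm.mem_alternatingGroup.2 (by decide)⟩
  let y : alternatingGroup (Fin 5) := ⟨swap 0 2 * swap 2 4, Perm.mem_alternatingGroup.2 (by decide)⟩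
  have hx : orderOf x = 2 := orderOf_eq_prime (by decide) (by decide)
  have hy : orderOf y = 3 := orderOf_eq_prime (by decide) (by decide)
  have : Fact (Nat.Prime 5) := ⟨Nat.prime_five⟩
  have hxy : orderOf (x * y) = 5 := orderOf_eq_prime (by decide) (by decide)
  have hz : x * y ∈ Subgroup.closure {x, y} :=
    mul_mem (Subgroup.subset_closure (by simp)) (Subgroup.subset_closure (by simp))
  -- In this labelling `x * y` is `i ↦ i + 1`, and `σ` is conjugation by `i ↦ 2 * i`.
  refine ⟨x, y, alternatingGroup_eq_top_of_card_dvd ?_, hx, hy, hxy,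
    MulAut.conjNormal (swap 1 2 * swap 2 4 * swap 4 3), Subtype.ext (by decide)⟩
  have h2 := hx ▸ orderOf_dvd_card_closure (S := {x, y}) (x := x) (by simp)
  have h3 := hy ▸ orderOf_dvd_card_closure (S := {x, y}) (x := y) (by simp)
  have h5 := hxy ▸ Subgroup.orderOf_dvd_natCard _ hz
  have hcard : Nat.card (alternatingGroup (Fin 5)) = 60 := by
    rw [nat_card_alternatingGroup]
    simp [Nat.factorial]
  rw [hcard]
  omega

end Generators

section ExceptionalSubgroups

variable {F : Type*} [Field F] {G : Type*} [Group G] {x y : G}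

lemma exists_hasNormalizedLift_map {f : G →* PGL(2, F)} (hf : Function.Injective f)
    (hx : orderOf x = 2) (hy : orderOf y = 3) (hxy : (x * y) ^ 2 ≠ 1) :
    ∃ d, HasNormalizedLift (f x) (f y) d ∧
      ∀ n, (x * y) ^ n = 1 ↔ lucasU 1 d n = 0 := by
  have hfxy n : (f x * f y) ^ n = 1 ↔ (x * y) ^ n = 1 := by
    rw [← map_mul, ← map_pow, map_eq_one_iff f hf]
  obtain ⟨d, hd⟩ := exists_hasNormalizedLift (by rwa [orderOf_injective f hf])
    (by rwa [orderOf_injective f hf]) (mt (hfxy 2).1 hxy)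
  have hfxy1 : f x * f y ≠ 1 := fun h ↦ hxy ((hfxy 2).1 (by rw [h, one_pow]))
  exact ⟨d, hd, fun n ↦ by rw [← hfxy, hd.mul_pow_eq_one_iff hfxy1]⟩

lemma exists_eq_map_conj_of_unique_root (hgen : Subgroup.closure {x, y} = ⊤)
    (hx : orderOf x = 2) (hy : orderOf y = 3) (hxy : (x * y) ^ 2 ≠ 1) {n : ℕ}
    (hn : (x * y) ^ n = 1) {d₀ : F} (hd₀ : 3 * d₀ ≠ 1) (hroot : ∀ d, lucasU 1 d n = 0 → d = d₀)
    {H₁ H₂ : Subgroup PGL(2, F)} (e₁ : H₁ ≃* G) (e₂ : H₂ ≃* G) :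
    ∃ p, H₂ = H₁.map (MulAut.conj p).toMonoidHom := by
  refine exists_eq_map_conj_of_forall_injective hgen (fun f g hf hg ↦ ?_) e₁ e₂
  obtain ⟨d, hd, hdn⟩ := exists_hasNormalizedLift_map hf hx hy hxy
  obtain ⟨e, he, hen⟩ := exists_hasNormalizedLift_map hg hx hy hxy
  obtain rfl := hroot d ((hdn n).1 hn)
  obtain rfl := hroot e ((hen n).1 hn)
  obtain ⟨p, hpx, hpy⟩ := hd.exists_conj he hd₀
  exact ⟨1, p, by simp [hpx, hpy]⟩

-- The traces leave two conjugacy classes of pairs, one for each root of `d ^ 2 - 3 * d + 1`;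
-- passing from `x * y` to its square exchanges the two roots.
lemma exists_eq_map_conj_of_pow_five (hgen : Subgroup.closure {x, y} = ⊤)
    (hx : orderOf x = 2) (hy : orderOf y = 3) (hxy : orderOf (x * y) = 5)
    {σ : MulAut G} (hσ : σ (x * y) = (x * y) ^ 2)
    {H₁ H₂ : Subgroup PGL(2, F)} (e₁ : H₁ ≃* G) (e₂ : H₂ ≃* G) :
    ∃ p, H₂ = H₁.map (MulAut.conj p).toMonoidHom := by
  have hxy2 : (x * y) ^ 2 ≠ 1 := pow_ne_one_of_lt_orderOf two_ne_zero (by simp [hxy])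
  have hxy5 : (x * y) ^ 5 = 1 := orderOf_dvd_iff_pow_eq_one.1 hxy.dvd
  refine exists_eq_map_conj_of_forall_injective hgen (fun f g hf hg ↦ ?_) e₁ e₂
  have hgσ : Function.Injective (g.comp σ.toMonoidHom) := hg.comp σ.injective
  obtain ⟨d, hd, hd5⟩ := exists_hasNormalizedLift_map hf hx hy hxy2
  obtain ⟨e, he, he5⟩ := exists_hasNormalizedLift_map hg hx hy hxy2
  obtain ⟨e', he', -⟩ := exists_hasNormalizedLift_map hgσ hx hy hxy2
  replace hd5 : d ^ 2 - 3 * d + 1 = 0 := lucasU_one_five d ▸ (hd5 5).1 hxy5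
  replace he5 : e ^ 2 - 3 * e + 1 = 0 := lucasU_one_five e ▸ (he5 5).1 hxy5
  have h3d : 3 * d ≠ 1 := fun h ↦ hd.ne_zero (by
    rw [← sq_eq_zero_iff]
    linear_combination hd5 + h)
  obtain rfl | hne := eq_or_ne d e
  · obtain ⟨p, hpx, hpy⟩ := hd.exists_conj he h3d
    exact ⟨1, p, by simp [hpx, hpy]⟩
  have hsum : d + e = 3 := by
    apply mul_left_cancel₀ (sub_ne_zero.2 hne)
    linear_combination hd5 - he5
  have he'e := he.mul_one_sub_sq_eq he' (by simp [← map_mul, ← map_pow, hσ])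
  have hunit : (1 - 2 * e) ^ 2 * (21 - 8 * e) = 1 := by
    linear_combination (20 - 32 * e) * he5
  have he'd : d = e' := by
    linear_combination hsum - (21 - 8 * e) * he'e + e' * hunit + (8 * e + 3) * he5
  obtain ⟨p, hpx, hpy⟩ := hd.exists_conj (he'd ▸ he') h3d
  exact ⟨σ, p, by simp [hpx, hpy]⟩

theorem exists_eq_map_conj_of_mulEquiv_alternatingGroup_four (h2 : (2 : F) ≠ 0)
    {H₁ H₂ : Subgroup PGL(2, F)} (e₁ : H₁ ≃* alternatingGroup (Fin 4))
    (e₂ : H₂ ≃* alternatingGroup (Fin 4)) :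
    ∃ p, H₂ = H₁.map (MulAut.conj p).toMonoidHom := by
  obtain ⟨x, y, hgen, hx, hy, hxy⟩ := exists_generators_alternatingGroup_four
  refine exists_eq_map_conj_of_unique_root hgen hx hy
    (pow_ne_one_of_lt_orderOf two_ne_zero (by simp [hxy])) (orderOf_dvd_iff_pow_eq_one.1 hxy.dvd)
    (d₀ := 1) (fun h ↦ h2 (by linear_combination h)) (fun d hd ↦ ?_) e₁ e₂
  exact (sub_eq_zero.1 (lucasU_one_three d ▸ hd)).symm

theorem exists_eq_map_conj_of_mulEquiv_perm_four (h2 : (2 : F) ≠ 0)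
    {H₁ H₂ : Subgroup PGL(2, F)} (e₁ : H₁ ≃* Equiv.Perm (Fin 4)) (e₂ : H₂ ≃* Equiv.Perm (Fin 4)) :
    ∃ p, H₂ = H₁.map (MulAut.conj p).toMonoidHom := by
  obtain ⟨x, y, hgen, hx, hy, hxy⟩ := exists_generators_perm_four
  refine exists_eq_map_conj_of_unique_root hgen hx hy
    (pow_ne_one_of_lt_orderOf two_ne_zero (by simp [hxy])) (orderOf_dvd_iff_pow_eq_one.1 hxy.dvd)
    (d₀ := 2⁻¹) (fun h ↦ ?_) (fun d hd ↦ ?_) e₁ e₂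
  · field_simp at h
    exact one_ne_zero (by linear_combination h : (1 : F) = 0)
  · rw [lucasU_one_four] at hd
    field_simp
    linear_combination -hd

theorem exists_eq_map_conj_of_mulEquiv_alternatingGroup_five
    {H₁ H₂ : Subgroup PGL(2, F)} (e₁ : H₁ ≃* alternatingGroup (Fin 5))
    (e₂ : H₂ ≃* alternatingGroup (Fin 5)) :
    ∃ p, H₂ = H₁.map (MulAut.conj p).toMonoidHom := by
  obtain ⟨x, y, hgen, hx, hy, hxy, σ, hσ⟩ := exists_generators_alternatingGroup_five
  exact exists_eq_map_conj_of_pow_five hgen hx hy hxy hσ e₁ e₂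

theorem exceptional_subgroups_conjugate_general (h2 : (2 : F) ≠ 0) (H₁ H₂ : Subgroup PGL(2, F))
    (h : (Nonempty (H₁ ≃* alternatingGroup (Fin 4)) ∧ Nonempty (H₂ ≃* alternatingGroup (Fin 4))) ∨
      (Nonempty (H₁ ≃* Equiv.Perm (Fin 4)) ∧ Nonempty (H₂ ≃* Equiv.Perm (Fin 4))) ∨
      (Nonempty (H₁ ≃* alternatingGroup (Fin 5)) ∧ Nonempty (H₂ ≃* alternatingGroup (Fin 5)))) :
    ∃ p, H₂ = H₁.map (MulAut.conj p).toMonoidHom := by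
  rcases h with ⟨⟨e₁⟩, ⟨e₂⟩⟩ | ⟨⟨e₁⟩, ⟨e₂⟩⟩ | ⟨⟨e₁⟩, ⟨e₂⟩⟩
  · exact exists_eq_map_conj_of_mulEquiv_alternatingGroup_four h2 e₁ e₂
  · exact exists_eq_map_conj_of_mulEquiv_perm_four h2 e₁ e₂
  · exact exists_eq_map_conj_of_mulEquiv_alternatingGroup_five e₁ e₂

end ExceptionalSubgroups

/-- For `ℓ > 5`, any two subgroups of `PGL₂(F_ℓ)` isomorphic to `A₄`
(resp. `S₄`, resp. `A₅`) are conjugate in `PGL₂(F_ℓ)`. -/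
theorem exceptional_subgroups_conjugate
    {ℓ : ℕ} [Fact ℓ.Prime] (hℓ : 5 < ℓ)
    (H₁ H₂ : Subgroup (PGL2 ℓ))
    (h : (IsA4 H₁ ∧ IsA4 H₂) ∨ (IsS4 H₁ ∧ IsS4 H₂) ∨ (IsA5 H₁ ∧ IsA5 H₂)) :
    ∃ x : PGL2 ℓ, H₂ = Subgroup.map (MulAut.conj x).toMonoidHom H₁ := by
  have h2 : (2 : ZMod ℓ) ≠ 0 := fun h2 ↦
    absurd (Nat.le_of_dvd two_pos ((ZMod.natCast_eq_zero_iff 2 ℓ).1 h2)) (by omega)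
  exact exceptional_subgroups_conjugate_general h2 H₁ H₂ h
end

section
/- Let ℓ be an odd prime and let G be a subgroup of GL₂(F_ℓ) such that every element of G is diagonalizable over F_ℓ (equivalently, every element lies in a conjugate of C_sp). Then one of the following holds: (0) G is contained in a conjugate of C_sp; (1) G is contained in a conjugate of N_sp; (2) the image H of G in PGL₂(F_ℓ) is isomorphic to A₄ and ℓ ≡ 1 (mod 12); (3) H is isomorphic to S₄ and ℓ ≡ 1 (mod 24); (4) H is isomorphic to A₅ and ℓ ≡ 1 (mod 60). -/
open Matrix

/-!
`PGL₂(K)` acts on the projective line, and a nontrivial diagonalizable element fixes exactly two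
points. Hence Klein's classification of rotation groups applies to the image `H` of `G`: counting
orbits on the poles with Burnside's lemma, either `H` preserves the pair of fixed points of one of
its elements, so that `G` lies in the normalizer of a split Cartan subgroup, or `H` has order 12, 24
or 60. In the second case a normal subgroup of prime order would again yield an invariant pair, and
Sylow's theorems leave only `A₄`, `S₄` and `A₅`.

The eigenvalue ratio `ζ` of a lift of an element of order `n` is a primitive `n`-th root of unity.
More is true if `n` is even and the element `r` is a product of two involutions of `H`: a lift of an
involution has determinant `-c²`, so the lift of `r` has square determinant. Hence `ζ` is a square,
and its square root is a primitive `2n`-th root of unity. This gives roots of unity of order 4 in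
the case of `A₄` and `A₅`, and of order 8 in the case of `S₄`, beyond those of order 3 and 5.
-/

section TwoFixedPoints

open MulAction Pointwise

variable {H X : Type*} [Group H] [MulAction H X]

variable (H X) in
/-- The action of `H` on `X` behaves like that of a rotation group on the sphere: every
nontrivial element fixes exactly two points. -/
def HasTwoFixedPoints : Prop := ∀ h : H, h ≠ 1 → (fixedBy X h).ncard = 2

variable (H X) in
/-- `H` stabilizes the set of fixed points of one of its nontrivial elements; under
`HasTwoFixedPoints` this set is the pair of poles of a cyclic or dihedral group. -/
def HasInvariantPair : Prop := ∃ h : H, h ≠ 1 ∧ IsFixedBlock H (fixedBy X h)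

namespace HasTwoFixedPoints

lemma finite_fixedBy (hH : HasTwoFixedPoints H X) {h : H} (hh : h ≠ 1) :
    (fixedBy X h).Finite :=
  Set.finite_of_ncard_ne_zero (by simp [hH h hh])

lemma hasInvariantPair_of_ncard_eq_two (hH : HasTwoFixedPoints H X) {B : Set X}
    (hB : IsFixedBlock H B) (hcard : B.ncard = 2) {x : X} (hx : x ∈ B)
    (hstab : stabilizer H x ≠ ⊥) : HasInvariantPair H X := by
  obtain ⟨⟨h, hhx⟩, hh⟩ := Subgroup.ne_bot_iff_exists_ne_one.mp hstab
  have hh1 : h ≠ 1 := fun h1 ↦ hh (Subtype.ext h1)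
  obtain ⟨y, hxy, rfl⟩ : ∃ y, x ≠ y ∧ B = {x, y} := by
    obtain ⟨y, z, hyz, rfl⟩ := Set.ncard_eq_two.mp hcard
    rcases hx with rfl | rfl
    exacts [⟨z, hyz, rfl⟩, ⟨y, hyz.symm, Set.pair_comm _ _⟩]
  have hhy : h • y = y := by
    have hmem : h • y ∈ ({x, y} : Set X) := hB.isInvariantBlock h (Set.smul_mem_smul_set (by simp))
    refine hmem.resolve_left fun hyx ↦ hxy ?_
    exact (smul_left_cancel h (hyx.trans (mem_stabilizer_iff.mp hhx).symm)).symm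
  have hfix : {x, y} = fixedBy X h :=
    Set.eq_of_subset_of_ncard_le (Set.insert_subset hhx (Set.singleton_subset_iff.mpr hhy))
      (by rw [hH h hh1, hcard]) (hH.finite_fixedBy hh1)
  exact ⟨h, hh1, hfix ▸ hB⟩

lemma hasInvariantPair_of_normal_of_prime_card (hH : HasTwoFixedPoints H X) (N : Subgroup H)
    [hN : N.Normal] (hcard : (Nat.card N).Prime) : HasInvariantPair H X := by
  have : Fact (Nat.card N).Prime := ⟨hcard⟩
  have : Finite N := Nat.finite_of_card_ne_zero hcard.ne_zero
  have : Nontrivial N := Finite.one_lt_card_iff_nontrivial.mp hcard.one_lt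
  obtain ⟨⟨h, hhN⟩, hh⟩ := exists_ne (1 : N)
  have hh1 : h ≠ 1 := fun h1 ↦ hh (Subtype.ext h1)
  refine ⟨h, hh1, fun g ↦ ?_⟩
  have hconj : g * h * g⁻¹ ≠ 1 := fun h1 ↦ hh1 (by simpa using h1)
  have hmem : (⟨g * h * g⁻¹, hN.conj_mem h hhN g⟩ : N) ∈ Subgroup.zpowers ⟨h, hhN⟩ :=
    mem_zpowers_of_prime_card rfl hh
  obtain ⟨k, hk⟩ := hmem
  replace hk : h ^ k = g * h * g⁻¹ := congrArg Subtype.val hk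
  rw [smul_fixedBy]
  refine (Set.eq_of_subset_of_ncard_le ?_ ?_ (hH.finite_fixedBy hconj)).symm
  · exact hk ▸ fixedBy_subset_fixedBy_zpow X h k
  · rw [hH _ hconj, hH _ hh1]

lemma card_add_two_mul_card_sub_one [Finite H] [Finite X] (hH : HasTwoFixedPoints H X) :
    Nat.card X + 2 * (Nat.card H - 1) = Nat.card (orbitRel.Quotient H X) * Nat.card H := by
  classical
  have := Fintype.ofFinite H
  have := Fintype.ofFinite X
  have := Fintype.ofFinite (orbitRel.Quotient H X)
  have hburnside := sum_card_fixedBy_eq_card_orbits_mul_card_group H X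
  have hnontrivial : ∀ h ∈ Finset.univ.erase (1 : H), Fintype.card (fixedBy X h) = 2 := by
    intro h hh
    rw [← Nat.card_eq_fintype_card, Nat.card_coe_set_eq, hH h (Finset.ne_of_mem_erase hh)]
  have hone : Fintype.card (fixedBy X (1 : H)) = Fintype.card X := by
    simp [← Nat.card_eq_fintype_card]
  rw [← Finset.add_sum_erase _ _ (Finset.mem_univ 1), Finset.sum_congr rfl hnontrivial, hone,
    Finset.sum_const, Finset.card_erase_of_mem (Finset.mem_univ 1), Finset.card_univ,
    smul_eq_mul, mul_comm (_ - 1)] at hburnside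
  simpa only [Nat.card_eq_fintype_card] using hburnside

end HasTwoFixedPoints

lemma exists_ncard_orbit_mul_eq_card [Finite H] (hstab : ∀ x : X, stabilizer H x ≠ ⊥)
    (ω : orbitRel.Quotient H X) : ∃ e, 2 ≤ e ∧ ω.orbit.ncard * e = Nat.card H := by
  induction ω using Quotient.inductionOn' with | _ x
  refine ⟨Nat.card (stabilizer H x), (stabilizer H x).one_lt_card_iff_ne_bot.mpr (hstab x), ?_⟩
  rw [orbitRel.Quotient.orbit_mk, ← index_stabilizer, Subgroup.index_mul_card]

lemma sum_ncard_orbit_eq_card [Finite X] [Fintype (orbitRel.Quotient H X)] :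
    ∑ ω : orbitRel.Quotient H X, ω.orbit.ncard = Nat.card X := by
  rw [Nat.card_congr (selfEquivSigmaOrbits' H X), Nat.card_sigma]
  rfl

lemma eq_two_or_eq_twelve_or_eq_twentyfour_or_eq_sixty {n a₁ a₂ a₃ e₁ e₂ e₃ : ℕ}
    (h₁ : a₁ * e₁ = n) (h₂ : a₂ * e₂ = n) (h₃ : a₃ * e₃ = n) (he₁ : 2 ≤ e₁) (he₂ : 2 ≤ e₂)
    (he₃ : 2 ≤ e₃) (hsum : a₁ + a₂ + a₃ = n + 2) :
    (a₁ = 2 ∨ a₂ = 2 ∨ a₃ = 2) ∨ n = 12 ∨ n = 24 ∨ n = 60 := by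
  wlog h₁₂ : e₁ ≤ e₂ generalizing a₁ a₂ e₁ e₂
  · have := this h₂ h₁ he₂ he₁ (by omega) (by omega); omega
  wlog h₂₃ : e₂ ≤ e₃ generalizing a₁ a₂ a₃ e₁ e₂ e₃
  · rcases le_total e₁ e₃ with h₁₃ | h₃₁
    · have := this h₂ he₂ h₁ h₃ he₁ he₃ (by omega) h₁₃ (by omega); omega
    · have := this h₂ he₂ h₃ h₁ he₃ he₁ (by omega) h₃₁ h₁₂; omega
  obtain rfl : e₁ = 2 := by
    by_contra he
    have : 3 ≤ e₁ := by omega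
    nlinarith [Nat.mul_le_mul_left a₁ this, Nat.mul_le_mul_left a₂ (this.trans h₁₂),
      Nat.mul_le_mul_left a₃ ((this.trans h₁₂).trans h₂₃)]
  have he₂' : e₂ < 4 := by
    by_contra! he
    nlinarith [Nat.mul_le_mul_left a₂ he, Nat.mul_le_mul_left a₃ (he.trans h₂₃)]
  have he₃' : e₂ = 2 ∨ e₃ < 6 := by
    by_contra! he
    have : e₂ = 3 := by omega
    nlinarith [Nat.mul_le_mul_left a₃ he.2]
  rcases he₃' with rfl | he₃'
  · omega
  · interval_cases e₂ <;> interval_cases e₃ <;> omega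

namespace HasTwoFixedPoints

lemma card_eq_two_or_card_quotient_eq_three [Finite H] [Nontrivial H] [Finite X]
    (hH : HasTwoFixedPoints H X) (hstab : ∀ x : X, stabilizer H x ≠ ⊥) :
    Nat.card X = 2 ∨ Nat.card (orbitRel.Quotient H X) = 3 := by
  have := Fintype.ofFinite (orbitRel.Quotient H X)
  have hburnside := hH.card_add_two_mul_card_sub_one
  have hn : 2 ≤ Nat.card H := Finite.one_lt_card
  have hlower : Nat.card (orbitRel.Quotient H X) ≤ Nat.card X :=
    Nat.card_le_card_of_surjective _ Quotient.mk''_surjective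
  have hupper : 2 * Nat.card X ≤ Nat.card (orbitRel.Quotient H X) * Nat.card H := by
    rw [← sum_ncard_orbit_eq_card (H := H), Finset.mul_sum, Nat.card_eq_fintype_card,
      ← Finset.card_univ, ← smul_eq_mul (Finset.card _)]
    refine Finset.sum_le_card_nsmul _ _ _ fun ω _ ↦ ?_
    obtain ⟨e, he, hωe⟩ := exists_ncard_orbit_mul_eq_card hstab ω
    rw [← hωe, mul_comm]
    exact Nat.mul_le_mul_left _ he
  generalize Nat.card (orbitRel.Quotient H X) = r at *
  have hr : r < 4 := by
    by_contra! hr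
    have := Nat.mul_le_mul_right (Nat.card H) hr
    omega
  interval_cases r <;> omega

lemma hasInvariantPair_or_card_eq_of_forall_stabilizer_ne_bot [Finite H] [Nontrivial H] [Finite X]
    (hH : HasTwoFixedPoints H X) (hstab : ∀ x : X, stabilizer H x ≠ ⊥) :
    HasInvariantPair H X ∨ Nat.card H = 12 ∨ Nat.card H = 24 ∨ Nat.card H = 60 := by
  rcases hH.card_eq_two_or_card_quotient_eq_three hstab with hX | hthree
  · have : Nonempty X := (Nat.card_pos_iff.mp (by omega)).1
    exact .inl <| hH.hasInvariantPair_of_ncard_eq_two .univ (by rwa [Set.ncard_univ])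
      (Set.mem_univ (Classical.arbitrary X)) (hstab _)
  have := Fintype.ofFinite (orbitRel.Quotient H X)
  classical
  obtain ⟨ω₁, ω₂, ω₃, h₁₂, h₁₃, h₂₃, huniv⟩ : ∃ ω₁ ω₂ ω₃ : orbitRel.Quotient H X,
      ω₁ ≠ ω₂ ∧ ω₁ ≠ ω₃ ∧ ω₂ ≠ ω₃ ∧ Finset.univ = {ω₁, ω₂, ω₃} := by
    rwa [← Finset.card_eq_three, Finset.card_univ, ← Nat.card_eq_fintype_card]
  have hsum : ω₁.orbit.ncard + ω₂.orbit.ncard + ω₃.orbit.ncard = Nat.card H + 2 := by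
    have hburnside := hH.card_add_two_mul_card_sub_one
    rw [hthree, ← sum_ncard_orbit_eq_card (H := H), huniv, Finset.sum_insert (by simp [h₁₂, h₁₃]),
      Finset.sum_pair h₂₃] at hburnside
    have : 1 < Nat.card H := Finite.one_lt_card
    omega
  have hpair (ω : orbitRel.Quotient H X) (hω : ω.orbit.ncard = 2) : HasInvariantPair H X := by
    induction ω using Quotient.inductionOn' with | _ x
    exact hH.hasInvariantPair_of_ncard_eq_two (.orbit x) hω (mem_orbit_self x) (hstab x)
  obtain ⟨e₁, he₁, hω₁⟩ := exists_ncard_orbit_mul_eq_card hstab ω₁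
  obtain ⟨e₂, he₂, hω₂⟩ := exists_ncard_orbit_mul_eq_card hstab ω₂
  obtain ⟨e₃, he₃, hω₃⟩ := exists_ncard_orbit_mul_eq_card hstab ω₃
  refine (eq_two_or_eq_twelve_or_eq_twentyfour_or_eq_sixty hω₁ hω₂ hω₃ he₁ he₂
    he₃ hsum).imp_left ?_
  rintro (h | h | h)
  exacts [hpair _ h, hpair _ h, hpair _ h]

end HasTwoFixedPoints

variable (H X) in
/-- The points of `X` whose stabilizer in `H` is nontrivial, that is, the poles of `H`. -/
def poles : SubMulAction H X where
  carrier := {x | stabilizer H x ≠ ⊥}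
  smul_mem' g x hx := by
    rw [Set.mem_ofPred_eq, stabilizer_smul_eq_stabilizer_map_conj, Ne,
      Subgroup.map_eq_bot_iff_of_injective _ (MulAut.conj g : H ≃* H).injective]
    exact hx

lemma fixedBy_subset_poles {h : H} (hh : h ≠ 1) : fixedBy X h ⊆ poles H X := fun _ hx ↦
  Subgroup.ne_bot_iff_exists_ne_one.mpr ⟨⟨h, hx⟩, fun h1 ↦ hh (congrArg Subtype.val h1)⟩

lemma image_val_fixedBy_poles {h : H} (hh : h ≠ 1) :
    (↑) '' fixedBy (poles H X) h = fixedBy X h := by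
  refine Set.Subset.antisymm ?_ fun x hx ↦ ⟨⟨x, fixedBy_subset_poles hh hx⟩, Subtype.ext hx, rfl⟩
  rintro _ ⟨x, hx, rfl⟩
  exact congrArg Subtype.val hx

lemma HasInvariantPair.of_poles (h : HasInvariantPair H (poles H X)) : HasInvariantPair H X := by
  obtain ⟨h, hh, hB⟩ := h
  refine ⟨h, hh, fun g ↦ ?_⟩
  rw [← image_val_fixedBy_poles hh, ← Set.image_smul_comm Subtype.val g _ fun _ ↦ rfl, hB g]

namespace HasTwoFixedPoints

lemma finite_poles [Finite H] (hH : HasTwoFixedPoints H X) : Finite (poles H X) := by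
  have hfin : (⋃ h ∈ {h : H | h ≠ 1}, fixedBy X h).Finite :=
    (Set.toFinite _).biUnion fun h hh ↦ hH.finite_fixedBy hh
  refine hfin.subset fun x hx ↦ ?_
  obtain ⟨⟨h, hhx⟩, hh⟩ := Subgroup.ne_bot_iff_exists_ne_one.mp hx
  exact Set.mem_biUnion (fun h1 ↦ hh (Subtype.ext h1)) hhx

lemma restrict_poles (hH : HasTwoFixedPoints H X) : HasTwoFixedPoints H (poles H X) := by
  intro h hh
  rw [← Set.ncard_image_of_injective _ Subtype.val_injective]
  exact (congrArg _ (image_val_fixedBy_poles hh)).trans (hH h hh)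

lemma hasInvariantPair_or_card_eq [Finite H] [Nontrivial H] (hH : HasTwoFixedPoints H X) :
    HasInvariantPair H X ∨ Nat.card H = 12 ∨ Nat.card H = 24 ∨ Nat.card H = 60 := by
  have := hH.finite_poles
  refine (hH.restrict_poles.hasInvariantPair_or_card_eq_of_forall_stabilizer_ne_bot
    fun x ↦ ?_).imp_left .of_poles
  rw [SubMulAction.stabilizer_of_subMul]
  exact x.2

end HasTwoFixedPoints

end TwoFixedPoints

section PrimeNormalSubgroups

open MulAction Equiv

variable {H : Type*} [Group H]

variable (H) in
/-- `H` has no normal subgroup of prime order. Among the groups of order 12, 24 and 60 this singles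
out `A₄`, `S₄` and `A₅`. -/
def HasNoNormalSubgroupOfPrimeOrder : Prop := ∀ N : Subgroup H, N.Normal → ¬ (Nat.card N).Prime

lemma exists_injective_monoidHom_perm_fin {α : Type*} [Finite α] {m : ℕ} (hα : Nat.card α = m)
    {f : H →* Perm α} (hf : Function.Injective f) :
    ∃ f : H →* Perm (Fin m), Function.Injective f :=
  let e := (Finite.equivFinOfCardEq hα).permCongrHom
  ⟨e.toMonoidHom.comp f, e.injective.comp hf⟩

lemma nonempty_mulEquiv_perm_of_injective {α : Type*} [Finite α] {m : ℕ} (hα : Nat.card α = m)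
    {f : H →* Perm α} (hf : Function.Injective f) (hcard : Nat.card H = m.factorial) :
    Nonempty (H ≃* Perm (Fin m)) := by
  obtain ⟨f, hf⟩ := exists_injective_monoidHom_perm_fin hα hf
  refine ⟨.ofBijective f <| (Nat.bijective_iff_injective_and_card f).mpr ⟨hf, ?_⟩⟩
  rw [hcard, Nat.card_perm, Nat.card_fin]

lemma nonempty_mulEquiv_alternatingGroup_of_injective {α : Type*} [Finite α] {m : ℕ}
    (hα : Nat.card α = m) {f : H →* Perm α} (hf : Function.Injective f)
    (hcard : 2 * Nat.card H = m.factorial) : Nonempty (H ≃* alternatingGroup (Fin m)) := by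
  obtain ⟨f, hf⟩ := exists_injective_monoidHom_perm_fin hα hf
  have hrange : Nat.card f.range = Nat.card H := (Nat.card_congr (f.ofInjective hf).toEquiv).symm
  have hindex : f.range.index = 2 := by
    have hmul := f.range.index_mul_card
    rw [hrange, Nat.card_perm, Nat.card_fin, ← hcard] at hmul
    exact Nat.eq_of_mul_eq_mul_right (Nat.pos_of_mul_pos_left (hcard ▸ m.factorial_pos)) hmul
  rw [← Perm.eq_alternatingGroup_of_index_eq_two hindex]
  exact ⟨f.ofInjective hf⟩

lemma toPermHom_ofStabilizer_injective {X : Type*} [MulAction H X] [FaithfulSMul H X] (a : X) :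
    Function.Injective (toPermHom (stabilizer H a) (SubMulAction.ofStabilizer H a)) := by
  rw [injective_iff_map_eq_one]
  rintro ⟨h, ha⟩ hh
  refine Subtype.ext (FaithfulSMul.eq_of_smul_eq_smul (α := X) fun x ↦ ?_)
  rw [OneMemClass.coe_one, one_smul]
  by_cases hx : x = a
  · exact hx ▸ ha
  · exact congrArg Subtype.val (DFunLike.congr_fun hh ⟨x, hx⟩)

lemma faithfulSMul_quotient_of_isSimpleGroup [IsSimpleGroup H] {M : Subgroup H} (hM : M ≠ ⊤) :
    FaithfulSMul H (H ⧸ M) := by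
  have hcore : M.normalCore = ⊥ :=
    (Subgroup.Normal.eq_bot_or_eq_top inferInstance).resolve_right fun htop ↦
      hM (top_le_iff.mp (htop.ge.trans M.normalCore_le))
  rw [M.normalCore_eq_ker, MonoidHom.ker_eq_bot_iff] at hcore
  exact ⟨fun h ↦ hcore (Equiv.ext h)⟩

lemma nonempty_mulEquiv_alternatingGroup_of_index_eq {m : ℕ} (hm : 4 ≤ m)
    {M : Subgroup (alternatingGroup (Fin (m + 1)))} (hM : M.index = m + 1) :
    Nonempty (M ≃* alternatingGroup (Fin m)) := by
  have := alternatingGroup.isSimpleGroup (α := Fin (m + 1)) (by simpa using hm)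
  have := faithfulSMul_quotient_of_isSimpleGroup (M := M) (by rintro rfl; simp at hM; omega)
  have hcard : 2 * Nat.card M = m.factorial := by
    have : Nontrivial (Fin (m + 1)) := Fin.nontrivial_iff_two_le.mpr (by omega)
    have hmul := two_mul_nat_card_alternatingGroup (α := Fin (m + 1))
    rw [← M.index_mul_card, hM, Nat.card_perm, Nat.card_fin, Nat.factorial_succ,
      mul_left_comm] at hmul
    exact Nat.eq_of_mul_eq_mul_left m.succ_pos hmul
  let a : alternatingGroup (Fin (m + 1)) ⧸ M := ((1 : alternatingGroup (Fin (m + 1))))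
  have ha : stabilizer (alternatingGroup (Fin (m + 1))) a = M := stabilizer_quotient M
  rw [← ha] at hcard ⊢
  refine nonempty_mulEquiv_alternatingGroup_of_injective ?_
    (toPermHom_ofStabilizer_injective a) hcard
  rw [SubMulAction.nat_card_ofStabilizer_eq]
  change M.index - 1 = m
  omega

section Sylow

variable {p : ℕ} [Fact p.Prime] [Finite H]

lemma card_sylow_eq_prime (hp : (Nat.card H).factorization p = 1) (P : Sylow p H) :
    Nat.card P = p := by
  rw [P.card_eq_multiplicity, hp, pow_one]

lemma zpowers_eq_sylow (hp : (Nat.card H).factorization p = 1) {P : Sylow p H} {g : H}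
    (hgP : g ∈ P) (hg : orderOf g = p) : Subgroup.zpowers g = P :=
  Subgroup.eq_of_le_of_card_ge (Subgroup.zpowers_le.mpr hgP)
    (by rw [Nat.card_zpowers, hg]; exact (card_sylow_eq_prime hp P).le)

lemma card_sylow_mul_dvd (hp : (Nat.card H).factorization p = 1) :
    Nat.card (Sylow p H) * p ∣ Nat.card H := by
  obtain ⟨P⟩ := Sylow.nonempty (p := p) (G := H)
  rw [← P.toSubgroup.index_mul_card, show Nat.card P.toSubgroup = p from card_sylow_eq_prime hp P]
  exact Nat.mul_dvd_mul_right P.card_dvd_index p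

lemma HasNoNormalSubgroupOfPrimeOrder.card_sylow_ne_one (hH : HasNoNormalSubgroupOfPrimeOrder H)
    (hp : (Nat.card H).factorization p = 1) : Nat.card (Sylow p H) ≠ 1 := by
  intro h1
  obtain ⟨P⟩ := Sylow.nonempty (p := p) (G := H)
  have := (Nat.card_eq_one_iff_unique.mp h1).1
  refine hH P P.normal_of_subsingleton ?_
  rw [card_sylow_eq_prime hp P]
  exact Fact.out

lemma card_ker_toPermHom_sylow_mul_dvd :
    Nat.card (toPermHom H (Sylow p H)).ker * Nat.card (Sylow p H) ∣ Nat.card H := by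
  obtain ⟨P⟩ := Sylow.nonempty (p := p) (G := H)
  have hle : (toPermHom H (Sylow p H)).ker ≤ Subgroup.normalizer P := fun g hg ↦
    Sylow.smul_eq_iff_mem_normalizer.mp (congrArg (· P) (MonoidHom.mem_ker.mp hg))
  rw [P.card_eq_index_normalizer, ← (Subgroup.normalizer (P : Set H)).card_mul_index]
  exact Nat.mul_dvd_mul_right (Subgroup.card_dvd_of_le hle) _

lemma not_dvd_card_ker_toPermHom_sylow (hp : (Nat.card H).factorization p = 1)
    (hn : Nat.card (Sylow p H) ≠ 1) : ¬ p ∣ Nat.card (toPermHom H (Sylow p H)).ker := by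
  intro hdvd
  obtain ⟨⟨g, hgK⟩, hg⟩ := exists_prime_orderOf_dvd_card' p hdvd
  rw [Subgroup.orderOf_mk] at hg
  have hpg : IsPGroup p (Subgroup.zpowers g) :=
    .of_card (n := 1) (by rw [Nat.card_zpowers, hg, pow_one])
  have hmem (P : Sylow p H) : g ∈ P := by
    have hfix : P ∈ fixedPoints (Subgroup.zpowers g) (Sylow p H) := by
      rintro ⟨x, hx⟩
      have hxK := (Subgroup.zpowers_le.mpr hgK) hx
      exact congrArg (· P) (MonoidHom.mem_ker.mp hxK)
    exact Subgroup.zpowers_le.mp (hpg.sylow_mem_fixedPoints_iff.mp hfix)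
  refine hn (Nat.card_eq_one_iff_unique.mpr ⟨⟨fun P Q ↦ Sylow.ext ?_⟩, inferInstance⟩)
  rw [← zpowers_eq_sylow hp (hmem P) hg, ← zpowers_eq_sylow hp (hmem Q) hg]

lemma HasNoNormalSubgroupOfPrimeOrder.toPermHom_sylow_injective
    (hH : HasNoNormalSubgroupOfPrimeOrder H) (hp : (Nat.card H).factorization p = 1)
    (hdvd : Nat.card H ∣ 2 * p * Nat.card (Sylow p H)) :
    Function.Injective (toPermHom H (Sylow p H)) := by
  have hker : Nat.card (toPermHom H (Sylow p H)).ker ∣ 2 * p :=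
    Nat.dvd_of_mul_dvd_mul_right Nat.card_pos (card_ker_toPermHom_sylow_mul_dvd.trans hdvd)
  have hcoprime : (Nat.card (toPermHom H (Sylow p H)).ker).Coprime p :=
    ((Nat.Prime.coprime_iff_not_dvd Fact.out).mpr
      (not_dvd_card_ker_toPermHom_sylow hp (hH.card_sylow_ne_one hp))).symm
  rw [← MonoidHom.ker_eq_bot_iff, Subgroup.eq_bot_iff_card]
  refine ((Nat.dvd_prime Nat.prime_two).mp (hcoprime.dvd_of_dvd_mul_right hker)).resolve_right ?_
  exact fun h2 ↦ hH _ inferInstance (h2 ▸ Nat.prime_two)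

lemma sub_one_mul_card_sylow_le (hp : (Nat.card H).factorization p = 1) :
    (p - 1) * Nat.card (Sylow p H) ≤ {g : H | orderOf g = p}.ncard := by
  have horder {P : Sylow p H} {g : H} (hgP : g ∈ P) (hg : g ≠ 1) : orderOf g = p := by
    refine ((Nat.dvd_prime Fact.out).mp ?_).resolve_left (by simpa using hg)
    rw [← card_sylow_eq_prime hp P]
    exact P.toSubgroup.orderOf_dvd_natCard hgP
  let f (x : Σ P : Sylow p H, {g : P // g ≠ 1}) : {g : H | orderOf g = p} :=
    ⟨x.2.1, horder x.2.1.2 fun h1 ↦ x.2.2 (Subtype.ext h1)⟩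
  have hf : Function.Injective f := by
    rintro ⟨P, ⟨g, hgP⟩, hg⟩ ⟨Q, ⟨g', hgQ⟩, hg'⟩ hgg'
    obtain rfl : g = g' := congrArg Subtype.val hgg'
    have hgp := horder hgP fun h1 ↦ hg (Subtype.ext h1)
    obtain rfl : P = Q :=
      Sylow.ext ((zpowers_eq_sylow hp hgP hgp).symm.trans (zpowers_eq_sylow hp hgQ hgp))
    rfl
  have := Fintype.ofFinite (Sylow p H)
  have hfiber (P : Sylow p H) : Nat.card {g : P // g ≠ 1} = p - 1 := by
    classical
    have := Fintype.ofFinite P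
    rw [Nat.card_eq_fintype_card, Fintype.card_subtype_compl, Fintype.card_subtype_eq,
      ← Nat.card_eq_fintype_card]
    exact congrArg (· - 1) (card_sylow_eq_prime hp P)
  calc (p - 1) * Nat.card (Sylow p H)
      = Nat.card (Σ P : Sylow p H, {g : P // g ≠ 1}) := by
        simp only [Nat.card_sigma, hfiber]
        simp [mul_comm, Nat.card_eq_fintype_card]
    _ ≤ _ := Nat.card_le_card_of_injective f hf

end Sylow

lemma monoidHom_intUnits_eq_one_of_odd_orderOf (f : H →* ℤˣ) {g : H} (hg : Odd (orderOf g)) :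
    f g = 1 := by
  have : f g ^ orderOf g = 1 := by rw [← map_pow, pow_orderOf_eq_one, map_one]
  rwa [Int.units_pow_eq_pow_mod_two, Nat.odd_iff.mp hg, pow_one] at this

namespace HasNoNormalSubgroupOfPrimeOrder

lemma card_sylow_three_eq_four [Finite H] (hH : HasNoNormalSubgroupOfPrimeOrder H)
    (hp : (Nat.card H).factorization 3 = 1) (hcard : Nat.card H ∣ 24) :
    Nat.card (Sylow 3 H) = 4 := by
  have hdvd : Nat.card (Sylow 3 H) ∣ 8 :=
    Nat.dvd_of_mul_dvd_mul_right three_pos ((card_sylow_mul_dvd hp).trans hcard)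
  have hmod : Nat.card (Sylow 3 H) % 3 = 1 % 3 := card_sylow_modEq_one 3 H
  have hne := hH.card_sylow_ne_one hp
  have hle := Nat.le_of_dvd (by norm_num) hdvd
  generalize Nat.card (Sylow 3 H) = n at *
  interval_cases n <;> omega

theorem nonempty_mulEquiv_of_card_eq_twelve (hH : HasNoNormalSubgroupOfPrimeOrder H)
    (hcard : Nat.card H = 12) : Nonempty (H ≃* alternatingGroup (Fin 4)) := by
  have : Finite H := Nat.finite_of_card_ne_zero (by omega)
  have hp : (Nat.card H).factorization 3 = 1 := by rw [hcard]; decide +kernel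
  have hn := hH.card_sylow_three_eq_four hp (by norm_num [hcard])
  exact nonempty_mulEquiv_alternatingGroup_of_injective hn
    (hH.toPermHom_sylow_injective hp (by norm_num [hcard, hn])) (by rw [hcard]; rfl)

theorem nonempty_mulEquiv_of_card_eq_twentyfour (hH : HasNoNormalSubgroupOfPrimeOrder H)
    (hcard : Nat.card H = 24) : Nonempty (H ≃* Perm (Fin 4)) := by
  have : Finite H := Nat.finite_of_card_ne_zero (by omega)
  have hp : (Nat.card H).factorization 3 = 1 := by rw [hcard]; decide +kernel
  have hn := hH.card_sylow_three_eq_four hp hcard.dvd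
  exact nonempty_mulEquiv_perm_of_injective hn
    (hH.toPermHom_sylow_injective hp (by norm_num [hcard, hn])) (by rw [hcard]; rfl)

lemma card_sylow_five_eq_six [Finite H] (hH : HasNoNormalSubgroupOfPrimeOrder H)
    (hcard : Nat.card H = 60) : Nat.card (Sylow 5 H) = 6 := by
  have : Fact (Nat.Prime 5) := ⟨Nat.prime_five⟩
  have hp : (Nat.card H).factorization 5 = 1 := by rw [hcard]; decide +kernel
  have hdvd : Nat.card (Sylow 5 H) ∣ 12 :=
    Nat.dvd_of_mul_dvd_mul_right (by norm_num) ((card_sylow_mul_dvd hp).trans hcard.dvd)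
  have hmod : Nat.card (Sylow 5 H) % 5 = 1 % 5 := card_sylow_modEq_one 5 H
  have hne := hH.card_sylow_ne_one hp
  have hle := Nat.le_of_dvd (by norm_num) hdvd
  generalize Nat.card (Sylow 5 H) = n at *
  interval_cases n <;> omega

-- The kernel contains at least 24 elements of order 5 and 8 of order 3, more than half the group.
lemma monoidHom_intUnits_eq_one_of_card_eq_sixty (hH : HasNoNormalSubgroupOfPrimeOrder H)
    (hcard : Nat.card H = 60) (f : H →* ℤˣ) : f = 1 := by
  have : Finite H := Nat.finite_of_card_ne_zero (by omega)
  have : Fact (Nat.Prime 5) := ⟨Nat.prime_five⟩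
  have h₃ : (Nat.card H).factorization 3 = 1 := by rw [hcard]; decide +kernel
  have h₅ : (Nat.card H).factorization 5 = 1 := by rw [hcard]; decide +kernel
  have hcard₃ : 4 ≤ Nat.card (Sylow 3 H) := by
    have hmod : Nat.card (Sylow 3 H) % 3 = 1 % 3 := card_sylow_modEq_one 3 H
    have hne := hH.card_sylow_ne_one h₃
    omega
  have hsubset : {g : H | orderOf g = 3} ∪ {g : H | orderOf g = 5} ⊆ f.ker := by
    rintro g (hg | hg) <;>
      exact monoidHom_intUnits_eq_one_of_odd_orderOf f (by rw [hg]; decide)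
  have hdisjoint : Disjoint {g : H | orderOf g = 3} {g : H | orderOf g = 5} :=
    Set.disjoint_left.mpr fun g (hg₃ : orderOf g = 3) (hg₅ : orderOf g = 5) ↦ by omega
  have hlt : 30 < Nat.card f.ker := by
    have hle := Set.ncard_le_ncard hsubset
    rw [Set.ncard_union_eq hdisjoint] at hle
    have hle₃ := sub_one_mul_card_sylow_le h₃
    have hle₅ := sub_one_mul_card_sylow_le h₅
    rw [hH.card_sylow_five_eq_six hcard] at hle₅
    change _ ≤ Nat.card f.ker at hle
    omega
  have htop : f.ker.index = 1 := by
    have hmul := f.ker.index_mul_card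
    have hpos : 0 < f.ker.index := Nat.pos_of_ne_zero f.ker.index_ne_zero_of_finite
    nlinarith [hpos]
  exact MonoidHom.ker_eq_top_iff.mp (Subgroup.index_eq_one.mp htop)

theorem nonempty_mulEquiv_of_card_eq_sixty (hH : HasNoNormalSubgroupOfPrimeOrder H)
    (hcard : Nat.card H = 60) : Nonempty (H ≃* alternatingGroup (Fin 5)) := by
  have : Finite H := Nat.finite_of_card_ne_zero (by omega)
  have : Fact (Nat.Prime 5) := ⟨Nat.prime_five⟩
  have hp : (Nat.card H).factorization 5 = 1 := by rw [hcard]; decide +kernel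
  have hn := hH.card_sylow_five_eq_six hcard
  obtain ⟨f, hf⟩ := exists_injective_monoidHom_perm_fin hn
    (hH.toPermHom_sylow_injective hp (by norm_num [hcard, hn]))
  have heven (h : H) : f h ∈ alternatingGroup (Fin 6) := Perm.mem_alternatingGroup.mpr <|
    DFunLike.congr_fun (hH.monoidHom_intUnits_eq_one_of_card_eq_sixty hcard (Perm.sign.comp f)) h
  let g : H →* alternatingGroup (Fin 6) := f.codRestrict _ heven
  have hg : Function.Injective g := fun h₁ h₂ h ↦ hf (congrArg Subtype.val h)
  have hindex : g.range.index = 6 := by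
    have hmul := g.range.index_mul_card
    rw [← Nat.card_congr (g.ofInjective hg).toEquiv, hcard, nat_card_alternatingGroup,
      Nat.card_fin, show Nat.factorial 6 = 720 from rfl] at hmul
    omega
  obtain ⟨e⟩ := nonempty_mulEquiv_alternatingGroup_of_index_eq (by norm_num) hindex
  exact ⟨(g.ofInjective hg).trans e⟩

end HasNoNormalSubgroupOfPrimeOrder

end PrimeNormalSubgroups

section ProjectiveLine

open MulAction MatrixGroups OnePoint Matrix.ProjGenLinGroup Pointwise

variable {K : Type*} [Field K]

/-- `g` is a diagonal matrix, that is, an element of the split Cartan subgroup of `GL₂(K)`. -/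
def IsDiagonal (g : GL (Fin 2) K) : Prop := g 0 1 = 0 ∧ g 1 0 = 0

/-- `g` is an antidiagonal matrix; together with the diagonal matrices, these form the normalizer
of the split Cartan subgroup of `GL₂(K)` when `K` has more than two elements. -/
def IsAntidiagonal (g : GL (Fin 2) K) : Prop := g 0 0 = 0 ∧ g 1 1 = 0

/-- `g` is conjugate to a diagonal matrix over `K` itself, not merely over an extension of `K`. -/
def IsDiagonalizable (g : GL (Fin 2) K) : Prop := ∃ x : GL (Fin 2) K, IsDiagonal (x * g * x⁻¹)

lemma mk_eq_one_iff {g : GL (Fin 2) K} : mk g = 1 ↔ IsDiagonal g ∧ g 0 0 = g 1 1 := by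
  rw [mk_eq_one, Matrix.GeneralLinearGroup.mem_center_iff_val_mem_range_scalar]
  constructor
  · rintro ⟨c, hc⟩
    simp [IsDiagonal, ← hc]
  · rintro ⟨⟨h₀₁, h₁₀⟩, h⟩
    refine ⟨g 0 0, ?_⟩
    ext i j
    fin_cases i <;> fin_cases j <;> simp [*]

lemma mk_conj_eq_one_iff {x g : GL (Fin 2) K} : mk (x * g * x⁻¹) = 1 ↔ mk g = 1 := by
  simp only [map_mul, map_inv, conj_eq_one_iff]

namespace IsDiagonal

variable {d : GL (Fin 2) K}

lemma coe_eq_diagonal (hd : IsDiagonal d) :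
    (d : Matrix (Fin 2) (Fin 2) K) = diagonal ![d 0 0, d 1 1] := by
  ext i j
  fin_cases i <;> fin_cases j <;> simp [hd.1, hd.2]

lemma det_eq (hd : IsDiagonal d) : (d : Matrix (Fin 2) (Fin 2) K).det = d 0 0 * d 1 1 := by
  simp [det_fin_two, hd.1]

lemma apply_one_ne_zero (hd : IsDiagonal d) : d 1 1 ≠ 0 :=
  right_ne_zero_of_mul (hd.det_eq ▸ d.det_ne_zero)

lemma mk_pow_eq_one_iff (hd : IsDiagonal d) (k : ℕ) :
    mk d ^ k = 1 ↔ (d 0 0 / d 1 1) ^ k = 1 := by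
  have hpow : ((d ^ k : GL (Fin 2) K) : Matrix (Fin 2) (Fin 2) K) =
      diagonal (![d 0 0, d 1 1] ^ k) := by
    rw [Units.val_pow_eq_pow_val, hd.coe_eq_diagonal, diagonal_pow]
    simp
  rw [← map_pow, mk_eq_one_iff, div_pow, div_eq_one_iff_eq (pow_ne_zero _ hd.apply_one_ne_zero)]
  simp [IsDiagonal, hpow]

lemma isPrimitiveRoot_div (hd : IsDiagonal d) :
    IsPrimitiveRoot (d 0 0 / d 1 1) (orderOf (mk d)) where
  pow_eq_one := (hd.mk_pow_eq_one_iff _).mp (pow_orderOf_eq_one _)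
  dvd_of_pow_eq_one k hk := orderOf_dvd_of_pow_eq_one ((hd.mk_pow_eq_one_iff k).mpr hk)

end IsDiagonal

variable [DecidableEq K]

/-- The action of `PGL₂(K)` on the projective line by Möbius transformations. -/
instance : MulAction PGL(2, K) (OnePoint K) := mulActionOfGL fun u x ↦ by
  cases x with
  | infty => simp [smul_infty_eq_self_iff]
  | coe t => simp [smul_some_eq_ite]

lemma IsDiagonal.fixedBy_mk {d : GL (Fin 2) K} (hd : IsDiagonal d) (hd1 : mk d ≠ 1) :
    fixedBy (OnePoint K) (mk d) = {∞, ↑(0 : K)} := by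
  ext x
  change d • x = x ↔ _
  cases x with
  | infty => simp [smul_infty_eq_self_iff, hd.2]
  | coe t =>
    have hne : d 0 0 ≠ d 1 1 := fun h ↦ hd1 (mk_eq_one_iff.mpr ⟨hd, h⟩)
    simp only [smul_some_eq_ite, hd.1, hd.2, zero_mul, zero_add, add_zero, OnePoint.coe_eq_coe,
      if_neg hd.apply_one_ne_zero, div_eq_iff hd.apply_one_ne_zero, mul_comm t,
      mul_eq_mul_right_iff]
    simp [hne]

lemma fixedBy_mk_of_isDiagonal_conj {x g : GL (Fin 2) K} (hx : IsDiagonal (x * g * x⁻¹))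
    (hg : mk g ≠ 1) : mk x • fixedBy (OnePoint K) (mk g) = {∞, ↑(0 : K)} := by
  rw [smul_fixedBy, ← map_inv, ← map_mul, ← map_mul, hx.fixedBy_mk (mk_conj_eq_one_iff.not.mpr hg)]

lemma isDiagonal_or_isAntidiagonal_of_smul_eq {g : GL (Fin 2) K}
    (hg : mk g • ({∞, ↑(0 : K)} : Set (OnePoint K)) = {∞, ↑(0 : K)}) :
    IsDiagonal g ∨ IsAntidiagonal g := by
  have h_inf : g • (∞ : OnePoint K) ∈ ({∞, ↑(0 : K)} : Set _) :=
    hg ▸ Set.smul_mem_smul_set (Set.mem_insert _ _)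
  have h_zero : g • (↑(0 : K) : OnePoint K) ∈ ({∞, ↑(0 : K)} : Set _) :=
    hg ▸ Set.smul_mem_smul_set (a := mk g) (Set.mem_insert_of_mem ∞ (Set.mem_singleton _))
  have hdet := g.det_ne_zero
  rw [det_fin_two] at hdet
  simp only [smul_infty_eq_ite, smul_some_eq_ite, Set.mem_insert_iff, Set.mem_singleton_iff,
    mul_zero, zero_add] at h_inf h_zero
  unfold IsDiagonal IsAntidiagonal
  split_ifs at h_inf h_zero <;> simp_all

variable {G : Subgroup (GL (Fin 2) K)}

lemma hasTwoFixedPoints_map_mk (hG : ∀ g ∈ G, IsDiagonalizable g) :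
    HasTwoFixedPoints (G.map mk) (OnePoint K) := by
  rintro ⟨_, g, hg, rfl⟩ hne
  obtain ⟨x, hx⟩ := hG g hg
  have hfix := fixedBy_mk_of_isDiagonal_conj hx fun h ↦ hne (Subtype.ext h)
  calc (fixedBy (OnePoint K) (mk g)).ncard
      = (mk x • fixedBy (OnePoint K) (mk g)).ncard := (Set.ncard_smul_set _ _).symm
    _ = 2 := by rw [hfix, Set.ncard_pair (OnePoint.infty_ne_coe _)]

lemma exists_conj_isDiagonal_or_isAntidiagonal_of_hasInvariantPair
    (hG : ∀ g ∈ G, IsDiagonalizable g) (hpair : HasInvariantPair (G.map mk) (OnePoint K)) :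
    ∃ x : GL (Fin 2) K, ∀ g ∈ G, IsDiagonal (x * g * x⁻¹) ∨ IsAntidiagonal (x * g * x⁻¹) := by
  obtain ⟨⟨_, h, hh, rfl⟩, hne, hblock⟩ := hpair
  obtain ⟨x, hx⟩ := hG h hh
  have hfix := fixedBy_mk_of_isDiagonal_conj hx fun h1 ↦ hne (Subtype.ext h1)
  refine ⟨x, fun g hg ↦ isDiagonal_or_isAntidiagonal_of_smul_eq ?_⟩
  have hgfix : mk g • fixedBy (OnePoint K) (mk h) = fixedBy (OnePoint K) (mk h) :=
    hblock ⟨mk g, g, hg, rfl⟩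
  rw [← hfix, map_mul, map_mul, map_inv, mul_smul, mul_smul, inv_smul_smul, hgfix]

end ProjectiveLine

section RootsOfUnity

open Matrix.ProjGenLinGroup MatrixGroups

variable {K : Type*} [Field K]

namespace IsDiagonalizable

variable {g : GL (Fin 2) K}

lemma exists_isPrimitiveRoot_orderOf_and_det_eq (hg : IsDiagonalizable g) :
    ∃ ζ c : K, IsPrimitiveRoot ζ (orderOf (mk g)) ∧
      (g : Matrix (Fin 2) (Fin 2) K).det = ζ * c ^ 2 := by
  obtain ⟨x, hx⟩ := hg
  refine ⟨(x * g * x⁻¹) 0 0 / (x * g * x⁻¹) 1 1, (x * g * x⁻¹) 1 1, ?_, ?_⟩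
  · have hconj : mk (x * g * x⁻¹) = MulAut.conj (mk x) (mk g) := by simp
    rw [← MulEquiv.orderOf_eq (MulAut.conj (mk x)) (mk g), ← hconj]
    exact hx.isPrimitiveRoot_div
  · have hdet : (g : Matrix (Fin 2) (Fin 2) K).det =
        ((x * g * x⁻¹ : GL (Fin 2) K) : Matrix (Fin 2) (Fin 2) K).det := by
      simp [← Matrix.GeneralLinearGroup.val_det_apply, mul_comm]
    rw [hdet, hx.det_eq, sq, ← mul_assoc, div_mul_cancel₀ _ hx.apply_one_ne_zero]

lemma isSquare_neg_det_of_orderOf_eq_two (hg : IsDiagonalizable g)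
    (h : orderOf (mk g) = 2) : IsSquare (-(g : Matrix (Fin 2) (Fin 2) K).det) := by
  obtain ⟨ζ, c, hζ, hdet⟩ := hg.exists_isPrimitiveRoot_orderOf_and_det_eq
  rw [h] at hζ
  exact ⟨c, by rw [hdet, hζ.eq_neg_one_of_two_right]; ring⟩

end IsDiagonalizable

lemma isPrimitiveRoot_two_mul_of_sq {M : Type*} [CommMonoid M] {ζ : M} {n : ℕ} (hn : Even n)
    (h : IsPrimitiveRoot (ζ ^ 2) n) : IsPrimitiveRoot ζ (2 * n) := by
  have hsq := h.eq_orderOf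
  rw [orderOf_pow' ζ two_ne_zero] at hsq
  have heven : 2 ∣ orderOf ζ := by
    by_contra hodd
    have hcoprime : (orderOf ζ).gcd 2 = 1 := ((Nat.prime_two.coprime_iff_not_dvd).mpr hodd).symm
    exact hodd (by simpa [hsq, hcoprime] using hn.two_dvd)
  rw [Nat.gcd_eq_right heven] at hsq
  rw [IsPrimitiveRoot.iff_orderOf, hsq, Nat.mul_div_cancel' heven]

lemma exists_isPrimitiveRoot_lcm {M : Type*} [CommMonoid M] {m n : ℕ} (hm : m ≠ 0) (hn : n ≠ 0)
    (h : ∃ ζ : M, IsPrimitiveRoot ζ m) (h' : ∃ ζ : M, IsPrimitiveRoot ζ n) :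
    ∃ ζ : M, IsPrimitiveRoot ζ (m.lcm n) := by
  obtain ⟨ζ, hζ⟩ := h
  obtain ⟨ξ, hξ⟩ := h'
  exact ⟨_, hζ.pow_mul_pow_lcm hξ hm hn⟩

section MulEquiv

variable {G : Subgroup (GL (Fin 2) K)} {A : Type*} [Group A]

lemma exists_isPrimitiveRoot_of_orderOf_eq (hG : ∀ g ∈ G, IsDiagonalizable g)
    (e : G.map mk ≃* A) {a : A} {n : ℕ} (ha : orderOf a = n) : ∃ ζ : K, IsPrimitiveRoot ζ n := by
  obtain ⟨g, hg, hga⟩ := (e.symm a).2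
  obtain ⟨ζ, -, hζ, -⟩ := (hG g hg).exists_isPrimitiveRoot_orderOf_and_det_eq
  rw [hga, Subgroup.orderOf_coe, e.symm.orderOf_eq, ha] at hζ
  exact ⟨ζ, hζ⟩

lemma exists_isPrimitiveRoot_two_mul_of_orderOf_eq (hG : ∀ g ∈ G, IsDiagonalizable g)
    (e : G.map mk ≃* A) {r s : A} {n : ℕ} (hr : orderOf r = n) (hn : Even n) (hs : orderOf s = 2)
    (hsr : orderOf (s * r) = 2) : ∃ ζ : K, IsPrimitiveRoot ζ (2 * n) := by
  obtain ⟨g, hg, hgr⟩ := (e.symm r).2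
  obtain ⟨t, ht, hts⟩ := (e.symm s).2
  have htg : mk (t * g) = e.symm (s * r) := by rw [map_mul, hgr, hts, map_mul, Subgroup.coe_mul]
  obtain ⟨ζ, c, hζ, hdet⟩ := (hG g hg).exists_isPrimitiveRoot_orderOf_and_det_eq
  rw [hgr, Subgroup.orderOf_coe, e.symm.orderOf_eq, hr] at hζ
  have ht_sq := (hG t ht).isSquare_neg_det_of_orderOf_eq_two
    (by rw [hts, Subgroup.orderOf_coe, e.symm.orderOf_eq, hs])
  have htg_sq := (hG (t * g) (mul_mem ht hg)).isSquare_neg_det_of_orderOf_eq_two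
    (by rw [htg, Subgroup.orderOf_coe, e.symm.orderOf_eq, hsr])
  have hζ_sq : IsSquare ζ := by
    have hζ_eq : ζ = -((t * g : GL (Fin 2) K) : Matrix (Fin 2) (Fin 2) K).det /
        -(t : Matrix (Fin 2) (Fin 2) K).det / c ^ 2 := by
      have hc : c ≠ 0 := fun hc ↦ g.det_ne_zero (by rw [hdet, hc]; ring)
      rw [Units.val_mul, det_mul, hdet, neg_div_neg_eq, mul_div_cancel_left₀ _ t.det_ne_zero,
        mul_div_cancel_right₀ _ (pow_ne_zero 2 hc)]
    exact hζ_eq ▸ (htg_sq.div ht_sq).div (.sq c)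
  obtain ⟨ξ, rfl⟩ := hζ_sq.exists_sq
  exact ⟨ξ, isPrimitiveRoot_two_mul_of_sq hn hζ⟩

open Equiv Perm

lemma exists_isPrimitiveRoot_twelve_of_mulEquiv (hG : ∀ g ∈ G, IsDiagonalizable g)
    (e : G.map mk ≃* alternatingGroup (Fin 4)) : ∃ ζ : K, IsPrimitiveRoot ζ 12 := by
  let r : alternatingGroup (Fin 4) := ⟨swap 0 1 * swap 2 3, mem_alternatingGroup.mpr (by decide)⟩
  let s : alternatingGroup (Fin 4) := ⟨swap 0 2 * swap 1 3, mem_alternatingGroup.mpr (by decide)⟩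
  let t : alternatingGroup (Fin 4) := ⟨swap 0 1 * swap 1 2, mem_alternatingGroup.mpr (by decide)⟩
  have hr : orderOf r = 2 := orderOf_eq_prime (by decide) (by decide)
  have hs : orderOf s = 2 := orderOf_eq_prime (by decide) (by decide)
  have hsr : orderOf (s * r) = 2 := orderOf_eq_prime (by decide) (by decide)
  have ht : orderOf t = 3 := orderOf_eq_prime (by decide) (by decide)
  have h_four := exists_isPrimitiveRoot_two_mul_of_orderOf_eq hG e hr even_two hs hsr
  have h_three := exists_isPrimitiveRoot_of_orderOf_eq hG e ht
  exact exists_isPrimitiveRoot_lcm (by simp) (by simp) h_three h_four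

lemma exists_isPrimitiveRoot_twentyfour_of_mulEquiv (hG : ∀ g ∈ G, IsDiagonalizable g)
    (e : G.map mk ≃* Perm (Fin 4)) : ∃ ζ : K, IsPrimitiveRoot ζ 24 := by
  let r : Perm (Fin 4) := finRotate 4
  let s : Perm (Fin 4) := swap 0 2
  let t : Perm (Fin 4) := swap 0 1 * swap 1 2
  have hr : orderOf r = 4 := orderOf_eq_prime_pow (p := 2) (n := 1) (by decide) (by decide)
  have hs : orderOf s = 2 := orderOf_eq_prime (by decide) (by decide)
  have hsr : orderOf (s * r) = 2 := orderOf_eq_prime (by decide) (by decide)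
  have ht : orderOf t = 3 := orderOf_eq_prime (by decide) (by decide)
  have h_eight := exists_isPrimitiveRoot_two_mul_of_orderOf_eq hG e hr (by decide) hs hsr
  have h_three := exists_isPrimitiveRoot_of_orderOf_eq hG e ht
  exact exists_isPrimitiveRoot_lcm (by simp) (by simp) h_three h_eight

lemma exists_isPrimitiveRoot_sixty_of_mulEquiv (hG : ∀ g ∈ G, IsDiagonalizable g)
    (e : G.map mk ≃* alternatingGroup (Fin 5)) : ∃ ζ : K, IsPrimitiveRoot ζ 60 := by
  let r : alternatingGroup (Fin 5) := ⟨swap 0 1 * swap 2 3, mem_alternatingGroup.mpr (by decide)⟩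
  let s : alternatingGroup (Fin 5) := ⟨swap 0 2 * swap 1 3, mem_alternatingGroup.mpr (by decide)⟩
  let t : alternatingGroup (Fin 5) := ⟨swap 0 1 * swap 1 2, mem_alternatingGroup.mpr (by decide)⟩
  let u : alternatingGroup (Fin 5) := ⟨finRotate 5, mem_alternatingGroup.mpr (by decide)⟩
  have : Fact (Nat.Prime 5) := ⟨Nat.prime_five⟩
  have hr : orderOf r = 2 := orderOf_eq_prime (by decide) (by decide)
  have hs : orderOf s = 2 := orderOf_eq_prime (by decide) (by decide)
  have hsr : orderOf (s * r) = 2 := orderOf_eq_prime (by decide) (by decide)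
  have ht : orderOf t = 3 := orderOf_eq_prime (by decide) (by decide)
  have hu : orderOf u = 5 := orderOf_eq_prime (by decide) (by decide)
  have h_four := exists_isPrimitiveRoot_two_mul_of_orderOf_eq hG e hr even_two hs hsr
  have h_three := exists_isPrimitiveRoot_of_orderOf_eq hG e ht
  have h_five := exists_isPrimitiveRoot_of_orderOf_eq hG e hu
  have h_twelve := exists_isPrimitiveRoot_lcm (by simp) (by simp) h_three h_four
  exact exists_isPrimitiveRoot_lcm (by simp) (by simp) h_twelve h_five

end MulEquiv

end RootsOfUnity

section Classification

open Equiv MatrixGroups Matrix.ProjGenLinGroup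

lemma HasTwoFixedPoints.hasInvariantPair_or_mulEquiv {H X : Type*} [Group H] [MulAction H X]
    [Finite H] [Nontrivial H] (hH : HasTwoFixedPoints H X) :
    HasInvariantPair H X ∨ Nonempty (H ≃* alternatingGroup (Fin 4)) ∨
      Nonempty (H ≃* Perm (Fin 4)) ∨ Nonempty (H ≃* alternatingGroup (Fin 5)) := by
  by_cases hpair : HasInvariantPair H X
  · exact .inl hpair
  have hnormal : HasNoNormalSubgroupOfPrimeOrder H := fun N _ hcard ↦
    hpair (hH.hasInvariantPair_of_normal_of_prime_card N hcard)
  refine .inr ?_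
  rcases hH.hasInvariantPair_or_card_eq.resolve_left hpair with hcard | hcard | hcard
  · exact .inl (hnormal.nonempty_mulEquiv_of_card_eq_twelve hcard)
  · exact .inr (.inl (hnormal.nonempty_mulEquiv_of_card_eq_twentyfour hcard))
  · exact .inr (.inr (hnormal.nonempty_mulEquiv_of_card_eq_sixty hcard))

theorem local_global_split_cartan_general {K : Type*} [Field K] (G : Subgroup (GL (Fin 2) K))
    [Finite (G.map mk)] (hG : ∀ g ∈ G, IsDiagonalizable g) :
    (∃ x : GL (Fin 2) K, ∀ g ∈ G, IsDiagonal (x * g * x⁻¹)) ∨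
    (∃ x : GL (Fin 2) K, ∀ g ∈ G, IsDiagonal (x * g * x⁻¹) ∨ IsAntidiagonal (x * g * x⁻¹)) ∨
    (Nonempty (G.map mk ≃* alternatingGroup (Fin 4)) ∧ ∃ ζ : K, IsPrimitiveRoot ζ 12) ∨
    (Nonempty (G.map mk ≃* Perm (Fin 4)) ∧ ∃ ζ : K, IsPrimitiveRoot ζ 24) ∨
    (Nonempty (G.map mk ≃* alternatingGroup (Fin 5)) ∧ ∃ ζ : K, IsPrimitiveRoot ζ 60) := by
  classical
  cases subsingleton_or_nontrivial (G.map mk)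
  · refine .inl ⟨1, fun g hg ↦ ?_⟩
    have hg1 : mk g = 1 :=
      congrArg Subtype.val (Subsingleton.elim (⟨mk g, g, hg, rfl⟩ : G.map mk) 1)
    simpa using (mk_eq_one_iff.mp hg1).1
  refine .inr ?_
  rcases (hasTwoFixedPoints_map_mk hG).hasInvariantPair_or_mulEquiv with h | ⟨⟨e⟩⟩ | ⟨⟨e⟩⟩ | ⟨⟨e⟩⟩
  · exact .inl (exists_conj_isDiagonal_or_isAntidiagonal_of_hasInvariantPair hG h)
  · exact .inr (.inl ⟨⟨e⟩, exists_isPrimitiveRoot_twelve_of_mulEquiv hG e⟩)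
  · exact .inr (.inr (.inl ⟨⟨e⟩, exists_isPrimitiveRoot_twentyfour_of_mulEquiv hG e⟩))
  · exact .inr (.inr (.inr ⟨⟨e⟩, exists_isPrimitiveRoot_sixty_of_mulEquiv hG e⟩))

lemma mod_eq_one_of_isPrimitiveRoot {p n : ℕ} [Fact p.Prime] (hn : 1 < n)
    (h : ∃ ζ : ZMod p, IsPrimitiveRoot ζ n) : p % n = 1 := by
  obtain ⟨ζ, hζ⟩ := h
  have hdvd : n ∣ p - 1 := hζ.eq_orderOf ▸
    ZMod.orderOf_dvd_card_sub_one (hζ.ne_zero (by omega))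
  have hmod := (Nat.modEq_iff_dvd' (Fact.out : p.Prime).one_le).mpr hdvd
  rw [← hmod, Nat.mod_eq_of_lt hn]

end Classification

/-- If every element of `G ≤ GL₂(F_ℓ)` is diagonalizable over `F_ℓ`,
then `G` is contained in a conjugate of `C_sp`, or of `N_sp`, or its projective image
is exceptional with the stated congruence on `ℓ`. -/
theorem local_global_split_cartan
    {ℓ : ℕ} [Fact ℓ.Prime] (hℓ : ℓ ≠ 2) (G : Subgroup (GL2 ℓ))
    (hloc : ∀ g ∈ G, ∃ x : GL2 ℓ, IsDiag (x * g * x⁻¹)) :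
    (∃ x : GL2 ℓ, ∀ g ∈ G, InCsp (x * g * x⁻¹)) ∨
    (∃ x : GL2 ℓ, ∀ g ∈ G, InNsp (x * g * x⁻¹)) ∨
    (IsA4 (projImage G) ∧ ℓ % 12 = 1) ∨
    (IsS4 (projImage G) ∧ ℓ % 24 = 1) ∨
    (IsA5 (projImage G) ∧ ℓ % 60 = 1) := by
  have : Finite (G.map ProjGenLinGroup.mk) :=
    Finite.of_surjective _ (ProjGenLinGroup.mk.subgroupMap_surjective G)
  exact (local_global_split_cartan_general G hloc).imp_right <| .imp_right <| .imp
    (.imp_right (mod_eq_one_of_isPrimitiveRoot (by simp))) <| .imp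
    (.imp_right (mod_eq_one_of_isPrimitiveRoot (by simp)))
    (.imp_right (mod_eq_one_of_isPrimitiveRoot (by simp)))
end
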